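/- Let X ⊆ ℙ^N (over ℂ) be irreducible and nondegenerate, and set b = 0 if X is smooth and b = dim Sing(X) otherwise. If dim(X) > (1/3)(2N + b − 1), then X is linearly normal, i.e. X is not the image of a bijective projection of a nondegenerate subvariety of ℙ^{N+1}. -/

import Mathlib

/- Background for [Lopez-Ran, "On the irreducibility of secant cones, and an application
to linear normality"]: a concrete model of complex projective geometry.  Projective space
`ℙ^r(ℂ)` is the projectivization of `ℂ^{r+1}`, equipped with the Zariski topology;
subvarieties are (closed, irreducible) subsets; tangent spaces, smoothness, the invariant
`σ(Y)`, secant varieties/cones, generic linear projections and their double loci, and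
linear normality are all defined from first principles below. -/

open MvPolynomial Set

noncomputable section

/-- Complex projective space of lines in `ℂⁿ` (so of projective dimension `n - 1`). -/
abbrev PrV (n : ℕ) : Type := Projectivization ℂ (Fin n → ℂ)

/-- `ℙ^r` over `ℂ`. -/
abbrev Pr (r : ℕ) : Type := PrV (r + 1)

/-- The vanishing locus in projective space of a polynomial, defined via all nonzero lifts
(for a homogeneous polynomial this is the usual projective zero locus). -/
def pZero {n : ℕ} (f : MvPolynomial (Fin n) ℂ) : Set (PrV n) :=
  {x | ∀ v : Fin n → ℂ, ∀ hv : v ≠ 0, Projectivization.mk ℂ v hv = x → eval v f = 0}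

/-- The Zariski topology on complex projective space. -/
instance prTop (n : ℕ) : TopologicalSpace (PrV n) :=
  TopologicalSpace.generateFrom {U | ∃ f : MvPolynomial (Fin n) ℂ, U = (pZero f)ᶜ}

/-- The Zariski topology on the affine space `ℂ^σ`. -/
def affTop (σ : Type) : TopologicalSpace (σ → ℂ) :=
  TopologicalSpace.generateFrom {U | ∃ f : MvPolynomial σ ℂ, U = {v | eval v f ≠ 0}}

/-- A property holds generically (on a dense Zariski-open set) on the affine space `ℂ^σ`. -/
def GenericAff {σ : Type} (P : (σ → ℂ) → Prop) : Prop :=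
  ∃ U : Set (σ → ℂ), @IsOpen _ (affTop σ) U ∧ @Dense _ (affTop σ) U ∧ ∀ v ∈ U, P v

/-- The projective line through two points (their linear span); for `x = y` this is `{x}`. -/
def lineThrough {n : ℕ} (x y : PrV n) : Set (PrV n) :=
  {z | z.rep ∈ Submodule.span ℂ ({x.rep, y.rep} : Set (Fin n → ℂ))}

/-- The projective linear subspace associated to a linear subspace `W ⊆ ℂⁿ`. -/
def projSub {n : ℕ} (W : Submodule ℂ (Fin n → ℂ)) : Set (PrV n) := {x | x.rep ∈ W}

/-- The secant variety of `Y`: the (closure of the) union of all lines spanned by pairs of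
distinct points of `Y`, i.e. the union of all secant lines of `Y`. -/
def secantVariety {n : ℕ} (Y : Set (PrV n)) : Set (PrV n) :=
  closure (⋃ x ∈ Y, ⋃ y ∈ Y, ⋃ _ : x ≠ y, lineThrough x y)

/-- `Y` is projectable if its secant variety is not all of projective space. -/
def Projectable {n : ℕ} (Y : Set (PrV n)) : Prop := secantVariety Y ≠ Set.univ

/-- Hyperplanes in projective space. -/
def IsHyperplane {n : ℕ} (H : Set (PrV n)) : Prop :=
  ∃ φ : (Fin n → ℂ) →ₗ[ℂ] ℂ, φ ≠ 0 ∧ H = {x | φ x.rep = 0}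

/-- A set in projective space is nondegenerate if it is contained in no hyperplane. -/
def NondegenerateSet {n : ℕ} (Y : Set (PrV n)) : Prop :=
  ∀ H : Set (PrV n), IsHyperplane H → ¬ Y ⊆ H

/-- Dimension of a subset of projective space: the Krull dimension of the subspace
topology. -/
def pdim {n : ℕ} (S : Set (PrV n)) : WithBot ℕ∞ := topologicalKrullDim S

/-- The homogeneous ideal of `Y` (as a set): all polynomials all of whose lifts vanish on
the affine cone of `Y`. -/
def homIdeal {n : ℕ} (Y : Set (PrV n)) : Set (MvPolynomial (Fin n) ℂ) := {f | Y ⊆ pZero f}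

/-- The differential of a polynomial at a point of `ℂⁿ`, as a linear form. -/
def jacLin {n : ℕ} (f : MvPolynomial (Fin n) ℂ) (v : Fin n → ℂ) : (Fin n → ℂ) →ₗ[ℂ] ℂ :=
  ∑ i, eval v (pderiv i f) • LinearMap.proj i

/-- The affine tangent space of the cone over `Y` at `v`: the common kernel of the
differentials of all elements of the homogeneous ideal of `Y`. -/
def affTangent {n : ℕ} (Y : Set (PrV n)) (v : Fin n → ℂ) : Submodule ℂ (Fin n → ℂ) :=
  ⨅ f ∈ homIdeal Y, LinearMap.ker (jacLin f v)

/-- The embedded projective tangent space `T_x Y ⊆ ℙⁿ⁻¹`. -/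
def projTangent {n : ℕ} (Y : Set (PrV n)) (x : PrV n) : Set (PrV n) :=
  projSub (affTangent Y x.rep)

/-- `x` is a smooth point of `Y` if the affine tangent space of the cone has the expected
dimension `dim Y + 1`. -/
def IsSmoothPt {n : ℕ} (Y : Set (PrV n)) (x : PrV n) : Prop :=
  ((Module.finrank ℂ (affTangent Y x.rep) : ℕ∞) : WithBot ℕ∞) = pdim Y + 1

/-- The smooth locus `Y_smooth` of `Y`. -/
def smoothLocus {n : ℕ} (Y : Set (PrV n)) : Set (PrV n) := {x ∈ Y | IsSmoothPt Y x}

/-- The singular locus of `Y`. -/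
def singLocus {n : ℕ} (Y : Set (PrV n)) : Set (PrV n) := Y \ smoothLocus Y

/-- `Y` is smooth if every point of `Y` is a smooth point. -/
def IsSmoothSet {n : ℕ} (Y : Set (PrV n)) : Prop := ∀ x ∈ Y, IsSmoothPt Y x

/-- A divisor on `Y`: an irreducible closed subvariety of `Y` of codimension one. -/
def IsDivisorOn {n : ℕ} (W Y : Set (PrV n)) : Prop :=
  W ⊆ Y ∧ IsIrreducible W ∧ closure W ∩ Y = W ∧ pdim W + 1 = pdim Y

/-- `σ(Y)`: the maximal dimension of a subvariety `Z` of the smooth locus of `Y` which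
contains a generic point of some divisor on `Y` (i.e. is dense in some divisor), and such
that all embedded tangent spaces `T_y Y`, `y ∈ Z`, lie in a fixed hyperplane. -/
def sigmaY {n : ℕ} (Y : Set (PrV n)) : WithBot ℕ∞ :=
  sSup { d | ∃ Z : Set (PrV n), Z ⊆ smoothLocus Y ∧ IsIrreducible Z ∧
      (∃ W, IsDivisorOn W Y ∧ W ⊆ closure (Z ∩ W)) ∧
      (∃ H, IsHyperplane H ∧ ∀ y ∈ Z, projTangent Y y ⊆ H) ∧ pdim Z = d }

/-- The ideal of polynomials vanishing (in all lifts) on the affine cone over `Y`. -/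
def idealOf {n : ℕ} (Y : Set (PrV n)) : Ideal (MvPolynomial (Fin n) ℂ) where
  carrier := homIdeal Y
  add_mem' := by
    intro f g hf hg x hx v hv hvx
    have h1 := hf hx v hv hvx
    have h2 := hg hx v hv hvx
    simp [map_add, h1, h2]
  zero_mem' := by intro x hx v hv hvx; simp
  smul_mem' := by
    intro c f hf x hx v hv hvx
    have h1 := hf hx v hv hvx
    simp [smul_eq_mul, map_mul, h1]

instance kerEvalPrime {n : ℕ} (v : Fin n → ℂ) :
    (RingHom.ker ((aeval v : MvPolynomial (Fin n) ℂ →ₐ[ℂ] ℂ) :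
      MvPolynomial (Fin n) ℂ →+* ℂ)).IsPrime :=
  RingHom.ker_isPrime _

/-- The local ring of the affine space `ℂⁿ` at the point `v`. -/
abbrev polyAtPoint {n : ℕ} (v : Fin n → ℂ) : Type :=
  Localization.AtPrime (RingHom.ker ((aeval v : MvPolynomial (Fin n) ℂ →ₐ[ℂ] ℂ) :
    MvPolynomial (Fin n) ℂ →+* ℂ))

/-- The local ring of the affine cone over `Y` at a (nonzero) point `v` of the cone. -/
abbrev coneLocalRing {n : ℕ} (Y : Set (PrV n)) (v : Fin n → ℂ) : Type :=
  polyAtPoint v ⧸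
    (Ideal.map (algebraMap (MvPolynomial (Fin n) ℂ) (polyAtPoint v)) (idealOf Y))

/-- A normal (irreducible, closed) subvariety of projective space: all local rings of its
affine cone at points of the punctured cone are integrally closed domains. -/
def IsNormalVariety {n : ℕ} (Y : Set (PrV n)) : Prop :=
  IsClosed Y ∧ IsIrreducible Y ∧
    ∀ x ∈ Y, IsDomain (coneLocalRing Y x.rep) ∧ IsIntegrallyClosed (coneLocalRing Y x.rep)

/-- The scheme-theoretic double locus of the projection of `Y` away from the projective
linear subspace `ℙ(W)`: points `y ∈ Y` such that the fibre of the projection through `y`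
(the span of `ℙ(W)` and `y`) meets `Y` in a subscheme different from the single reduced
point `y`: either it contains a second point of `Y`, or it is tangent to `Y` at `y`. -/
def doubleLocus {r : ℕ} (Y : Set (Pr r)) (W : Submodule ℂ (Fin (r+1) → ℂ)) : Set (Pr r) :=
  {y | y ∈ Y ∧
    ((∃ y' ∈ Y, y' ≠ y ∧ y'.rep ∈ W ⊔ Submodule.span ℂ {y.rep}) ∨
      affTangent Y y.rep ⊓ (W ⊔ Submodule.span ℂ {y.rep}) ≠ Submodule.span ℂ {y.rep})}

/-- The linear subspace spanned by a `(k+1)`-tuple of vectors of `ℂ^{r+1}` (used to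
parametrize generic linear subspaces of projective dimension `k`). -/
def spanOfTuple {r k : ℕ} (v : Fin (k+1) × Fin (r+1) → ℂ) :
    Submodule ℂ (Fin (r+1) → ℂ) :=
  Submodule.span ℂ (Set.range fun i : Fin (k+1) => fun j => v (i, j))

/-- The secant cone of `Y` at `z`: the closure of the union of all secant lines of `Y`
passing through `z`. -/
def secantCone {r : ℕ} (Y : Set (Pr r)) (z : Pr r) : Set (Pr r) :=
  closure (⋃ x ∈ Y, ⋃ y ∈ Y, ⋃ _ : x ≠ y, ⋃ _ : z ∈ lineThrough x y, lineThrough x y)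

/-- `Y` has the irreducible secant cone (ISC) property: the secant cone of `Y` at a generic
point of `ℙ^r` (equivalently, the generic fibre of `f : I_Y → ℙ^r`) is irreducible. -/
def ISC {r : ℕ} (Y : Set (Pr r)) : Prop :=
  ∃ U : Set (Pr r), IsOpen U ∧ Dense U ∧ ∀ z ∈ U, IsIrreducible (secantCone Y z)

/-- The outer (Segre) product of two vectors. -/
def outerVec {a b : ℕ} (v : Fin a → ℂ) (w : Fin b → ℂ) : Fin (a * b) → ℂ :=
  fun k => v (finProdFinEquiv.symm k).1 * w (finProdFinEquiv.symm k).2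

lemma outerVec_ne_zero {a b : ℕ} {v : Fin a → ℂ} {w : Fin b → ℂ}
    (hv : v ≠ 0) (hw : w ≠ 0) : outerVec v w ≠ 0 := by
  obtain ⟨i, hi⟩ := Function.ne_iff.mp hv
  obtain ⟨j, hj⟩ := Function.ne_iff.mp hw
  intro h
  have h2 := congrFun h (finProdFinEquiv (i, j))
  simp only [outerVec, Equiv.symm_apply_apply, Pi.zero_apply] at h2
  rcases mul_eq_zero.mp h2 with h3 | h3
  · exact hi h3
  · exact hj h3

/-- The Segre embedding of a product of projective spaces. -/
def segre {a b : ℕ} (p : PrV a × PrV b) : PrV (a * b) :=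
  Projectivization.mk ℂ (outerVec p.1.rep p.2.rep)
    (outerVec_ne_zero p.1.rep_nonzero p.2.rep_nonzero)

/-- The Zariski topology on a product of two projective spaces (induced via the Segre
embedding). -/
def pairTop (r : ℕ) : TopologicalSpace (Pr r × Pr r) :=
  TopologicalSpace.induced segre (prTop ((r+1) * (r+1)))

/-- Zariski closure in the product of two projective spaces. -/
def closureP {r : ℕ} (S : Set (Pr r × Pr r)) : Set (Pr r × Pr r) :=
  segre ⁻¹' closure (segre '' S)

/-- Zariski irreducibility of a subset of the product of two projective spaces. -/
def IsIrreducibleP {r : ℕ} (S : Set (Pr r × Pr r)) : Prop :=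
  IsIrreducible (closure (segre '' S))

/-- Zariski connectedness of a subset of the product of two projective spaces. -/
def IsConnectedP {r : ℕ} (S : Set (Pr r × Pr r)) : Prop :=
  IsConnected (segre '' S)

/-- Dimension of a subset of the product of two projective spaces. -/
def pdimP {r : ℕ} (S : Set (Pr r × Pr r)) : WithBot ℕ∞ := pdim (segre '' S)

/-- The (ordered-pairs model of the) fibre of `f : I_Y → ℙ^r` over `z ∈ ℙ^r`: pairs of
distinct points of `Y` whose secant line passes through `z`, together with limits of such
(the secant cone of `Y` at `z`, upstairs). -/
def secPairs {r : ℕ} (Y : Set (Pr r)) (z : Pr r) : Set (Pr r × Pr r) :=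
  {p | p.1 ∈ Y ∧ p.2 ∈ Y ∧ p.1 ≠ p.2 ∧ z ∈ lineThrough p.1 p.2}

/-- The fibre of `f : I_Y → ℙ^r` over `z` (with its limit points). -/
def secFiber {r : ℕ} (Y : Set (Pr r)) (z : Pr r) : Set (Pr r × Pr r) :=
  closureP (secPairs Y z)

/-- The linear map `ℂ^b → ℂ^a` given by a matrix of coefficients. -/
def matLin {a b : ℕ} (w : Fin a × Fin b → ℂ) : (Fin b → ℂ) →ₗ[ℂ] (Fin a → ℂ) :=
  Matrix.mulVecLin (Matrix.of fun i j => w (i, j))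

/-- The image of a subset of `ℙ^{b-1}` under the linear projection `ℙ^{b-1} ⇢ ℙ^{a-1}`
given by a matrix. -/
def projImage {a b : ℕ} (w : Fin a × Fin b → ℂ) (Z : Set (PrV b)) : Set (PrV a) :=
  {z | ∃ x ∈ Z, ∃ c : ℂ, c ≠ 0 ∧ z.rep = c • matLin w x.rep}

/-- `X ⊆ ℙ^N` is the image of `X̃ ⊆ ℙ^{N+1}` under a bijective projection from a point
`Q ∉ X̃` (the centre `Q` being the projectivized kernel of the surjective linear map `L`). -/
def IsBijectiveProjectionOf {N : ℕ} (X : Set (Pr N)) (Xt : Set (Pr (N+1))) : Prop :=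
  ∃ L : (Fin (N+2) → ℂ) →ₗ[ℂ] (Fin (N+1) → ℂ), Function.Surjective L ∧
    (∀ x ∈ Xt, L x.rep ≠ 0) ∧
    X = {z | ∃ x ∈ Xt, ∃ c : ℂ, c ≠ 0 ∧ z.rep = c • L x.rep} ∧
    (∀ x ∈ Xt, ∀ y ∈ Xt, (∃ c : ℂ, L x.rep = c • L y.rep) → x = y)

/-- `X ⊆ ℙ^N` is linearly normal if it is not the image, under a bijective projection from
a point, of a nondegenerate subvariety of `ℙ^{N+1}`. -/
def LinearlyNormal {N : ℕ} (X : Set (Pr N)) : Prop :=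
  ¬ ∃ Xt : Set (Pr (N+1)), IsClosed Xt ∧ IsIrreducible Xt ∧ NondegenerateSet Xt ∧
      IsBijectiveProjectionOf X Xt

/-- Extension by zero `ℂ^a → ℂ^b` (for `a ≤ b`). -/
def padMap (a b : ℕ) : (Fin a → ℂ) →ₗ[ℂ] (Fin b → ℂ) where
  toFun v := fun j => if h : (j : ℕ) < a then v ⟨j, h⟩ else 0
  map_add' v w := by funext j; by_cases h : (j : ℕ) < a <;> simp [h]
  map_smul' c v := by funext j; by_cases h : (j : ℕ) < a <;> simp [h]

lemma padMap_ne_zero {a b : ℕ} (hab : a ≤ b) {v : Fin a → ℂ} (hv : v ≠ 0) :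
    padMap a b v ≠ 0 := by
  obtain ⟨i, hi⟩ := Function.ne_iff.mp hv
  intro h
  have h2 := congrFun h ⟨i, lt_of_lt_of_le i.isLt hab⟩
  simp only [padMap, LinearMap.coe_mk, AddHom.coe_mk, Pi.zero_apply] at h2
  rw [dif_pos i.isLt] at h2
  exact hi (by simpa using h2)

/-- A point of `ℙ^{a-1}` viewed in `ℙ^{b-1}` via the inclusion of the first `a`
coordinates. -/
def embPt {a b : ℕ} (hab : a ≤ b) (x : PrV a) : PrV b :=
  Projectivization.mk ℂ (padMap a b x.rep) (padMap_ne_zero hab x.rep_nonzero)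

/-- The join of two subsets of projective space: the union of all lines joining a point of
`A` to a point of `B`. -/
def joinSets {n : ℕ} (A B : Set (PrV n)) : Set (PrV n) :=
  ⋃ x ∈ A, ⋃ y ∈ B, lineThrough x y


/-- chain form of dimension at least e -/
def DG {R : Type} [CommRing R] (I : Ideal R) (e : ℕ) : Prop :=
  ∃ l : LTSeries (PrimeSpectrum R), l.length = e ∧ I ≤ l.head.asIdeal

lemma DG_iff {R : Type} [CommRing R] (I : Ideal R) (e : ℕ) :
    DG I e ↔ (e : WithBot ℕ∞) ≤ ringKrullDim (R ⧸ I) := by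
  constructor
  · rintro ⟨l, hl, hI⟩
    rw [ringKrullDim_quotient, Order.le_krullDim_iff]
    refine ⟨⟨l.length, fun i => ⟨l i, ?_⟩, fun i => l.step i⟩, hl⟩
    rw [PrimeSpectrum.mem_zeroLocus]
    exact hI.trans (LTSeries.head_le l i)
  · intro h
    rw [ringKrullDim, Order.le_krullDim_iff] at h
    obtain ⟨l, hl⟩ := h
    refine ⟨l.map (PrimeSpectrum.comap (Ideal.Quotient.mk I))
      (RingHom.strictMono_comap_of_surjective Ideal.Quotient.mk_surjective), hl, ?_⟩
    intro x hx
    simp only [LTSeries.head_map, PrimeSpectrum.comap_asIdeal, Ideal.mem_comap]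
    rw [Ideal.Quotient.eq_zero_iff_mem.2 hx]; exact zero_mem _

lemma height_of_max_MvPoly (s : ℕ) (n : Ideal (MvPolynomial (Fin s) ℂ)) [hn : n.IsMaximal] :
    n.height = s := by
  have key : ∀ (a b : Fin s → ℂ), ∃ φ : MvPolynomial (Fin s) ℂ ≃+* MvPolynomial (Fin s) ℂ,
      (vanishingIdeal ℂ {a}).comap φ = vanishingIdeal ℂ ({b} : Set (Fin s → ℂ)) := by
    intro a b
    let F : (Fin s → ℂ) → MvPolynomial (Fin s) ℂ →ₐ[ℂ] MvPolynomial (Fin s) ℂ :=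
      fun c => aeval (fun i => X i + C (c i))
    have hF : ∀ c d p, c + d = 0 → F c (F d p) = p := by
      intro c d p h
      have : (F c).comp (F d) = AlgHom.id ℂ _ := by
        ext i; simp [F, add_assoc, ← C_add, ← Pi.add_apply, h]
      exact congrArg (fun f => f p) this
    refine ⟨⟨⟨F (b - a), F (a - b), fun p => hF _ _ _ (by simp), fun p => hF _ _ _ (by simp)⟩,
      fun _ _ => map_mul _ _ _, fun _ _ => map_add _ _ _⟩, ?_⟩
    ext p
    simp only [Ideal.mem_comap, mem_vanishingIdeal_singleton_iff]
    have : (aeval a : MvPolynomial (Fin s) ℂ →ₐ[ℂ] ℂ).comp (F (b - a)) = aeval b := by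
      ext i; simp [F]
    rw [← this]; rfl
  have : FiniteRingKrullDim (MvPolynomial (Fin s) ℂ) := by
    rw [finiteRingKrullDim_iff_ne_bot_and_top]
    rw [MvPolynomial.ringKrullDim_of_isNoetherianRing]
    simp [ringKrullDim_eq_zero_of_field]
    exact fun h => by cases h
  obtain ⟨M, hM, hh⟩ := Ideal.exists_isMaximal_height (R := MvPolynomial (Fin s) ℂ)
  rw [MvPolynomial.ringKrullDim_of_isNoetherianRing, ringKrullDim_eq_zero_of_field] at hh
  obtain ⟨a, rfl⟩ := isMaximal_iff_eq_vanishingIdeal_singleton.1 hM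
  obtain ⟨b, rfl⟩ := isMaximal_iff_eq_vanishingIdeal_singleton.1 hn
  obtain ⟨φ, hφ⟩ := key a b
  rw [← hφ, RingEquiv.height_comap]
  rw [zero_add] at hh
  have h2 : ((vanishingIdeal ℂ {a} : Ideal (MvPolynomial (Fin s) ℂ)).height : WithBot ℕ∞) = ((s : ℕ∞) : WithBot ℕ∞) := by
    simpa using hh
  exact WithBot.coe_injective h2

lemma height_of_max_fg (D : Type) [CommRing D] [IsDomain D] [Algebra ℂ D]
    [Algebra.FiniteType ℂ D] (n : Ideal D) [hn : n.IsMaximal] (e : ℕ)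
    (he : (e : WithBot ℕ∞) ≤ ringKrullDim D) : (e : ℕ∞) ≤ n.height := by
  obtain ⟨s, g, hg, hfin⟩ := exists_finite_inj_algHom_of_fg ℂ D
  algebraize [g.toRingHom]
  have hint : Algebra.IsIntegral (MvPolynomial (Fin s) ℂ) D := ⟨RingHom.IsIntegral.of_finite hfin⟩
  have hfs : FaithfulSMul (MvPolynomial (Fin s) ℂ) D :=
    (faithfulSMul_iff_algebraMap_injective _ _).2 hg
  have h1 : ringKrullDim D ≤ s := by
    have : ringKrullDim D ≤ ringKrullDim (MvPolynomial (Fin s) ℂ) := by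
      apply Order.krullDim_le_of_strictMono (PrimeSpectrum.comap (algebraMap (MvPolynomial (Fin s) ℂ) D))
      intro p q hpq
      exact Ideal.IsIntegral.comap_lt_comap hpq
    rw [MvPolynomial.ringKrullDim_of_isNoetherianRing, ringKrullDim_eq_zero_of_field] at this
    simpa using this
  have h2 : e ≤ s := by exact_mod_cast he.trans h1
  have : (n.under (MvPolynomial (Fin s) ℂ)).IsMaximal :=
    Ideal.isMaximal_comap_of_isIntegral_of_isMaximal n
  have : IsNoetherianRing D := Algebra.FiniteType.isNoetherianRing ℂ D
  rw [Ideal.height_eq_height_add_of_liesOver_of_hasGoingDown (n.under (MvPolynomial (Fin s) ℂ)) n,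
    height_of_max_MvPoly]
  refine le_trans ?_ le_self_add
  exact_mod_cast h2

abbrev Rg (σ : Type) := MvPolynomial σ ℂ

/-- maximal ideal of a point -/
abbrev ptI {σ : Type} (w : σ → ℂ) : Ideal (Rg σ) := vanishingIdeal ℂ {w}

lemma mem_ptI {σ : Type} (w : σ → ℂ) (f : Rg σ) : f ∈ ptI w ↔ eval w f = 0 := by
  rw [mem_vanishingIdeal_singleton_iff]; rfl

instance ptI_max {σ : Type} [Finite σ] (w : σ → ℂ) : (ptI w).IsMaximal :=
  isMaximal_iff_eq_vanishingIdeal_singleton.2 ⟨w, rfl⟩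

lemma CUT {σ : Type} [Finite σ] (P : Ideal (Rg σ)) [hP : P.IsPrime] (w : σ → ℂ)
    (hw : P ≤ ptI w) (e j : ℕ) (hP' : DG P (e + j)) (ι : Type) [Fintype ι]
    (hι : Fintype.card ι ≤ j) (s : ι → Rg σ) (hs : ∀ i, eval w (s i) = 0) :
    ∃ Q : Ideal (Rg σ), Q.IsPrime ∧ P ≤ Q ∧ Q ≤ ptI w ∧ (∀ i, s i ∈ Q) ∧ DG Q e := by
  classical
  let D := Rg σ ⧸ P
  let π := Ideal.Quotient.mk P
  have hsurj : Function.Surjective π := Ideal.Quotient.mk_surjective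
  let n : Ideal D := (ptI w).map π
  have hnc : n.comap π = ptI w := by
    rw [Ideal.comap_map_of_surjective' π hsurj, Ideal.mk_ker, sup_eq_left.2 hw]
  have hn : n.IsMaximal := by
    refine Ideal.IsMaximal.map_of_surjective_of_ker_le hsurj ?_
    rwa [Ideal.mk_ker]
  have h1 := height_of_max_fg D n (e + j) ((DG_iff P _).1 hP')
  have h2 := Ideal.height_le_height_add_encard_of_subset (R := D) (Set.range (π ∘ s)) (p := n)
    (by rintro _ ⟨i, rfl⟩; exact Ideal.mem_map_of_mem _ ((mem_ptI w _).2 (hs i)))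
  have h3 : (Set.range (π ∘ s)).encard ≤ j := by
    refine le_trans (b := ((Finset.univ : Finset ι) : Set ι).encard) ?_ ?_
    · rw [← Set.image_univ, Finset.coe_univ]; exact Set.encard_image_le _ _
    · rw [Set.encard_coe_eq_coe_finsetCard]; exact_mod_cast hι
  set J := Ideal.span (Set.range (π ∘ s)) with hJ
  have hJn : J ≤ n := by
    rw [hJ, Ideal.span_le]; rintro _ ⟨i, rfl⟩
    exact Ideal.mem_map_of_mem _ ((mem_ptI w _).2 (hs i))
  have h4 : (e : ℕ∞) ≤ (n.map (Ideal.Quotient.mk J)).height := by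
    have := (h1.trans h2).trans (add_le_add_right h3 _)
    push_cast at this
    exact (ENat.addLECancellable_of_ne_top (ENat.natCast_ne_top j)).add_le_add_iff_right.1 this
  have hprime : (n.map (Ideal.Quotient.mk J)).IsPrime :=
    Ideal.isPrime_map_quotientMk_of_isPrime hJn
  obtain ⟨l, hl, hlen⟩ := Ideal.exists_ltSeries_length_eq_height (n.map (Ideal.Quotient.mk J))
  rw [← hlen] at h4
  have h5 : e ≤ l.length := by exact_mod_cast h4
  let l2 : LTSeries (PrimeSpectrum (Rg σ)) :=
    l.map (PrimeSpectrum.comap ((Ideal.Quotient.mk J).comp π))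
      (RingHom.strictMono_comap_of_surjective (Ideal.Quotient.mk_surjective.comp hsurj))
  refine ⟨l2.head.asIdeal, l2.head.isPrime, ?_, ?_, ?_, ⟨l2.take ⟨e, Nat.lt_succ_of_le h5⟩, rfl, ?_⟩⟩
  · intro x hx
    simp only [l2, LTSeries.head_map, PrimeSpectrum.comap_asIdeal, Ideal.mem_comap, RingHom.comp_apply]
    rw [show π x = 0 from Ideal.Quotient.eq_zero_iff_mem.2 hx, map_zero]; exact zero_mem _
  · have h6 : l2.head ≤ l2.last := LTSeries.head_le_last _
    refine le_trans h6 ?_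
    simp only [l2, LTSeries.last_map, hl, PrimeSpectrum.comap_asIdeal]
    rw [← Ideal.comap_comap, Ideal.comap_map_of_surjective' _ Ideal.Quotient.mk_surjective,
      Ideal.mk_ker, sup_eq_left.2 hJn, hnc]
  · intro i
    simp only [l2, LTSeries.head_map, PrimeSpectrum.comap_asIdeal, Ideal.mem_comap, RingHom.comp_apply]
    rw [show Ideal.Quotient.mk J (π (s i)) = 0 from
      Ideal.Quotient.eq_zero_iff_mem.2 (Ideal.subset_span ⟨i, rfl⟩)]; exact zero_mem _
  · rw [RelSeries.head_take]

def IsVar {σ : Type} (W : Set (σ → ℂ)) (e : ℕ) : Prop :=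
  ∃ P : Ideal (Rg σ), P.IsPrime ∧ W = zeroLocus ℂ P ∧ DG P e

def IsCone {σ : Type} (W : Set (σ → ℂ)) : Prop := ∀ w ∈ W, ∀ c : ℂ, c • w ∈ W

lemma mem_zl {σ : Type} {I : Ideal (Rg σ)} {x : σ → ℂ} :
    x ∈ zeroLocus ℂ I ↔ ∀ f ∈ I, eval x f = 0 := Iff.rfl

lemma mem_vi {σ : Type} {W : Set (σ → ℂ)} {f : Rg σ} :
    f ∈ vanishingIdeal ℂ W ↔ ∀ x ∈ W, eval x f = 0 := Iff.rfl

lemma prime_mem_iff {σ : Type} [Finite σ] {P : Ideal (Rg σ)} (hP : P.IsPrime) (f : Rg σ) :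
    f ∈ P ↔ ∀ x ∈ zeroLocus ℂ P, eval x f = 0 := by
  rw [← mem_vi, IsPrime.vanishingIdeal_zeroLocus]

lemma DG_mono {R : Type} [CommRing R] {I J : Ideal R} {e : ℕ} (h : I ≤ J) (hJ : DG J e) : DG I e := by
  obtain ⟨l, h1, h2⟩ := hJ
  exact ⟨l, h1, h.trans h2⟩

lemma DG_le {R : Type} [CommRing R] {I : Ideal R} {e e' : ℕ} (h : e' ≤ e) (hJ : DG I e) : DG I e' := by
  obtain ⟨l, h1, h2⟩ := hJ
  exact ⟨l.take ⟨e', by omega⟩, rfl, by rw [RelSeries.head_take]; exact h2⟩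

lemma IsVar.le {σ : Type} {W : Set (σ → ℂ)} {e e' : ℕ} (h : IsVar W e) (h' : e' ≤ e) : IsVar W e' := by
  obtain ⟨P, h1, h2, h3⟩ := h
  exact ⟨P, h1, h2, DG_le h' h3⟩

lemma IsVar.irr {σ : Type} [Finite σ] {W : Set (σ → ℂ)} {e : ℕ} (h : IsVar W e) {f g : Rg σ}
    (hfg : ∀ w ∈ W, eval w f * eval w g = 0) :
    (∀ w ∈ W, eval w f = 0) ∨ (∀ w ∈ W, eval w g = 0) := by
  obtain ⟨P, hP, rfl, -⟩ := h
  rw [← prime_mem_iff hP, ← prime_mem_iff hP]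
  apply hP.mem_or_mem
  rw [prime_mem_iff hP]
  simpa using hfg

lemma IsVar.nonempty {σ : Type} [Finite σ] {W : Set (σ → ℂ)} {e : ℕ} (h : IsVar W e) : W.Nonempty := by
  obtain ⟨P, hP, rfl, -⟩ := h
  by_contra hne
  rw [Set.not_nonempty_iff_eq_empty] at hne
  apply hP.ne_top
  rw [Ideal.eq_top_iff_one, prime_mem_iff hP, hne]; simp

lemma IsVar.closed {σ : Type} {W : Set (σ → ℂ)} {e : ℕ} (h : IsVar W e) :
    ∀ x, (∀ f : Rg σ, (∀ w ∈ W, eval w f = 0) → eval x f = 0) → x ∈ W := by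
  obtain ⟨P, hP, rfl, -⟩ := h
  intro x hx f hf
  exact hx f fun w hw => hw f hf

lemma isVar_of_irr {σ : Type} [Finite σ] {W : Set (σ → ℂ)} (hne : W.Nonempty)
    (hc : ∀ x, (∀ f : Rg σ, (∀ w ∈ W, eval w f = 0) → eval x f = 0) → x ∈ W)
    (hi : ∀ f g : Rg σ, (∀ w ∈ W, eval w f * eval w g = 0) →
      (∀ w ∈ W, eval w f = 0) ∨ (∀ w ∈ W, eval w g = 0)) :
    (vanishingIdeal ℂ W : Ideal (Rg σ)).IsPrime ∧ W = zeroLocus ℂ (vanishingIdeal ℂ W : Ideal (Rg σ)) := by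
  refine ⟨⟨?_, ?_⟩, ?_⟩
  · rw [Ideal.ne_top_iff_one, mem_vi]
    obtain ⟨w, hw⟩ := hne
    intro h; simpa using h w hw
  · intro f g h
    exact hi f g (by simpa [mem_vi] using h)
  · ext x; exact ⟨fun h f hf => hf x h, fun h => hc x h⟩

lemma IsVar.exists_ne {σ : Type} [Finite σ] {W : Set (σ → ℂ)} {e : ℕ} (h : IsVar W (e + 1)) (v : σ → ℂ) :
    ∃ w ∈ W, w ≠ v := by
  obtain ⟨P, hP, rfl, l, hl, hPl⟩ := h
  by_contra! hcon
  have h1 : ptI v ≤ P := by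
    intro f hf
    rw [prime_mem_iff hP]
    intro x hx
    rw [hcon x hx]; exact (mem_ptI v f).1 hf
  have h2 : l 0 < l (Fin.last _) := l.strictMono (by rw [Fin.lt_def]; simp [hl])
  have h3 : (l 0).asIdeal < (l (Fin.last _)).asIdeal := h2
  have h4 := (ptI_max v).eq_of_le (l.last.isPrime.ne_top) (h1.trans (hPl.trans h3.le))
  have h5 := (h1.trans hPl)
  exact absurd h3 (not_lt_of_ge (by rw [show (l (Fin.last _)).asIdeal = ptI v from h4.symm]; exact h5))

lemma IsVar.cut {σ : Type} [Finite σ] {W : Set (σ → ℂ)} {e j : ℕ} (h : IsVar W (e + j))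
    {w : σ → ℂ} (hw : w ∈ W) {ι : Type} [Fintype ι]
    (hι : Fintype.card ι ≤ j) (s : ι → Rg σ) (hs : ∀ i, eval w (s i) = 0) :
    ∃ W' ⊆ W, IsVar W' e ∧ w ∈ W' ∧ ∀ v ∈ W', ∀ i, eval v (s i) = 0 := by
  obtain ⟨P, hP, rfl, hd⟩ := h
  have hPw : P ≤ ptI w := fun f hf => (mem_ptI w f).2 (hw f hf)
  obtain ⟨Q, hQ, h1, h2, h3, h4⟩ := CUT P w hPw e j hd ι hι s hs
  exact ⟨zeroLocus ℂ Q, zeroLocus_anti_mono h1, ⟨Q, hQ, rfl, h4⟩,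
    fun f hf => (mem_ptI w f).1 (h2 hf), fun v hv i => hv _ (h3 i)⟩

/-- scaling of variables -/
def scl {σ : Type} (c : ℂ) : Rg σ →ₐ[ℂ] Rg σ := aeval (fun i => C c * X i)

lemma eval_scl {σ : Type} (c : ℂ) (f : Rg σ) (v : σ → ℂ) : eval v (scl c f) = eval (c • v) f := by
  have : (aeval v : Rg σ →ₐ[ℂ] ℂ).comp (scl c) = aeval (c • v) := by
    ext i; simp [scl]
  exact congrArg (fun φ => φ f) this

/-- the restriction to a line -/
def lineP {σ : Type} (a b : σ → ℂ) : Rg σ →ₐ[ℂ] Polynomial ℂ :=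
  aeval (fun i => Polynomial.C (a i) + Polynomial.X * Polynomial.C (b i))

lemma eval_lineP {σ : Type} (a b : σ → ℂ) (f : Rg σ) (c : ℂ) :
    (lineP a b f).eval c = eval (a + c • b) f := by
  have : (Polynomial.aeval c : Polynomial ℂ →ₐ[ℂ] ℂ).comp (lineP a b) = aeval (a + c • b) := by
    ext i; simp [lineP]; ring
  exact congrArg (fun φ => φ f) this

/-- linear forms as polynomials -/
def linP {σ : Type} [Fintype σ] [DecidableEq σ] (φ : (σ → ℂ) →ₗ[ℂ] ℂ) : Rg σ := ∑ i, C (φ (Pi.single i 1)) * X i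

lemma eval_linP {σ : Type} [Fintype σ] [DecidableEq σ] (φ : (σ → ℂ) →ₗ[ℂ] ℂ) (v : σ → ℂ) :
    eval v (linP φ) = φ v := by
  conv_rhs => rw [LinearMap.pi_apply_eq_sum_univ φ v]
  simp only [linP, map_sum, map_mul, eval_C, eval_X, smul_eq_mul]
  refine Finset.sum_congr rfl fun i _ => ?_
  rw [mul_comm]; congr 2
  ext j; simp [Pi.single_apply, eq_comm]

lemma IsVar.cutCone {σ : Type} [Fintype σ] {W : Set (σ → ℂ)} {e j : ℕ} (h : IsVar W (e + j))
    (hc : IsCone W) {w : σ → ℂ} (hw : w ∈ W) {ι : Type} [Fintype ι]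
    (hι : Fintype.card ι ≤ j) (U : (σ → ℂ) →ₗ[ℂ] (ι → ℂ)) (hU : U w = 0) :
    ∃ W' ⊆ W, IsVar W' e ∧ IsCone W' ∧ w ∈ W' ∧ ∀ v ∈ W', U v = 0 := by
  classical
  obtain ⟨W1, h1, h2, h3, h4⟩ := h.cut hw hι (fun i => linP ((LinearMap.proj i).comp U))
    (by intro i; rw [eval_linP]; simp [hU])
  obtain ⟨Q, hQ, rfl, hd⟩ := h2
  let S : Set (σ → ℂ) := {v | ∃ c : ℂ, ∃ u ∈ zeroLocus ℂ Q, v = c • u}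
  have hSP : (vanishingIdeal ℂ S : Ideal (Rg σ)).IsPrime := by
    constructor
    · rw [Ideal.ne_top_iff_one, mem_vi]
      intro hh; simpa using hh w ⟨1, w, h3, by simp⟩
    · intro f g hfg
      by_contra! hcon
      obtain ⟨hf, hg⟩ := hcon
      have key : ∀ f : Rg σ, f ∉ vanishingIdeal ℂ S → {c : ℂ | scl c f ∈ Q}.Finite := by
        intro f hf
        rw [mem_vi] at hf; push Not at hf
        obtain ⟨_, ⟨c, u, hu, rfl⟩, hx⟩ := hf
        have hne : lineP 0 u f ≠ 0 := by
          intro h0; apply hx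
          have := eval_lineP 0 u f c
          rw [h0] at this; simpa using this.symm
        refine (Polynomial.finite_setOfPred_isRoot hne).subset ?_
        intro c' hc'
        have := hu _ hc'
        show (lineP 0 u f).eval c' = 0
        rw [eval_lineP, zero_add, ← eval_scl]; exact this
      obtain ⟨c, hcc⟩ := ((key f hf).union (key g hg)).infinite_compl.nonempty
      simp only [Set.mem_compl_iff, Set.mem_union, Set.mem_ofPred_eq, not_or] at hcc
      have : scl c (f * g) ∈ Q := by
        rw [prime_mem_iff hQ]
        intro x hx
        rw [eval_scl]
        exact hfg _ ⟨c, x, hx, rfl⟩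
      rw [map_mul] at this
      rcases hQ.mem_or_mem this with h | h
      · exact hcc.1 h
      · exact hcc.2 h
  have hle : (vanishingIdeal ℂ S : Ideal (Rg σ)) ≤ Q := by
    intro f hf
    rw [prime_mem_iff hQ]
    intro x hx; exact hf x ⟨1, x, hx, by simp⟩
  have hSz : ∀ f : Rg σ, (∀ v ∈ S, eval v f = 0) → ∀ v ∈ zeroLocus ℂ (vanishingIdeal ℂ S : Ideal (Rg σ)), eval v f = 0 :=
    fun f hf v hv => hv f hf
  refine ⟨zeroLocus ℂ (vanishingIdeal ℂ S), ?_, ⟨_, hSP, rfl, DG_mono hle hd⟩, ?_, ?_, ?_⟩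
  · intro x hx
    apply h.closed
    intro f hf
    apply hx f
    rintro _ ⟨c, u, hu, rfl⟩
    exact hf _ (hc _ (h1 hu) c)
  · intro x hx c f hf
    show eval _ f = 0
    rw [← eval_scl]
    apply hx
    rintro _ ⟨c', u, hu, rfl⟩
    show eval _ _ = 0
    rw [eval_scl, smul_smul]
    exact hf _ ⟨c * c', u, hu, rfl⟩
  · intro f hf; exact hf _ ⟨1, w, h3, by simp⟩
  · intro v hv
    ext i
    have := hSz (linP ((LinearMap.proj i).comp U)) (by
      rintro _ ⟨c, u, hu, rfl⟩
      have := h4 u hu i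
      rw [eval_linP] at this ⊢
      rw [map_smul, this, smul_zero]) v hv
    rw [eval_linP] at this
    exact this

/-- a cone of large dimension meets every small codim linear space -/
lemma IsVar.cone_meet {σ : Type} [Fintype σ] {W : Set (σ → ℂ)} {e : ℕ} (h : IsVar W e)
    (hc : IsCone W) {ι : Type} [Fintype ι]
    (hι : Fintype.card ι < e) (U : (σ → ℂ) →ₗ[ℂ] (ι → ℂ)) : ∃ w ∈ W, w ≠ 0 ∧ U w = 0 := by
  obtain ⟨w, hw⟩ := h.nonempty
  have h0 : (0 : σ → ℂ) ∈ W := by simpa using hc w hw 0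
  obtain ⟨W', h1, h2, -, -, h5⟩ := (h.le (e' := 1 + Fintype.card ι) (by omega)).cutCone hc h0 le_rfl U (by simp)
  obtain ⟨w, hw, hne⟩ := IsVar.exists_ne (e := 0) h2 0
  exact ⟨w, h1 hw, hne, h5 w hw⟩

lemma IsVar.succ_of {σ : Type} [Finite σ] {W W' : Set (σ → ℂ)} {e : ℕ} (h : IsVar W 0) (h' : IsVar W' e)
    (hs : W' ⊆ W) (hne : W' ≠ W) : IsVar W (e + 1) := by
  obtain ⟨P, hP, rfl, -⟩ := h
  obtain ⟨P', hP', rfl, l, hl, hl'⟩ := h'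
  have hlt : (⟨P, hP⟩ : PrimeSpectrum (Rg σ)) < l.head := by
    have : P ≤ P' := by
      intro f hf; rw [prime_mem_iff hP']; exact fun x hx => (hs hx) f hf
    refine lt_of_lt_of_le (b := ⟨P', hP'⟩) (lt_of_le_of_ne this ?_) hl'
    rintro h; apply hne
    rw [PrimeSpectrum.ext_iff] at h; simp at h; rw [h]
  exact ⟨P, hP, rfl, l.cons _ hlt, by simp [hl], by simp⟩

lemma IsVar.pred {σ : Type} [Finite σ] {W : Set (σ → ℂ)} {e : ℕ} (h : IsVar W (e + 1)) :
    ∃ W' ⊆ W, W' ≠ W ∧ IsVar W' e := by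
  obtain ⟨P, hP, rfl, l, hl, hl'⟩ := h
  have h0 : l.length ≠ 0 := by omega
  have hlt : l.head.asIdeal < (l.tail h0).head.asIdeal := by
    rw [RelSeries.head_tail]
    exact l.strictMono (by rw [Fin.lt_def]; show 0 < 1 % (l.length + 1); rw [Nat.mod_eq_of_lt (by omega)]; exact one_pos)
  refine ⟨zeroLocus ℂ (l.tail h0).head.asIdeal, zeroLocus_anti_mono (hl'.trans hlt.le), ?_,
    ⟨_, (l.tail h0).head.isPrime, rfl, l.tail h0, by simp [hl], le_rfl⟩⟩
  intro heq
  have : P = (l.tail h0).head.asIdeal := by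
    ext f; rw [prime_mem_iff hP, prime_mem_iff (l.tail h0).head.isPrime, heq]
  rw [← this] at hlt
  exact absurd hlt (not_lt_of_ge hl')

def prodSet {σ τ : Type} (A : Set (σ → ℂ)) (B : Set (τ → ℂ)) : Set (σ ⊕ τ → ℂ) :=
  {w | (fun i => w (Sum.inl i)) ∈ A ∧ (fun i => w (Sum.inr i)) ∈ B}

lemma eval_rename_inl {σ τ : Type} (w : σ ⊕ τ → ℂ) (f : Rg σ) :
    eval w (rename Sum.inl f) = eval (fun i => w (Sum.inl i)) f := by
  rw [eval_rename]; rfl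
lemma eval_rename_inr {σ τ : Type} (w : σ ⊕ τ → ℂ) (f : Rg τ) :
    eval w (rename Sum.inr f) = eval (fun i => w (Sum.inr i)) f := by
  rw [eval_rename]; rfl

def fixR {σ τ : Type} (b : τ → ℂ) : Rg (σ ⊕ τ) →ₐ[ℂ] Rg σ := aeval (Sum.elim X (fun j => C (b j)))
def fixL {σ τ : Type} (a : σ → ℂ) : Rg (σ ⊕ τ) →ₐ[ℂ] Rg τ := aeval (Sum.elim (fun j => C (a j)) X)

lemma eval_fixR {σ τ : Type} (a : σ → ℂ) (b : τ → ℂ) (f : Rg (σ ⊕ τ)) :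
    eval a (fixR b f) = eval (Sum.elim a b) f := by
  have : (aeval a : Rg σ →ₐ[ℂ] ℂ).comp (fixR b) = aeval (Sum.elim a b) := by
    ext i; cases i <;> simp [fixR]
  exact congrArg (fun φ => φ f) this
lemma eval_fixL {σ τ : Type} (a : σ → ℂ) (b : τ → ℂ) (f : Rg (σ ⊕ τ)) :
    eval b (fixL a f) = eval (Sum.elim a b) f := by
  have : (aeval b : Rg τ →ₐ[ℂ] ℂ).comp (fixL a) = aeval (Sum.elim a b) := by
    ext i; cases i <;> simp [fixL]
  exact congrArg (fun φ => φ f) this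

lemma sum_elim_eta {σ τ : Type} (w : σ ⊕ τ → ℂ) :
    Sum.elim (fun i => w (Sum.inl i)) (fun i => w (Sum.inr i)) = w := by
  ext i; cases i <;> rfl

lemma elim_mem_prod {σ τ : Type} {A : Set (σ → ℂ)} {B : Set (τ → ℂ)} {a : σ → ℂ} {b : τ → ℂ} :
    Sum.elim a b ∈ prodSet A B ↔ a ∈ A ∧ b ∈ B := Iff.rfl

lemma prod_irr {σ τ : Type} [Finite σ] [Finite τ] {A : Set (σ → ℂ)} {B : Set (τ → ℂ)}
    (hA : IsVar A 0) (hB : IsVar B 0) : IsVar (prodSet A B) 0 := by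
  have := isVar_of_irr (W := prodSet A B) ?_ ?_ ?_
  · obtain ⟨h1, h2⟩ := this
    exact ⟨_, h1, h2, RelSeries.singleton _ ⟨_, h1⟩, rfl, le_rfl⟩
  · obtain ⟨a, ha⟩ := hA.nonempty
    obtain ⟨b, hb⟩ := hB.nonempty
    exact ⟨Sum.elim a b, ha, hb⟩
  · intro x hx
    refine ⟨hA.closed _ fun f hf => ?_, hB.closed _ fun f hf => ?_⟩
    · rw [← eval_rename_inl]; apply hx
      intro w hw; rw [eval_rename_inl]; exact hf _ hw.1
    · rw [← eval_rename_inr]; apply hx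
      intro w hw; rw [eval_rename_inr]; exact hf _ hw.2
  · intro f g hfg
    by_contra! hcon
    obtain ⟨⟨w, hw, hwf⟩, ⟨w', hw', hwg⟩⟩ := hcon
    rw [← sum_elim_eta w, ← eval_fixL] at hwf
    rw [← sum_elim_eta w', ← eval_fixL] at hwg
    have : ∃ b ∈ B, eval b (fixL (fun i => w (Sum.inl i)) f) ≠ 0 ∧ eval b (fixL (fun i => w' (Sum.inl i)) g) ≠ 0 := by
      by_contra! hc
      rcases hB.irr (f := fixL (fun i => w (Sum.inl i)) f) (g := fixL (fun i => w' (Sum.inl i)) g) (by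
        intro b hb
        by_cases h : eval b (fixL (fun i => w (Sum.inl i)) f) = 0
        · rw [h, zero_mul]
        · rw [hc b hb h, mul_zero]) with h | h
      · exact hwf (h _ hw.2)
      · exact hwg (h _ hw'.2)
    obtain ⟨b, hb, h1, h2⟩ := this
    rw [eval_fixL, ← eval_fixR] at h1 h2
    rcases hA.irr (f := fixR b f) (g := fixR b g) (by
        intro a ha
        rw [eval_fixR, eval_fixR]
        exact hfg _ ⟨ha, hb⟩) with h | h
    · exact h1 (h _ hw.1)
    · exact h2 (h _ hw'.1)

lemma prodVar {σ τ : Type} [Finite σ] [Finite τ] {A : Set (σ → ℂ)} {B : Set (τ → ℂ)} {d e : ℕ}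
    (hA : IsVar A d) (hB : IsVar B e) : IsVar (prodSet A B) (d + e) := by
  induction d generalizing A with
  | zero =>
    induction e generalizing B with
    | zero => exact prod_irr hA hB
    | succ e ih =>
      obtain ⟨B', h1, h2, h3⟩ := hB.pred
      refine (prod_irr hA (hB.le (Nat.zero_le _))).succ_of (ih h3) (fun w hw => ⟨hw.1, h1 hw.2⟩) ?_
      intro heq; apply h2
      refine h1.antisymm fun b hb => ?_
      obtain ⟨a, ha⟩ := hA.nonempty
      have : Sum.elim a b ∈ prodSet A B' := by rw [heq]; exact ⟨ha, hb⟩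
      exact this.2
  | succ d ih =>
    obtain ⟨A', h1, h2, h3⟩ := hA.pred
    rw [Nat.add_right_comm]
    refine (prod_irr (hA.le (Nat.zero_le _)) (hB.le (Nat.zero_le _))).succ_of (ih h3) (fun w hw => ⟨h1 hw.1, hw.2⟩) ?_
    intro heq; apply h2
    refine h1.antisymm fun a ha => ?_
    obtain ⟨b, hb⟩ := hB.nonempty
    have : Sum.elim a b ∈ prodSet A' B := by rw [heq]; exact ⟨ha, hb⟩
    exact this.1

lemma prodCone {σ τ : Type} {A : Set (σ → ℂ)} {B : Set (τ → ℂ)}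
    (hA : IsCone A) (hB : IsCone B) : IsCone (prodSet A B) :=
  fun _ hw c => ⟨hA _ hw.1 c, hB _ hw.2 c⟩

inductive Chn {α : Type} [TopologicalSpace α] : Set α → ℕ → Prop
  | base (Z : Set α) : IsClosed Z → IsIrreducible Z → Chn Z 0
  | step (Z Z' : Set α) (e : ℕ) : IsClosed Z → IsIrreducible Z → Chn Z' e → Z' ⊆ Z → Z' ≠ Z → Chn Z (e + 1)

lemma irr_preimage {α : Type} [TopologicalSpace α] {S Z : Set α} (hZS : Z ⊆ S) (hZ : IsIrreducible Z) :
    IsIrreducible (Subtype.val ⁻¹' Z : Set S) := by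
  refine ⟨?_, ?_⟩
  · obtain ⟨z, hz⟩ := hZ.1; exact ⟨⟨z, hZS hz⟩, hz⟩
  · intro u v hu hv hu' hv'
    obtain ⟨u, huo, rfl⟩ := isOpen_induced_iff.1 hu
    obtain ⟨v, hvo, rfl⟩ := isOpen_induced_iff.1 hv
    obtain ⟨x, hx1, hx2⟩ := hu'
    obtain ⟨y, hy1, hy2⟩ := hv'
    obtain ⟨z, hz1, hz2, hz3⟩ := hZ.2 u v huo hvo ⟨_, hx1, hx2⟩ ⟨_, hy1, hy2⟩
    exact ⟨⟨z, hZS hz1⟩, hz1, hz2, hz3⟩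

lemma Chn.closed {α : Type} [TopologicalSpace α] {Z : Set α} {e : ℕ} (h : Chn Z e) : IsClosed Z := by
  cases h <;> assumption
lemma Chn.irred {α : Type} [TopologicalSpace α] {Z : Set α} {e : ℕ} (h : Chn Z e) : IsIrreducible Z := by
  cases h <;> assumption

lemma Chn.le_dim {α : Type} [TopologicalSpace α] {S Z : Set α} {e : ℕ} (h : Chn Z e) (hZS : Z ⊆ S) :
    (e : WithBot ℕ∞) ≤ topologicalKrullDim S := by
  have key : ∀ (Z : Set α) (e : ℕ), Chn Z e → ∀ hZS : Z ⊆ S,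
      ∃ l : LTSeries (TopologicalSpace.IrreducibleCloseds S), l.length = e ∧
        (l.last : Set S) = Subtype.val ⁻¹' Z := by
    intro Z e h
    induction h with
    | base Z hc hi =>
      intro hZS
      exact ⟨RelSeries.singleton _ ⟨Subtype.val ⁻¹' Z, irr_preimage hZS hi, hc.preimage continuous_subtype_val⟩, rfl, rfl⟩
    | step Z Z' e hc hi h1 h2 h3 ih =>
      intro hZS
      obtain ⟨l, hl, hl'⟩ := ih (h2.trans hZS)
      let Zc : TopologicalSpace.IrreducibleCloseds S :=
        ⟨Subtype.val ⁻¹' Z, irr_preimage hZS hi, hc.preimage continuous_subtype_val⟩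
      suffices hlt : l.last < Zc from ⟨l.snoc Zc hlt, by simp [hl], by rw [RelSeries.last_snoc]; rfl⟩
      rw [← SetLike.coe_ssubset_coe, hl']
      refine (Set.preimage_mono h2).ssubset_of_ne ?_
      intro heq; apply h3
      refine h2.antisymm fun z hz => ?_
      have : (⟨z, hZS hz⟩ : S) ∈ (Subtype.val ⁻¹' Z' : Set S) := by
        rw [heq]; exact hz
      exact this
  obtain ⟨l, hl, -⟩ := key Z e h hZS
  rw [topologicalKrullDim, Order.le_krullDim_iff]
  exact ⟨l, hl⟩

lemma exists_Chn {α : Type} [TopologicalSpace α] {S : Set α} (hS : IsClosed S) {e : ℕ}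
    (h : (e : WithBot ℕ∞) ≤ topologicalKrullDim S) : ∃ Z ⊆ S, Chn Z e := by
  rw [topologicalKrullDim, Order.le_krullDim_iff] at h
  obtain ⟨l, rfl⟩ := h
  refine ⟨Subtype.val '' (l.last : Set S), by simp, ?_⟩
  have hc : ∀ Z : TopologicalSpace.IrreducibleCloseds S, IsClosed (Subtype.val '' (Z : Set S)) :=
    fun Z => hS.isClosedEmbedding_subtypeVal.isClosedMap _ Z.isClosed
  have hi : ∀ Z : TopologicalSpace.IrreducibleCloseds S, IsIrreducible (Subtype.val '' (Z : Set S)) :=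
    fun Z => Z.isIrreducible.image _ continuous_subtype_val.continuousOn
  induction l using RelSeries.inductionOn' with
  | singleton x => exact Chn.base _ (hc _) (hi _)
  | snoc p x hx hp =>
    simp only [RelSeries.last_snoc, RelSeries.snoc_length]
    have hx' : (p.last : Set S) ⊂ x := hx
    exact Chn.step _ _ _ (hc _) (hi _) hp (Set.image_mono hx'.subset)
      (fun h => hx'.ne (Subtype.val_injective.image_injective h))

/-! projective sets and cones -/

abbrev PMk {n : ℕ} (v : Fin n → ℂ) (hv : v ≠ 0) : PrV n := Projectivization.mk ℂ v hv

lemma mem_idealOf {n : ℕ} {Y : Set (PrV n)} {f : Rg (Fin n)} :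
    f ∈ idealOf Y ↔ ∀ v (hv : v ≠ 0), PMk v hv ∈ Y → eval v f = 0 := by
  constructor
  · intro h v hv hY
    exact h hY v hv rfl
  · intro h x hx v hv hvx
    exact h v hv (by rw [show PMk v hv = x from hvx]; exact hx)

lemma mem_pZero {n : ℕ} {f : Rg (Fin n)} {v : Fin n → ℂ} {hv : v ≠ 0} :
    PMk v hv ∈ pZero f ↔ ∀ c : ℂ, c ≠ 0 → eval (c • v) f = 0 := by
  constructor
  · intro h c hc
    refine h (c • v) (smul_ne_zero hc hv) ?_
    rw [Projectivization.mk_eq_mk_iff']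
    exact ⟨c, rfl⟩
  · intro h w hw hwv
    rw [Projectivization.mk_eq_mk_iff'] at hwv
    obtain ⟨c, rfl⟩ := hwv
    exact h c (by rintro rfl; simp at hw)

lemma PMk_smul {n : ℕ} {v : Fin n → ℂ} (hv : v ≠ 0) {c : ℂ} (hc : c ≠ 0) :
    PMk (c • v) (smul_ne_zero hc hv) = PMk v hv := by
  rw [Projectivization.mk_eq_mk_iff']; exact ⟨c, rfl⟩

lemma isClosed_pZero {n : ℕ} (f : Rg (Fin n)) : IsClosed (pZero f) := by
  rw [← isOpen_compl_iff]
  exact TopologicalSpace.isOpen_generateFrom_of_mem ⟨f, rfl⟩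

lemma lineP_zero_of {n : ℕ} {f : Rg (Fin n)} {v : Fin n → ℂ}
    (h : ∀ c : ℂ, c ≠ 0 → eval (c • v) f = 0) : lineP 0 v f = 0 := by
  refine Polynomial.eq_zero_of_infinite_isRoot _ (Set.Infinite.mono (s := {0}ᶜ) ?_ (Set.finite_singleton _).infinite_compl)
  intro c hc
  show (lineP 0 v f).eval c = 0
  rw [eval_lineP, zero_add]; exact h c hc

/-- homogeneity in evaluated form -/
def Hmg {n : ℕ} (f : Rg (Fin n)) : Prop := ∃ d : ℕ, ∀ (c : ℂ) v, eval (c • v) f = c ^ d * eval v f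

lemma eval_smul_hc {n : ℕ} (f : Rg (Fin n)) (d : ℕ) (c : ℂ) (v : Fin n → ℂ) :
    eval (c • v) (homogeneousComponent d f) = c ^ d * eval v (homogeneousComponent d f) := by
  have h := homogeneousComponent_isHomogeneous d f
  rw [eval_eq, eval_eq, Finset.mul_sum]
  refine Finset.sum_congr rfl fun m hm => ?_
  have hd := h (mem_support_iff.1 hm)
  simp only [Pi.smul_apply, smul_eq_mul, mul_pow, Finset.prod_mul_distrib]
  rw [Finset.prod_pow_eq_pow_sum]
  have : ∑ i ∈ m.support, m i = d := by
    rw [← hd]; simp [Finsupp.weight_apply, Finsupp.sum]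
  rw [this]; ring

lemma hc_zero_of {n : ℕ} {f : Rg (Fin n)} {v : Fin n → ℂ}
    (h : ∀ c : ℂ, c ≠ 0 → eval (c • v) f = 0) (d : ℕ) : eval v (homogeneousComponent d f) = 0 := by
  by_cases hd : f.totalDegree < d
  · rw [homogeneousComponent_eq_zero _ _ hd]; simp
  let p : Polynomial ℂ := ∑ i ∈ Finset.range (f.totalDegree + 1),
    Polynomial.C (eval v (homogeneousComponent i f)) * Polynomial.X ^ i
  have hp : p = 0 := by
    refine Polynomial.eq_zero_of_infinite_isRoot _ (Set.Infinite.mono (s := {0}ᶜ) ?_ (Set.finite_singleton _).infinite_compl)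
    intro c hc
    show p.eval c = 0
    rw [← h c hc]
    conv_rhs => rw [← sum_homogeneousComponent f]
    simp only [p, Polynomial.eval_finsetSum, map_sum, eval_smul_hc]
    refine Finset.sum_congr rfl fun i _ => ?_
    simp only [Polynomial.eval_mul, Polynomial.eval_C, Polynomial.eval_pow, Polynomial.eval_X]; ring
  have := congrArg (fun q => q.coeff d) hp
  simp only [p, Polynomial.finsetSum_coeff, Polynomial.coeff_C_mul_X_pow, Polynomial.coeff_zero] at this
  rwa [Finset.sum_ite_eq, if_pos (by simp; omega)] at this

lemma sep_closed {n : ℕ} {Y : Set (PrV n)} (hY : IsClosed Y) {v : Fin n → ℂ} (hv : v ≠ 0)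
    (hx : PMk v hv ∉ Y) : ∃ f ∈ idealOf Y, Hmg f ∧ eval v f ≠ 0 := by
  have key : ∀ U : Set (PrV n), IsOpen U → ∀ v (hv : v ≠ 0), PMk v hv ∈ U →
      ∃ f ∈ idealOf Uᶜ, Hmg f ∧ eval v f ≠ 0 := by
    intro U hU
    induction hU with
    | basic U hU =>
      obtain ⟨f, rfl⟩ := hU
      intro v hv hvf
      rw [Set.mem_compl_iff, mem_pZero] at hvf
      push Not at hvf
      obtain ⟨c, hc, hcf⟩ := hvf
      have : ∃ d, eval v (homogeneousComponent d f) ≠ 0 := by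
        by_contra! hcon
        apply hcf
        rw [← sum_homogeneousComponent f, map_sum]
        refine Finset.sum_eq_zero fun i _ => ?_
        rw [eval_smul_hc, hcon, mul_zero]
      obtain ⟨d, hd⟩ := this
      refine ⟨_, ?_, ⟨d, eval_smul_hc f d⟩, hd⟩
      rw [mem_idealOf]
      intro w hw hwf
      rw [compl_compl, mem_pZero] at hwf
      exact hc_zero_of hwf d
    | univ =>
      intro v hv _
      refine ⟨1, ?_, ⟨0, by simp⟩, by simp⟩
      rw [mem_idealOf]; simp
    | inter s t _ _ ih1 ih2 =>
      intro v hv hvs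
      obtain ⟨f, hf, ⟨d, hd⟩, hfv⟩ := ih1 v hv hvs.1
      obtain ⟨g, hg, ⟨d', hd'⟩, hgv⟩ := ih2 v hv hvs.2
      refine ⟨f * g, ?_, ⟨d + d', fun c w => ?_⟩, ?_⟩
      · rw [mem_idealOf] at *
        intro w hw hws
        rw [Set.compl_inter] at hws
        rcases hws with h | h
        · simp [hf w hw h]
        · simp [hg w hw h]
      · rw [map_mul, hd, hd', map_mul]; ring
      · rw [map_mul]; exact mul_ne_zero hfv hgv
    | sUnion S _ ih =>
      intro v hv hvs
      obtain ⟨U, hU, hvU⟩ := hvs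
      obtain ⟨f, hf, h1, h2⟩ := ih U hU v hv hvU
      refine ⟨f, ?_, h1, h2⟩
      rw [mem_idealOf] at *
      intro w hw hws
      exact hf w hw fun h => hws ⟨U, hU, h⟩
  have := key Yᶜ hY.isOpen_compl v hv hx
  rwa [compl_compl] at this

abbrev coneOf {n : ℕ} (Y : Set (PrV n)) : Set (Fin n → ℂ) := zeroLocus ℂ (idealOf Y)

lemma mem_coneOf {n : ℕ} {Y : Set (PrV n)} (hY : IsClosed Y) {v : Fin n → ℂ} (hv : v ≠ 0) :
    v ∈ coneOf Y ↔ PMk v hv ∈ Y := by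
  constructor
  · intro h
    by_contra hcon
    obtain ⟨f, hf, -, hne⟩ := sep_closed hY hv hcon
    exact hne (h f hf)
  · intro h f hf
    exact mem_idealOf.1 hf v hv h

lemma scl_mem {n : ℕ} {Y : Set (PrV n)} {f : Rg (Fin n)} (hf : f ∈ idealOf Y) {c : ℂ} (hc : c ≠ 0) :
    scl c f ∈ idealOf Y := by
  rw [mem_idealOf] at *
  intro v hv hY
  rw [eval_scl]
  exact hf _ (smul_ne_zero hc hv) (by rwa [PMk_smul hv hc])

lemma idealOf_eval_zero {n : ℕ} {Y : Set (PrV n)} (hne : Y.Nonempty) {f : Rg (Fin n)}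
    (hf : f ∈ idealOf Y) : eval 0 f = 0 := by
  obtain ⟨x, hx⟩ := hne
  have := lineP_zero_of (f := f) (v := x.rep) (fun c hc => by
    refine mem_idealOf.1 hf _ (smul_ne_zero hc x.rep_nonzero) ?_
    rw [PMk_smul x.rep_nonzero hc]; simpa using hx)
  have h2 := eval_lineP 0 x.rep f 0
  rw [this] at h2; simpa using h2.symm

lemma coneOf_isCone {n : ℕ} {Y : Set (PrV n)} (hne : Y.Nonempty) : IsCone (coneOf Y) := by
  intro w hw c
  by_cases hc : c = 0
  · subst hc; rw [zero_smul]
    intro f hf; exact idealOf_eval_zero hne hf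
  · intro f hf
    show eval _ f = 0
    rw [← eval_scl]; exact hw _ (scl_mem hf hc)

lemma idealOf_prime {n : ℕ} {Y : Set (PrV n)} (hirr : IsIrreducible Y) : (idealOf Y).IsPrime := by
  constructor
  · rw [Ideal.ne_top_iff_one]
    intro h; simpa using idealOf_eval_zero hirr.1 h
  · intro f g hfg
    have := (isPreirreducible_iff_isClosed_union_isClosed.1 hirr.2) (pZero f) (pZero g)
      (isClosed_pZero f) (isClosed_pZero g) ?_
    · exact this
    · intro x hx
      have hx' : PMk x.rep x.rep_nonzero = x := by simp
      have h0 : lineP 0 x.rep (f * g) = 0 := lineP_zero_of (fun c hc => by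
        refine mem_idealOf.1 hfg _ (smul_ne_zero hc x.rep_nonzero) ?_
        rw [PMk_smul x.rep_nonzero hc]; simpa using hx)
      rw [map_mul, mul_eq_zero] at h0
      have key : ∀ f : Rg (Fin n), lineP 0 x.rep f = 0 → x ∈ pZero f := by
        intro f hf
        rw [← hx', mem_pZero]
        intro c _
        have := eval_lineP 0 x.rep f c
        rw [hf] at this; simpa using this.symm
      exact h0.imp (key f) (key g)

lemma isVar_zero_of_prime {σ : Type} {P : Ideal (Rg σ)} (hP : P.IsPrime) : IsVar (zeroLocus ℂ P) 0 :=
  ⟨P, hP, rfl, RelSeries.singleton _ ⟨P, hP⟩, rfl, le_rfl⟩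

lemma isVar_singleton {σ : Type} [Finite σ] (v : σ → ℂ) : IsVar {v} 0 := by
  have h := isVar_zero_of_prime (ptI_max v).isPrime
  convert h
  ext x
  simp only [Set.mem_singleton_iff]
  constructor
  · rintro rfl f hf; exact (mem_ptI _ _).1 hf
  · intro hx
    ext i
    have := hx (X i - C (v i)) ((mem_ptI _ _).2 (by simp))
    simpa [sub_eq_zero] using this

lemma IsVar.mono {σ : Type} [Finite σ] {W W' : Set (σ → ℂ)} {e : ℕ} (h : IsVar W 0) (h' : IsVar W' e)
    (hs : W' ⊆ W) : IsVar W e := by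
  obtain ⟨P, hP, rfl, -⟩ := h
  obtain ⟨P', hP', rfl, h⟩ := h'
  refine ⟨P, hP, rfl, DG_mono ?_ h⟩
  intro f hf; rw [prime_mem_iff hP']; exact fun x hx => (hs hx) f hf

lemma coneOf_mono {n : ℕ} {Z Y : Set (PrV n)} (h : Z ⊆ Y) : coneOf Z ⊆ coneOf Y := by
  apply zeroLocus_anti_mono
  intro f hf
  rw [mem_idealOf] at *
  exact fun v hv hvZ => hf v hv (h hvZ)

lemma Chn.isVar {n : ℕ} {Z : Set (PrV n)} {e : ℕ} (h : Chn Z e) : IsVar (coneOf Z) (e + 1) := by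
  induction h with
  | base Z hc hi =>
    refine (isVar_zero_of_prime (idealOf_prime hi)).succ_of (isVar_singleton 0) ?_ ?_
    · rintro _ rfl
      intro f hf; exact idealOf_eval_zero hi.1 hf
    · intro heq
      obtain ⟨x, hx⟩ := hi.1
      have := (mem_coneOf hc x.rep_nonzero).2 (by simpa using hx)
      change x.rep ∈ zeroLocus ℂ (idealOf Z) at this
      rw [← heq] at this
      exact x.rep_nonzero this
  | step Z Z' e hc hi h1 h2 h3 ih =>
    refine (isVar_zero_of_prime (idealOf_prime hi)).succ_of ih (coneOf_mono h2) ?_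
    intro heq; apply h3
    refine h2.antisymm fun x hx => ?_
    have hx' := (mem_coneOf hc x.rep_nonzero).2 (by simpa using hx)
    change x.rep ∈ zeroLocus ℂ (idealOf Z) at hx'
    rw [← heq] at hx'
    simpa using (mem_coneOf h1.closed x.rep_nonzero).1 hx'

lemma coneOf_isVar {n m : ℕ} {X : Set (PrV n)} (hc : IsClosed X) (hi : IsIrreducible X)
    (hm : (m : WithBot ℕ∞) ≤ pdim X) : IsVar (coneOf X) (m + 1) := by
  obtain ⟨Z, hZ, h⟩ := exists_Chn hc hm
  exact (isVar_zero_of_prime (idealOf_prime hi)).mono h.isVar (coneOf_mono hZ)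

lemma IsVar.le_card {n e : ℕ} {W : Set (Fin n → ℂ)} (h : IsVar W e) : e ≤ n := by
  obtain ⟨P, hP, -, h⟩ := h
  rw [DG_iff] at h
  have := h.trans (ringKrullDim_quotient_le P)
  rw [MvPolynomial.ringKrullDim_of_isNoetherianRing, ringKrullDim_eq_zero_of_field, zero_add] at this
  rw [Nat.card_fin] at this
  exact_mod_cast this

instance prNoeth (n : ℕ) : TopologicalSpace.NoetherianSpace (PrV n) := by
  have h : TopologicalSpace.NoetherianSpace (PrV n) ↔ WellFoundedLT (TopologicalSpace.Closeds (PrV n)) :=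
    (TopologicalSpace.noetherianSpace_TFAE (PrV n)).out 0 1
  rw [h]
  refine StrictAnti.wellFoundedLT (f := fun Z : TopologicalSpace.Closeds (PrV n) => idealOf (Z : Set (PrV n))) ?_
  intro A B hAB
  have hAB' : (A : Set (PrV n)) ⊂ B := hAB
  refine lt_of_le_of_ne ?_ ?_
  · intro f hf
    rw [mem_idealOf] at *
    exact fun v hv hvZ => hf v hv (hAB'.subset hvZ)
  · intro heq
    apply hAB'.ne
    refine hAB'.subset.antisymm fun x hx => ?_
    have := (mem_coneOf B.isClosed x.rep_nonzero).2 (by simpa using hx)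
    change idealOf (B : Set (PrV n)) = idealOf (A : Set (PrV n)) at heq
    rw [coneOf, heq] at this
    simpa using (mem_coneOf A.isClosed x.rep_nonzero).1 this

lemma AVOID {n : ℕ} (d : ℕ) : ∀ (S : Set (PrV n)), IsClosed S → (∀ Z e, Z ⊆ S → Chn Z e → e < d) →
    ∀ (T : Submodule ℂ (Fin n → ℂ)), Module.finrank ℂ T ≤ d →
    ∃ U : (Fin n → ℂ) →ₗ[ℂ] (Fin d → ℂ), (∀ v (hv : v ≠ 0), PMk v hv ∈ S → U v ≠ 0) ∧
      ∀ t ∈ T, U t = 0 → t = 0 := by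
  induction d with
  | zero =>
    intro S hS hch T hT
    refine ⟨0, ?_, ?_⟩
    · intro v hv hvS
      exact absurd (hch (closure {PMk v hv}) 0 (hS.closure_subset_iff.2 (by simpa using hvS))
        (Chn.base _ isClosed_closure isIrreducible_singleton.closure)) (by omega)
    · intro t ht _
      have : T = ⊥ := Submodule.finrank_eq_zero.1 (by omega)
      rw [this] at ht; exact ht
  | succ d ih =>
    intro S hS hch T hT
    obtain ⟨C, hCf, hCc, hCi, hCS⟩ := TopologicalSpace.NoetherianSpace.exists_finite_set_isClosed_irreducible hS
    -- choose points
    have hpt : ∃ A : Set (Fin n → ℂ), A.Finite ∧ (∀ a ∈ A, a ≠ 0) ∧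
        (∀ Z ∈ C, ∃ a ∈ A, ∃ ha : a ≠ 0, PMk a ha ∈ Z) ∧ (T ≠ ⊥ → ∃ a ∈ A, a ∈ T) := by
      classical
      have h1 : ∀ Z ∈ C, ∃ x : PrV n, x ∈ Z := fun Z hZ => (hCi Z hZ).1
      have h1 : ∃ x : C → (Fin n → ℂ), ∀ Z, ∃ h : x Z ≠ 0, PMk (x Z) h ∈ Z.1 := by
        refine ⟨fun Z => (h1 Z.1 Z.2).choose.rep, fun Z => ⟨Projectivization.rep_nonzero _, ?_⟩⟩
        simpa using (h1 Z.1 Z.2).choose_spec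
      obtain ⟨x, hx⟩ := h1
      have : Finite C := hCf
      by_cases hTb : T = ⊥
      · refine ⟨Set.range x, Set.finite_range x, ?_, ?_, fun h => absurd hTb h⟩
        · rintro _ ⟨Z, rfl⟩; exact (hx Z).1
        · intro Z hZ; exact ⟨_, ⟨⟨Z, hZ⟩, rfl⟩, hx ⟨Z, hZ⟩⟩
      · obtain ⟨t, ht, ht0⟩ := Submodule.exists_mem_ne_zero_of_ne_bot hTb
        refine ⟨insert t (Set.range x), (Set.finite_range x).insert _, ?_, ?_, fun _ => ⟨t, by simp, ht⟩⟩
        · rintro _ (rfl | ⟨Z, rfl⟩)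
          · exact ht0
          · exact (hx Z).1
        · intro Z hZ; exact ⟨_, Or.inr ⟨⟨Z, hZ⟩, rfl⟩, hx ⟨Z, hZ⟩⟩
    obtain ⟨A, hAf, hA0, hAC, hAT⟩ := hpt
    have hφ : ∃ φ : Module.Dual ℂ (Fin n → ℂ), ∀ a ∈ A, φ a ≠ 0 := by
      classical
      let s : Finset (Subspace ℂ (Module.Dual ℂ (Fin n → ℂ))) :=
        hAf.toFinset.image (fun a => LinearMap.ker (Module.Dual.eval ℂ (Fin n → ℂ) a))
      have hs : ⊤ ∉ s := by
        intro h
        obtain ⟨a, ha, hat⟩ := Finset.mem_image.1 h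
        have ha' := hA0 a (by simpa using ha)
        rw [LinearMap.ker_eq_top] at hat
        apply ha'
        exact (Module.eval_apply_eq_zero_iff ℂ a).1 hat
      have := Subspace.biUnion_ne_univ_of_top_notMem hs
      rw [Set.ne_univ_iff_exists_notMem] at this
      obtain ⟨φ, hφ⟩ := this
      refine ⟨φ, fun a ha h0 => hφ ?_⟩
      simp only [Set.mem_iUnion]
      refine ⟨_, Finset.mem_image.2 ⟨a, by simpa using ha, rfl⟩, ?_⟩
      simpa using h0
    obtain ⟨φ, hφ⟩ := hφ
    have hS'c : IsClosed (S ∩ pZero (linP φ)) := hS.inter (isClosed_pZero _)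
    have hS'm : ∀ v (hv : v ≠ 0), PMk v hv ∈ pZero (linP φ) ↔ φ v = 0 := by
      intro v hv
      rw [mem_pZero]
      constructor
      · intro h; simpa [eval_linP] using h 1 one_ne_zero
      · intro h c _; rw [eval_linP]; simp [h]
    obtain ⟨U, hU1, hU2⟩ := ih (S ∩ pZero (linP φ)) hS'c (by
      intro Z e hZ hZe
      have hZS : Z ⊆ ⋃₀ C := by rw [← hCS]; exact hZ.trans Set.inter_subset_left
      obtain ⟨Z', hZ'C, hZ'⟩ := isIrreducible_iff_sUnion_isClosed.1 hZe.irred hCf.toFinset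
        (by intro z hz; exact hCc z (by simpa using hz)) (by simpa using hZS)
      have hZ'C : Z' ∈ C := by simpa using hZ'C
      have := hch Z' (e + 1) (by rw [hCS]; exact Set.subset_sUnion_of_mem hZ'C)
        (Chn.step Z' Z e (hCc _ hZ'C) (hCi _ hZ'C) hZe hZ' (by
          rintro rfl
          obtain ⟨a, haA, ha, haZ⟩ := hAC Z hZ'C
          exact hφ a haA ((hS'm a ha).1 (hZ haZ).2)))
      omega) (T ⊓ LinearMap.ker φ) (by
        by_cases hTb : T = ⊥
        · rw [hTb, bot_inf_eq, finrank_bot]; omega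
        · obtain ⟨a, haA, haT⟩ := hAT hTb
          have : T ⊓ LinearMap.ker φ < T := by
            refine lt_of_le_of_ne inf_le_left ?_
            intro h
            rw [← h] at haT
            exact hφ a haA haT.2
          have := Submodule.finrank_lt_finrank_of_lt this
          omega)
    refine ⟨LinearMap.pi (Fin.cons φ (fun i => (LinearMap.proj i).comp U)), ?_, ?_⟩
    · intro v hv hvS h0
      have h1 : φ v = 0 := congrFun h0 0
      refine hU1 v hv ⟨hvS, (hS'm v hv).2 h1⟩ ?_
      ext i
      exact congrFun h0 i.succ
    · intro t ht h0
      have h1 : φ t = 0 := congrFun h0 0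
      refine hU2 t ⟨ht, h1⟩ ?_
      ext i
      exact congrFun h0 i.succ

lemma AVOID' {n d : ℕ} {S : Set (PrV n)} (hS : IsClosed S) (hd : pdim S < (d : WithBot ℕ∞))
    (T : Submodule ℂ (Fin n → ℂ)) (hT : Module.finrank ℂ T ≤ d) :
    ∃ U : (Fin n → ℂ) →ₗ[ℂ] (Fin d → ℂ), (∀ v (hv : v ≠ 0), PMk v hv ∈ S → U v ≠ 0) ∧
      ∀ t ∈ T, U t = 0 → t = 0 := by
  refine AVOID d S hS ?_ T hT
  intro Z e hZ h
  have := (h.le_dim hZ).trans_lt hd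
  exact_mod_cast this

def cov {n : ℕ} (F : Fin n → Rg (Fin n)) (v : Fin n → ℂ) : (Fin n → ℂ) →ₗ[ℂ] ℂ :=
  ∑ i, eval v (F i) • LinearMap.proj i

lemma cov_apply {n : ℕ} (F : Fin n → Rg (Fin n)) (v p : Fin n → ℂ) :
    cov F v p = ∑ i, eval v (F i) * p i := by simp [cov]

lemma jacLin_eq {n : ℕ} (f : Rg (Fin n)) (v : Fin n → ℂ) : jacLin f v = cov (fun i => pderiv i f) v := rfl

lemma jacLin_apply {n : ℕ} (f : Rg (Fin n)) (v p : Fin n → ℂ) :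
    jacLin f v p = ∑ i, eval v (pderiv i f) * p i := by simp [jacLin]

lemma jacLin_add {n : ℕ} (f g : Rg (Fin n)) (v p : Fin n → ℂ) :
    jacLin (f + g) v p = jacLin f v p + jacLin g v p := by
  simp [jacLin_apply, add_mul, Finset.sum_add_distrib]

lemma jacLin_mul {n : ℕ} (f g : Rg (Fin n)) (v p : Fin n → ℂ) :
    jacLin (f * g) v p = jacLin f v p * eval v g + eval v f * jacLin g v p := by
  simp only [jacLin_apply, Finset.mul_sum, Finset.sum_mul, ← Finset.sum_add_distrib]
  refine Finset.sum_congr rfl fun i _ => ?_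
  simp [Derivation.leibniz]; ring

lemma jacLin_C {n : ℕ} (a : ℂ) (v p : Fin n → ℂ) : jacLin (C a) v p = 0 := by
  simp [jacLin_apply]

lemma jacLin_X {n : ℕ} (i : Fin n) (v p : Fin n → ℂ) : jacLin (X i) v p = p i := by
  simp [jacLin_apply, pderiv_X, Pi.single_apply, apply_ite]

lemma mem_affTangent {n : ℕ} {Y : Set (PrV n)} {v p : Fin n → ℂ} :
    p ∈ affTangent Y v ↔ ∀ g ∈ idealOf Y, jacLin g v p = 0 := by
  simp only [affTangent, Submodule.mem_iInf, LinearMap.mem_ker]; rfl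

/-- first order expansion with polynomial remainder -/
lemma taylor {n : ℕ} (g : Rg (Fin n)) : ∃ G : Rg ((Fin n ⊕ Fin n) ⊕ Unit),
    (∀ v p s, eval (v + s • p) g = eval v g + s * eval (Sum.elim (Sum.elim v p) (fun _ => s)) G) ∧
    ∀ v p, eval (Sum.elim (Sum.elim v p) (fun _ => 0)) G = jacLin g v p := by
  induction g using MvPolynomial.induction_on with
  | C a => exact ⟨0, by simp, by simp [jacLin_C]⟩
  | add f g hf hg =>
    obtain ⟨F, hF1, hF2⟩ := hf
    obtain ⟨G, hG1, hG2⟩ := hg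
    refine ⟨F + G, fun v p s => ?_, fun v p => ?_⟩
    · rw [map_add, map_add, hF1, hG1, map_add]; ring
    · rw [map_add, hF2, hG2, jacLin_add]
  | mul_X f i hf =>
    obtain ⟨F, hF1, hF2⟩ := hf
    refine ⟨F * X (Sum.inl (Sum.inl i)) + rename (Sum.inl ∘ Sum.inl) f * X (Sum.inl (Sum.inr i))
      + X (Sum.inr ()) * F * X (Sum.inl (Sum.inr i)), fun v p s => ?_, fun v p => ?_⟩
    · have : (Sum.elim (Sum.elim v p) (fun _ : Unit => s)) ∘ (Sum.inl ∘ Sum.inl) = v := rfl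
      simp only [map_mul, map_add, hF1, eval_rename, this, eval_X, Sum.elim_inl, Sum.elim_inr, Pi.add_apply, Pi.smul_apply, smul_eq_mul]
      ring
    · have : (Sum.elim (Sum.elim v p) (fun _ : Unit => (0:ℂ))) ∘ (Sum.inl ∘ Sum.inl) = v := rfl
      simp only [map_mul, map_add, eval_rename, this, eval_X, Sum.elim_inl, Sum.elim_inr, hF2, jacLin_mul, jacLin_X]
      ring

lemma jacLin_scl {n : ℕ} (g : Rg (Fin n)) (c : ℂ) (v p : Fin n → ℂ) :
    jacLin (scl c g) v p = c * jacLin g (c • v) p := by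
  induction g using MvPolynomial.induction_on with
  | C a => simp [scl, jacLin_C]
  | add f g hf hg => rw [map_add, jacLin_add, jacLin_add, hf, hg]; ring
  | mul_X f i hf =>
    rw [map_mul, jacLin_mul, jacLin_mul, hf, eval_scl, eval_scl]
    have : (scl c (X i) : Rg (Fin n)) = C c * X i := by simp [scl]
    rw [this, jacLin_mul, jacLin_C, jacLin_X, jacLin_X]; simp; ring

lemma affTangent_smul {n : ℕ} (Y : Set (PrV n)) {c : ℂ} (hc : c ≠ 0) (v : Fin n → ℂ) :
    affTangent Y (c • v) = affTangent Y v := by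
  have key : ∀ {c : ℂ} (hc : c ≠ 0) (v : Fin n → ℂ), affTangent Y v ≤ affTangent Y (c • v) := by
    intro c hc v p hp
    rw [mem_affTangent] at *
    intro g hg
    have := hp _ (scl_mem hg hc)
    rw [jacLin_scl] at this
    exact (mul_eq_zero.1 this).resolve_left hc
  refine le_antisymm ?_ (key hc v)
  have := key (inv_ne_zero hc) (c • v)
  rwa [smul_smul, inv_mul_cancel₀ hc, one_smul] at this

/-- the affine form vanishing at w -/
def affF {n : ℕ} (w : Fin n → ℂ) (φ : (Fin n → ℂ) →ₗ[ℂ] ℂ) : Rg (Fin n) := linP φ - C (φ w)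

lemma affF_mem {n : ℕ} (w : Fin n → ℂ) (φ : (Fin n → ℂ) →ₗ[ℂ] ℂ) : affF w φ ∈ ptI w := by
  rw [mem_ptI]; simp [affF, eval_linP]

lemma affF_add {n : ℕ} (w : Fin n → ℂ) (φ ψ : (Fin n → ℂ) →ₗ[ℂ] ℂ) : affF w (φ + ψ) = affF w φ + affF w ψ := by
  simp [affF, linP, add_mul, Finset.sum_add_distrib]; ring

lemma affF_smul {n : ℕ} (w : Fin n → ℂ) (c : ℂ) (φ : (Fin n → ℂ) →ₗ[ℂ] ℂ) : affF w (c • φ) = C c * affF w φ := by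
  simp [affF, linP, mul_sub, Finset.mul_sum, mul_assoc]

lemma first_order {n : ℕ} (w : Fin n → ℂ) (f : Rg (Fin n)) :
    f - C (eval w f) - affF w (jacLin f w) ∈ (ptI w) ^ 2 := by
  induction f using MvPolynomial.induction_on with
  | C a =>
    have : jacLin (C a) w = 0 := by ext; simp [jacLin_C]
    rw [this]; simp [affF, linP]
  | add f g hf hg =>
    have : jacLin (f + g) w = jacLin f w + jacLin g w := LinearMap.ext fun p => jacLin_add f g w p
    rw [this, affF_add, map_add, map_add]
    convert add_mem hf hg using 1; ring
  | mul_X f i hf =>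
    have h1 : jacLin (f * X i) w = w i • jacLin f w + eval w f • LinearMap.proj i := by
      refine LinearMap.ext fun p => ?_
      rw [jacLin_mul, jacLin_X]; simp; ring
    have h2 : affF w (LinearMap.proj i) = X i - C (w i) := by
      simp [affF, linP, Pi.single_apply, apply_ite]
    rw [h1, affF_add, affF_smul, affF_smul, h2]
    have h3 : affF w (jacLin f w) * (X i - C (w i)) ∈ (ptI w) ^ 2 := by
      rw [pow_two]; exact Ideal.mul_mem_mul (affF_mem _ _) (by rw [mem_ptI]; simp)
    convert add_mem (Ideal.mul_mem_right (X i) _ hf) h3 using 1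
    simp only [map_mul, eval_X]; ring

lemma dual_top {n : ℕ} (D : Submodule ℂ (Module.Dual ℂ (Fin n → ℂ)))
    (h : ∀ p, (∀ φ ∈ D, φ p = 0) → p = 0) : D = ⊤ := by
  have : D.dualCoannihilator = ⊥ := by
    rw [eq_bot_iff]; intro p hp
    exact h p (Submodule.mem_dualCoannihilator _|>.1 hp)
  have h2 := Subspace.dualCoannihilator_dualAnnihilator_eq (W := D)
  rw [this] at h2; simpa using h2.symm

lemma TAN {n : ℕ} {ι : Type} (w : Fin n → ℂ) (I : Ideal (Rg (Fin n))) (hI : I ≤ ptI w)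
    (U : (Fin n → ℂ) →ₗ[ℂ] (ι → ℂ))
    (h : ∀ p, (∀ g ∈ I, jacLin g w p = 0) → U p = 0 → p = 0) :
    ptI w ≤ I ⊔ Ideal.span (Set.range fun i => affF w ((LinearMap.proj i).comp U)) ⊔ (ptI w) ^ 2 := by
  set J := I ⊔ Ideal.span (Set.range fun i => affF w ((LinearMap.proj i).comp U)) ⊔ (ptI w) ^ 2 with hJ
  let D : Submodule ℂ (Module.Dual ℂ (Fin n → ℂ)) :=
    { carrier := {φ | affF w φ ∈ J}
      add_mem' := by intro a b ha hb; simp only [Set.mem_ofPred_eq, affF_add]; exact add_mem ha hb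
      zero_mem' := by simp [affF, linP]
      smul_mem' := by intro c a ha; simp only [Set.mem_ofPred_eq, affF_smul]; exact Ideal.mul_mem_left _ _ ha }
  have hD : D = ⊤ := by
    apply dual_top
    intro p hp
    apply h p
    · intro g hg
      apply hp
      show affF w _ ∈ J
      have h1 := first_order w g
      rw [(mem_ptI w g).1 (hI hg), map_zero, sub_zero] at h1
      have h2 : g - (g - affF w (jacLin g w)) ∈ J := sub_mem (Ideal.mem_sup_left (Ideal.mem_sup_left hg)) (Ideal.mem_sup_right h1)
      simpa using h2
    · ext i
      refine hp ((LinearMap.proj i).comp U) ?_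
      exact Ideal.mem_sup_left (Ideal.mem_sup_right (Ideal.subset_span ⟨i, rfl⟩))
  intro f hf
  have h1 := first_order w f
  rw [(mem_ptI w f).1 hf, map_zero, sub_zero] at h1
  have h2 : affF w (jacLin f w) ∈ J := by
    have : jacLin f w ∈ D := by rw [hD]; trivial
    exact this
  simpa using add_mem (Ideal.mem_sup_right (S := I ⊔ Ideal.span (Set.range fun i => affF w ((LinearMap.proj i).comp U))) h1) h2

lemma exists_inj_on {V : Type} [AddCommGroup V] [Module ℂ V] [FiniteDimensional ℂ V] (T : Submodule ℂ V) :
    ∃ U : V →ₗ[ℂ] (Fin (Module.finrank ℂ T) → ℂ), ∀ t ∈ T, U t = 0 → t = 0 := by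
  let e := (Module.finBasis ℂ T).equivFun
  obtain ⟨U, hU⟩ := LinearMap.exists_extend e.toLinearMap
  refine ⟨U, fun t ht h => ?_⟩
  have h1 : e ⟨t, ht⟩ = 0 := by rw [← h, ← LinearEquiv.coe_toLinearMap, ← hU]; rfl
  simpa using h1

lemma L4 {n k : ℕ} {Y : Set (PrV n)} (hi : IsIrreducible Y) (hd : DG (idealOf Y) k)
    {w : Fin n → ℂ} (hw : w ∈ coneOf Y) : k ≤ Module.finrank ℂ (affTangent Y w) := by
  by_contra! hlt
  obtain ⟨U, hU⟩ := exists_inj_on (affTangent Y w)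
  have := idealOf_prime hi
  have hIw : idealOf Y ≤ ptI w := fun f hf => (mem_ptI w f).2 (hw f hf)
  obtain ⟨Q, hQ, h1, h2, h3, h4⟩ := CUT (idealOf Y) w hIw 1 (Module.finrank ℂ (affTangent Y w))
    (DG_le (by omega) hd) (Fin (Module.finrank ℂ (affTangent Y w))) (by simp)
    (fun i => affF w ((LinearMap.proj i).comp U)) (fun i => (mem_ptI _ _).1 (affF_mem _ _))
  have ht := TAN w (idealOf Y) hIw U (fun p hp => hU p (mem_affTangent.2 hp))
  have ht2 : ptI w ≤ Q ⊔ (ptI w) ^ 2 := ht.trans (sup_le_sup_right (sup_le h1 (by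
    rw [Ideal.span_le]; rintro _ ⟨i, rfl⟩; exact h3 i)) _)
  have hidem : IsIdempotentElem ((ptI w).map (Ideal.Quotient.mk Q)) := by
    have h5 := Ideal.map_mono (f := Ideal.Quotient.mk Q) ht2
    rw [Ideal.map_sup, Ideal.map_quotient_self, bot_sup_eq, Ideal.map_pow, pow_two] at h5
    exact le_antisymm Ideal.mul_le_left h5
  have hfg : ((ptI w).map (Ideal.Quotient.mk Q)).FG := IsNoetherian.noetherian _
  have hb : (ptI w).map (Ideal.Quotient.mk Q) = ⊥ := by
    obtain ⟨e, he, hee⟩ := (Ideal.isIdempotentElem_iff_of_fg _ hfg).1 hidem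
    rcases IsIdempotentElem.iff_eq_zero_or_one.1 he with rfl | rfl
    · rw [hee]; simp
    · exfalso
      have h6 : (ptI w).map (Ideal.Quotient.mk Q) = ⊤ := by rw [hee]; simp
      have h7 := Ideal.comap_map_of_surjective (Ideal.Quotient.mk Q) Ideal.Quotient.mk_surjective (ptI w)
      rw [h6, Ideal.comap_top, ← RingHom.ker_eq_comap_bot, Ideal.mk_ker, sup_eq_left.2 h2] at h7
      exact (ptI_max w).ne_top h7.symm
  have hle : ptI w ≤ Q := by rwa [Ideal.map_eq_bot_iff_le_ker, Ideal.mk_ker] at hb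
  obtain ⟨l, hl, hl'⟩ := h4
  have hm := (ptI_max w)
  have e1 := hm.eq_of_le (l.head.isPrime.ne_top) (hle.trans hl')
  have e2 : l.head < l.last := by
    apply l.strictMono; rw [Fin.lt_def]; simp; omega
  have e3 : l.head.asIdeal < l.last.asIdeal := e2
  rw [← e1] at e3
  exact (hm.eq_of_le (l.last.isPrime.ne_top) e3.le ▸ e3).false

/-- semicontinuity -/
lemma SEMI {n : ℕ} (𝒢 : Set (Fin n → Rg (Fin n))) (v : Fin n → ℂ) (r : ℕ)
    (T : (Fin n → ℂ) → Submodule ℂ (Fin n → ℂ)) (hT : ∀ v p, p ∈ T v ↔ ∀ F ∈ 𝒢, cov F v p = 0)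
    (hr : Module.finrank ℂ (T v) ≤ r) :
    ∃ D : Rg (Fin n), eval v D ≠ 0 ∧ ∀ v', eval v' D ≠ 0 → Module.finrank ℂ (T v') ≤ r := by
  classical
  obtain ⟨U, hU⟩ := exists_inj_on (T v)
  let cU : Fin (Module.finrank ℂ (T v)) → Fin n → Rg (Fin n) := fun j i => C (U (Pi.single i 1) j)
  have hcU : ∀ j v p, cov (cU j) v p = U p j := by
    intro j v p
    have := eval_linP ((LinearMap.proj j).comp U) p
    rw [cov_apply]
    simp only [linP, map_sum, map_mul, eval_C, eval_X] at this
    simp only [cU, eval_C]; exact this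
  let S := 𝒢 ∪ Set.range cU
  let s : Set (Module.Dual ℂ (Fin n → ℂ)) := (fun F => cov F v) '' S
  have hs : ⊤ ≤ Submodule.span ℂ s := by
    rw [dual_top (Submodule.span ℂ s)]
    intro p hp
    apply hU p
    · rw [hT]; intro F hF; exact hp _ (Submodule.subset_span ⟨F, Or.inl hF, rfl⟩)
    · ext j; rw [← hcU j v p]; exact hp _ (Submodule.subset_span ⟨cU j, Or.inr ⟨j, rfl⟩, rfl⟩)
  let b := Module.Basis.ofSpan hs
  have hbs : Set.range b ⊆ s := Module.Basis.ofSpan_subset hs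
  have := Module.Finite.finite_basis b
  have := Fintype.ofFinite ((linearIndepOn_empty ℂ (id : Module.Dual ℂ (Fin n → ℂ) → _)).extend (Set.empty_subset s))
  have hcard := Module.finrank_eq_card_basis b
  rw [Subspace.dual_finrank_eq, Module.finrank_fin_fun] at hcard
  let e := Fintype.equivOfCardEq (α := Fin n) (by rw [← hcard, Fintype.card_fin])
  have hF : ∀ j : Fin n, ∃ F ∈ S, cov F v = b (e j) := fun j => hbs ⟨e j, rfl⟩
  choose F hFS hFb using hF
  have hdet : ∀ v', eval v' (Matrix.of fun j i => F j i).det = (Matrix.of fun j i => eval v' (F j i)).det := by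
    intro v'; rw [RingHom.map_det]; rfl
  have hmul : ∀ v' p, (Matrix.of fun j i => eval v' (F j i)).mulVec p = fun j => cov (F j) v' p := by
    intro v' p; ext j; rw [cov_apply]; rfl
  refine ⟨(Matrix.of fun j i => F j i).det, ?_, ?_⟩
  · rw [hdet]
    intro h0
    obtain ⟨p, hp0, hp⟩ := Matrix.exists_mulVec_eq_zero_iff.2 h0
    rw [hmul] at hp
    apply hp0
    refine (Module.forall_dual_apply_eq_zero_iff ℂ p).1 fun φ => ?_
    rw [← b.sum_repr φ, LinearMap.sum_apply]
    refine Finset.sum_eq_zero fun i _ => ?_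
    have := congrFun hp (e.symm i)
    simp only [hFb, Equiv.apply_symm_apply, Pi.zero_apply] at this
    simp [this]
  · intro v' hv'
    rw [hdet] at hv'
    have hinj : ∀ t ∈ T v', U t = 0 → t = 0 := by
      intro p hp hUp
      by_contra hp0
      apply hv'
      refine Matrix.exists_mulVec_eq_zero_iff.1 ⟨p, hp0, ?_⟩
      rw [hmul]; ext j
      rcases hFS j with h | ⟨i, hi⟩
      · exact (hT v' p).1 hp _ h
      · rw [← hi, hcU, hUp]; rfl
    have := LinearMap.finrank_le_finrank_of_injective (f := U.comp (T v').subtype) (by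
      rw [← LinearMap.ker_eq_bot, eq_bot_iff]
      rintro ⟨t, ht⟩ h
      have := hinj t ht h
      simpa using this)
    rw [Module.finrank_fin_fun] at this; omega

lemma semi_tangent {n : ℕ} (Y : Set (PrV n)) (v : Fin n → ℂ) (r : ℕ)
    (hr : Module.finrank ℂ (affTangent Y v) ≤ r) :
    ∃ D : Rg (Fin n), eval v D ≠ 0 ∧ ∀ v', eval v' D ≠ 0 → Module.finrank ℂ (affTangent Y v') ≤ r := by
  refine SEMI ((fun g i => pderiv i g) '' (idealOf Y : Set (Rg (Fin n)))) v r (affTangent Y) ?_ hr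
  intro v p
  rw [mem_affTangent]
  simp [← jacLin_eq]

lemma smooth_iff {n m : ℕ} {X : Set (PrV n)} (hm : pdim X = m) (x : PrV n) :
    IsSmoothPt X x ↔ Module.finrank ℂ (affTangent X x.rep) = m + 1 := by
  rw [IsSmoothPt, hm]; norm_cast

lemma coneDG {n k : ℕ} {X : Set (PrV n)} (hi : IsIrreducible X) (h : IsVar (coneOf X) k) : DG (idealOf X) k := by
  obtain ⟨P, hP, h1, h2⟩ := h
  have : idealOf X = P := by
    ext f; rw [prime_mem_iff hP, prime_mem_iff (idealOf_prime hi), ← h1]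
  rwa [this]

lemma sing_closed {n m : ℕ} {X : Set (PrV n)} (hc : IsClosed X) (hi : IsIrreducible X) (hm : pdim X = m) :
    IsClosed (singLocus X) := by
  have hd : DG (idealOf X) (m + 1) := coneDG hi (coneOf_isVar hc hi hm.ge)
  have hlow : ∀ x ∈ X, m + 1 ≤ Module.finrank ℂ (affTangent X x.rep) := fun x hx =>
    L4 hi hd ((mem_coneOf hc x.rep_nonzero).2 (by simpa using hx))
  have : singLocus X = X ∩ ⋂ D ∈ {D : Rg (Fin n) | ∀ v', eval v' D ≠ 0 → Module.finrank ℂ (affTangent X v') ≤ m + 1}, pZero D := by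
    ext x
    simp only [singLocus, smoothLocus, Set.mem_sdiff, Set.mem_ofPred_eq, Set.mem_inter_iff, Set.mem_iInter, smooth_iff hm]
    refine and_congr_right fun hx => ?_
    constructor
    · intro h D hD v hv hvx
      by_contra hne
      apply h ⟨hx, ?_⟩
      have h1 := hD v hne
      have : PMk v hv = PMk x.rep x.rep_nonzero := by simpa using hvx
      rw [Projectivization.mk_eq_mk_iff'] at this
      obtain ⟨c, rfl⟩ := this
      rw [affTangent_smul _ (by rintro rfl; simp at hv)] at h1
      exact le_antisymm h1 (hlow x hx)
    · rintro h ⟨-, h2⟩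
      obtain ⟨D, hD1, hD2⟩ := semi_tangent X x.rep (m + 1) h2.le
      exact hD1 (h D hD2 x.rep x.rep_nonzero (by simp))
  rw [this]
  exact hc.inter (isClosed_biInter fun D _ => isClosed_pZero D)

lemma DG_up {R S : Type} [CommRing R] [CommRing S] (φ : R →+* S) (J : Ideal S) [J.IsPrime]
    (hint : ((Ideal.Quotient.mk J).comp φ).IsIntegral) {e : ℕ} (h : DG (J.comap φ) e) : DG J e := by
  rw [DG_iff]
  let _ : Algebra R (S ⧸ J) := ((Ideal.Quotient.mk J).comp φ).toAlgebra
  have : Algebra.IsIntegral R (S ⧸ J) := ⟨hint⟩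
  obtain ⟨l, hl, hI⟩ := h
  have hle : (⊥ : Ideal (S ⧸ J)).under R ≤ l.head.asIdeal := by
    refine le_trans ?_ hI
    intro x hx
    have : (Ideal.Quotient.mk J) (φ x) = 0 := hx
    have h2 : φ x ∈ J := Ideal.Quotient.eq_zero_iff_mem.1 this
    exact h2
  have hpr := l.head.isPrime
  obtain ⟨Q, -, hQ, hQl⟩ := Ideal.exists_ideal_ge_liesOver_of_le (p := (⊥ : Ideal (S ⧸ J)).under R) (q := l.head.asIdeal) (⊥ : Ideal (S ⧸ J)) hle
  obtain ⟨L, hL, -⟩ := Ideal.exists_ltSeries_of_hasGoingUp l Q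
  rw [ringKrullDim, Order.le_krullDim_iff]
  exact ⟨L, by omega⟩

lemma DG_down {R S : Type} [CommRing R] [CommRing S] (φ : R →+* S) (J : Ideal S) [J.IsPrime]
    (hint : ((Ideal.Quotient.mk J).comp φ).IsIntegral) {e : ℕ} (h : DG J e) : DG (J.comap φ) e := by
  let _ : Algebra R (S ⧸ J) := ((Ideal.Quotient.mk J).comp φ).toAlgebra
  have : Algebra.IsIntegral R (S ⧸ J) := ⟨hint⟩
  rw [DG_iff, ringKrullDim, Order.le_krullDim_iff] at h
  obtain ⟨l, hl⟩ := h
  have hsm : StrictMono (PrimeSpectrum.comap (algebraMap R (S ⧸ J))) :=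
    fun p q hpq => Ideal.IsIntegral.comap_lt_comap hpq
  refine ⟨l.map (PrimeSpectrum.comap (algebraMap R (S ⧸ J))) hsm, hl, ?_⟩
  intro x hx
  have hx' : (Ideal.Quotient.mk J) (φ x) = 0 := Ideal.Quotient.eq_zero_iff_mem.2 hx
  rw [LTSeries.head_map]
  show (Ideal.Quotient.mk J) (φ x) ∈ l.head.asIdeal
  rw [hx']; exact zero_mem _

lemma DG_full {k : ℕ} {p : Ideal (Rg (Fin k))} (h : DG p k) : p = ⊥ := by
  by_contra hne
  obtain ⟨l, hl, hp⟩ := h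
  have hlt : (⊥ : PrimeSpectrum (Rg (Fin k))) < l.head := by
    show (⊥ : Ideal _) < _
    exact (bot_lt_iff_ne_bot.2 hne).trans_le hp
  have : IsVar (zeroLocus ℂ (⊥ : Ideal (Rg (Fin k)))) (k + 1) :=
    ⟨⊥, Ideal.isPrime_bot, rfl, l.cons _ hlt, by simp [hl], bot_le⟩
  have := this.le_card
  omega

/-- pull back of polynomials along a linear map -/
def linSub {n r : ℕ} (u : (Fin n → ℂ) →ₗ[ℂ] (Fin r → ℂ)) : Rg (Fin r) →ₐ[ℂ] Rg (Fin n) :=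
  aeval (fun j => linP ((LinearMap.proj j).comp u))

lemma eval_linSub {n r : ℕ} (u : (Fin n → ℂ) →ₗ[ℂ] (Fin r → ℂ)) (f : Rg (Fin r)) (v : Fin n → ℂ) :
    eval v (linSub u f) = eval (u v) f := by
  have : (aeval v : Rg (Fin n) →ₐ[ℂ] ℂ).comp (linSub u) = aeval (u v) := by
    ext i; simp [linSub, aeval_eq_eval, eval_linP]
  exact congrArg (fun φ => φ f) this

lemma mem_idealOf_cone {n : ℕ} {Y : Set (PrV n)} {f : Rg (Fin n)} :
    f ∈ idealOf Y ↔ ∀ v ∈ coneOf Y, eval v f = 0 := by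
  constructor
  · intro h v hv; exact hv f h
  · intro h; rw [mem_idealOf]
    intro v hv hvY
    exact h v fun g hg => mem_idealOf.1 hg v hv hvY

/-- degree components of an identity under scaling -/
lemma scale_comp {J : Type} [Fintype J] (a : ℂ) (K : ℕ) (b : J → ℂ) (H : J → Polynomial ℂ)
    (h : ∀ c : ℂ, c ^ (K + 1) * a = ∑ j, c * b j * (H j).eval c) : a = ∑ j, b j * (H j).coeff K := by
  have : Polynomial.X ^ (K + 1) * Polynomial.C a = ∑ j, Polynomial.X * (Polynomial.C (b j) * H j) := by
    apply Polynomial.funext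
    intro c
    simp only [Polynomial.eval_finsetSum, Polynomial.eval_mul, Polynomial.eval_pow, Polynomial.eval_X, Polynomial.eval_C]
    rw [h c]
    exact Finset.sum_congr rfl fun j _ => by ring
  have := congrArg (fun q => q.coeff (K + 1)) this
  simpa only [Polynomial.finsetSum_coeff, Polynomial.coeff_X_mul, Polynomial.coeff_C_mul, Polynomial.coeff_X_pow_mul', le_refl, if_true, Nat.sub_self, Polynomial.coeff_C_zero] using this

/-- the polynomial in c of f(c v) -/
lemma exists_scaleP {n : ℕ} (f : Rg (Fin n)) (v : Fin n → ℂ) : ∃ q : Polynomial ℂ,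
    (∀ c, q.eval c = eval (c • v) f) ∧ ∀ d, q.coeff d = eval v (homogeneousComponent d f) := by
  refine ⟨∑ i ∈ Finset.range (f.totalDegree + 1),
    Polynomial.C (eval v (homogeneousComponent i f)) * Polynomial.X ^ i, ?_, ?_⟩
  · intro c
    conv_rhs => rw [← sum_homogeneousComponent f]
    simp only [Polynomial.eval_finsetSum, map_sum, eval_smul_hc]
    refine Finset.sum_congr rfl fun i _ => ?_
    simp only [Polynomial.eval_mul, Polynomial.eval_C, Polynomial.eval_pow, Polynomial.eval_X]; ring
  · intro d
    simp only [Polynomial.finsetSum_coeff, Polynomial.coeff_C_mul_X_pow]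
    rw [Finset.sum_ite_eq]
    split_ifs with hd
    · rfl
    · rw [homogeneousComponent_eq_zero]
      · simp
      · simp at hd; omega

lemma INT_pow {n r : ℕ} {Y : Set (PrV n)} (hne : Y.Nonempty) (u : (Fin n → ℂ) →ₗ[ℂ] (Fin r → ℂ))
    (hu : ∀ v ∈ coneOf Y, u v = 0 → v = 0) : ∃ K : ℕ, ∀ i : Fin n, ∃ H : Fin r → Rg (Fin n),
      (∀ j, (H j).totalDegree ≤ K) ∧
      X i ^ (K + 1) - ∑ j, linP ((LinearMap.proj j).comp u) * H j ∈ idealOf Y := by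
  let I := idealOf Y ⊔ Ideal.span (Set.range fun j => linP ((LinearMap.proj j).comp u))
  have hrad : ∀ i : Fin n, X i ∈ I.radical := by
    intro i
    rw [← MvPolynomial.vanishingIdeal_zeroLocus_eq_radical (K := ℂ), mem_vi]
    intro v hv
    have hv0 : v = 0 := by
      apply hu v
      · intro f hf; exact hv f (Ideal.mem_sup_left hf)
      · ext j
        have : eval v (linP ((LinearMap.proj j).comp u)) = 0 := hv _ (Ideal.mem_sup_right (Ideal.subset_span ⟨j, rfl⟩))
        rw [eval_linP] at this; exact this
    simp [hv0]
  choose k hk using hrad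
  refine ⟨∑ i, k i, fun i => ?_⟩
  have h1 : (X i : Rg (Fin n)) ^ (∑ i, k i + 1) ∈ I := Ideal.pow_mem_of_pow_mem _ (hk i)
    ((Finset.single_le_sum (f := k) (fun _ _ => Nat.zero_le _) (Finset.mem_univ i)).trans (Nat.le_succ _))
  obtain ⟨g, hg, s, hs, hgs⟩ := Submodule.mem_sup.1 h1
  obtain ⟨H, rfl⟩ := Ideal.mem_span_range_iff_exists_fun.1 hs
  refine ⟨fun j => homogeneousComponent (∑ i, k i) (H j), fun j => (homogeneousComponent_isHomogeneous _ _).totalDegree_le, ?_⟩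
  rw [mem_idealOf_cone]
  intro v hv
  choose q hq1 hq2 using fun j => exists_scaleP (H j) v
  have := scale_comp (v i ^ (∑ i, k i + 1)) (∑ i, k i) (u v) q (by
    intro c
    have h2 := congrArg (eval (c • v)) hgs
    have h3 : eval (c • v) g = 0 := coneOf_isCone hne v hv c g hg
    simp only [map_add, map_sum, map_mul, map_pow, eval_X, eval_linP, h3, zero_add] at h2
    rw [← mul_pow]
    simp only [Pi.smul_apply, smul_eq_mul] at h2
    rw [← h2]
    refine Finset.sum_congr rfl fun j _ => ?_
    rw [hq1]; simp; ring)
  simp only [map_sub, map_pow, eval_X, map_sum, map_mul, eval_linP]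
  rw [this, sub_eq_zero]
  refine Finset.sum_congr rfl fun j _ => ?_
  rw [hq2]; rfl

lemma INT_core {n r K : ℕ} {A : Type} [CommRing A] (π : Rg (Fin n) →+* A) (hπ : Function.Surjective π)
    (u : (Fin n → ℂ) →ₗ[ℂ] (Fin r → ℂ))
    (hK : ∀ i : Fin n, ∃ H : Fin r → Rg (Fin n), (∀ j, (H j).totalDegree ≤ K) ∧
      π (X i ^ (K + 1)) = π (∑ j, linP ((LinearMap.proj j).comp u) * H j)) :
    (π.comp (linSub u).toRingHom).Finite := by
  classical
  let _ : Algebra (Rg (Fin r)) A := (π.comp (linSub u).toRingHom).toAlgebra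
  show Module.Finite (Rg (Fin r)) A
  let B : Finset (Fin n →₀ ℕ) := Finset.Icc 0 (Finsupp.equivFunOnFinite.symm fun _ => K)
  let M : Submodule (Rg (Fin r)) A :=
    Submodule.span _ ((fun m => π (monomial m 1)) '' (B : Set (Fin n →₀ ℕ)))
  have hC : ∀ (a : ℂ) x, x ∈ M → π (C a) * x ∈ M := by
    intro a x hx
    have := M.smul_mem (C a) hx
    rw [Algebra.smul_def] at this
    convert this using 2
    simp [RingHom.algebraMap_toAlgebra, linSub]
  have hL : ∀ j x, x ∈ M → π (linP ((LinearMap.proj j).comp u)) * x ∈ M := by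
    intro j x hx
    have := M.smul_mem (X j) hx
    rw [Algebra.smul_def] at this
    convert this using 2
    simp [RingHom.algebraMap_toAlgebra, linSub]
  have key : ∀ d : ℕ, ∀ f : Rg (Fin n), f.totalDegree ≤ d → π f ∈ M := by
    intro d
    induction d using Nat.strong_induction_on with
    | _ d ih =>
    have hmon : ∀ m : Fin n →₀ ℕ, m.degree ≤ d → π (monomial m 1) ∈ M := by
      intro m hm
      by_cases hmB : m ∈ B
      · exact Submodule.subset_span ⟨m, hmB, rfl⟩
      · have : ∃ i, K + 1 ≤ m i := by
          by_contra! hcon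
          apply hmB
          rw [Finset.mem_Icc]
          exact ⟨zero_le, fun i => by simpa using Nat.lt_succ_iff.1 (hcon i)⟩
        obtain ⟨i, hi⟩ := this
        obtain ⟨H, hH1, hH2⟩ := hK i
        have hle : Finsupp.single i (K + 1) ≤ m := by
          rw [Finsupp.single_le_iff]; exact hi
        have hsplit : m = Finsupp.single i (K + 1) + (m - Finsupp.single i (K + 1)) := (add_tsub_cancel_of_le hle).symm
        set m' := m - Finsupp.single i (K + 1)
        have hdeg : m.degree = K + 1 + m'.degree := by
          conv_lhs => rw [hsplit]
          simp
        have hX : (monomial m (1 : ℂ)) = X i ^ (K + 1) * monomial m' 1 := by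
          rw [X_pow_eq_monomial, monomial_mul, ← hsplit, one_mul]
        rw [hX, map_mul, hH2, map_sum, Finset.sum_mul]
        refine Submodule.sum_mem _ fun j _ => ?_
        rw [map_mul, mul_assoc, ← map_mul]
        refine hL j _ (ih (d - 1) (by omega) _ ?_)
        refine (totalDegree_mul _ _).trans ?_
        have h4 : (monomial m' (1 : ℂ)).totalDegree ≤ m'.sum fun _ e => e := totalDegree_monomial_le m' (1 : ℂ)
        have h5 := hH1 j
        have h6 : (m'.sum fun _ e => e) = m'.degree := by simp [Finsupp.degree_eq_sum, Finsupp.sum_fintype]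
        omega
    intro f hf
    rw [f.as_sum, map_sum]
    refine Submodule.sum_mem _ fun m hm => ?_
    have : monomial m (coeff m f) = C (coeff m f) * monomial m 1 := by simp [C_mul_monomial]
    rw [this, map_mul]
    refine hC _ _ (hmon m ?_)
    have h7 := le_totalDegree hm
    have h6 : (m.sum fun _ e => e) = m.degree := by simp [Finsupp.degree_eq_sum, Finsupp.sum_fintype]
    omega
  refine ⟨⟨B.image (fun m => π (monomial m 1)), ?_⟩⟩
  rw [Finset.coe_image, eq_top_iff]
  intro x _
  obtain ⟨f, rfl⟩ := hπ x
  exact key _ f le_rfl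

lemma INT {n r : ℕ} {Y : Set (PrV n)} (hne : Y.Nonempty) (u : (Fin n → ℂ) →ₗ[ℂ] (Fin r → ℂ))
    (hu : ∀ v ∈ coneOf Y, u v = 0 → v = 0) :
    ((Ideal.Quotient.mk (idealOf Y)).comp (linSub u).toRingHom).Finite := by
  obtain ⟨K, hK⟩ := INT_pow hne u hu
  refine INT_core (K := K) _ Ideal.Quotient.mk_surjective u fun i => ?_
  obtain ⟨H, h1, h2⟩ := hK i
  exact ⟨H, h1, Ideal.Quotient.eq.2 h2⟩

lemma normal_at {P A E : Type} [CommRing P] [IsDomain P] [IsIntegrallyClosed P] [CommRing A] [IsDomain A]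
    [Algebra P A] [Module.Finite P A] (hinj : Function.Injective (algebraMap P A))
    (q : Ideal A) [q.IsPrime] [Algebra.IsUnramifiedAt P q] [Field E] [CharZero E] [Algebra A E] [Algebra P E]
    [IsScalarTower P A E] [IsFractionRing A E] (t : E) (ht : IsIntegral P t) :
    ∃ s ∉ q, ∃ c : A, algebraMap A E s * t = algebraMap A E c := by
  obtain ⟨f, hf, S, φ, hφ⟩ := Algebra.IsUnramifiedAt.exists_hasStandardEtaleSurjectionOn (R := P) q
  have hf0 : f ≠ 0 := fun h => hf (h ▸ q.zero_mem)
  have hAE : Function.Injective (algebraMap A E) := IsFractionRing.injective A E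
  have hPE : Function.Injective (algebraMap P E) := by
    rw [IsScalarTower.algebraMap_eq P A E]; exact hAE.comp hinj
  have : FaithfulSMul P E := (faithfulSMul_iff_algebraMap_injective P E).2 hPE
  have hfu : IsUnit (algebraMap A E f) := by
    rw [isUnit_iff_ne_zero]; exact fun h => hf0 (hAE (by simpa using h))
  let ψ0 : Localization.Away f →+* E := IsLocalization.Away.lift f hfu
  have hψ0 : ∀ x : A, ψ0 (algebraMap A _ x) = algebraMap A E x := fun x => IsLocalization.Away.lift_eq f hfu x
  have hcomm : ∀ r : P, ψ0 (algebraMap P (Localization.Away f) r) = algebraMap P E r := by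
    intro r
    rw [IsScalarTower.algebraMap_apply P A (Localization.Away f), hψ0, ← IsScalarTower.algebraMap_apply]
  let ψ : Localization.Away f →ₐ[P] E := { ψ0 with commutes' := hcomm }
  have hψ : ∀ x : A, ψ (algebraMap A _ x) = algebraMap A E x := hψ0
  have hψinj : Function.Injective ψ := by
    rw [injective_iff_map_eq_zero]
    intro y hy
    obtain ⟨n, c, hc⟩ := IsLocalization.Away.surj f y
    have h1 := congrArg ψ hc
    rw [map_mul, hy, zero_mul, hψ] at h1
    have hc0 : c = 0 := hAE (by simpa using h1.symm)
    rw [hc0, map_zero] at hc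
    have hu : IsUnit ((algebraMap A (Localization.Away f)) f ^ n) := (IsLocalization.Away.algebraMap_isUnit f).pow n
    exact (hu.mul_left_eq_zero).1 hc
  let K := FractionRing P
  let _ : Algebra K E := FractionRing.liftAlgebra P E
  have : IsScalarTower P K E := FractionRing.isScalarTower_liftAlgebra P E
  set a' := φ S.X with ha'
  set a := ψ a' with ha
  have hm : S.HasMap a' := S.hasMap_X.map φ
  have hai : IsIntegral P a := ⟨S.f, S.monic_f, by
    have := (hm.map ψ).1; rwa [Polynomial.aeval_def] at this⟩
  have haK : IsIntegral K a := hai.tower_top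
  -- E = K(a)
  have htop : IntermediateField.adjoin K {a} = ⊤ := by
    let F := IntermediateField.adjoin K {a}
    let a1 : F := ⟨a, IntermediateField.mem_adjoin_simple_self K a⟩
    let val : F →ₐ[P] E := F.val.restrictScalars P
    have hval : Function.Injective val := F.val.injective
    have hm1 : S.HasMap a1 := by
      constructor
      · apply hval
        rw [← Polynomial.aeval_algHom_apply, map_zero]
        exact (hm.map ψ).1
      · rw [isUnit_iff_ne_zero]
        intro h
        have h2 := congrArg val h
        rw [← Polynomial.aeval_algHom_apply, map_zero] at h2
        exact (hm.map ψ).2.ne_zero h2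
    have hcomp : val.comp (S.lift a1 hm1) = ψ.comp φ := by
      apply StandardEtalePair.hom_ext
      simp only [AlgHom.comp_apply, StandardEtalePair.lift_X]
      rfl
    have hmem : ∀ x : A, algebraMap A E x ∈ F := by
      intro x
      obtain ⟨z, hz⟩ := hφ (algebraMap A _ x)
      rw [← hψ, ← hz]
      have := DFunLike.congr_fun hcomp z
      simp only [AlgHom.comp_apply] at this
      rw [← this]; exact (S.lift a1 hm1 z).2
    rw [eq_top_iff]
    intro e _
    obtain ⟨x, y, hy, rfl⟩ := IsFractionRing.div_surjective (A := A) e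
    exact F.div_mem (hmem x) (hmem y)
  set F0 := minpoly P a with hF0
  have hF0a : Polynomial.aeval a' F0 = 0 := by
    apply hψinj
    rw [← Polynomial.aeval_algHom_apply, map_zero]; exact minpoly.aeval P a
  have hdvd : F0 ∣ S.f := minpoly.isIntegrallyClosed_dvd hai (hm.map ψ).1
  have hunit : IsUnit (Polynomial.aeval a' (Polynomial.derivative F0)) := by
    obtain ⟨H, hH⟩ := hdvd
    obtain ⟨p1, p2, n, hn⟩ := S.cond
    have h1 := congrArg (Polynomial.aeval a') hn
    rw [hH] at h1
    simp only [Polynomial.derivative_mul, map_add, map_mul, hF0a, zero_mul, add_zero, map_pow] at h1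
    have h2 := hm.2.pow n
    rw [← h1, mul_assoc] at h2
    exact isUnit_of_mul_isUnit_left h2
  have hmin : minpoly K a = F0.map (algebraMap P K) := minpoly.isIntegrallyClosed_eq_field_fractions' K hai
  obtain ⟨g, hg, hgi⟩ := exists_derivative_mul_eq_and_isIntegral_coeff (R := P)
    (φ := (Polynomial.aeval (R := K) a).restrictScalars P) (f := minpoly K a) (y := t)
    (by
      intro e
      have h1 : e ∈ IntermediateField.adjoin K {a} := htop ▸ IntermediateField.mem_top
      have h2 : e ∈ (IntermediateField.adjoin K {a}).toSubalgebra := h1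
      rw [IntermediateField.adjoin_simple_toSubalgebra_of_isAlgebraic haK.isAlgebraic,
        Algebra.adjoin_singleton_eq_range_aeval] at h2
      exact h2)
    (minpoly.monic haK) (by
      intro i; rw [hmin, Polynomial.coeff_map]; exact isIntegral_algebraMap)
    (minpoly.ker_aeval_eq_span_minpoly K a) ht
  choose r hr using fun i => IsIntegrallyClosed.isIntegral_iff.1 (hgi i)
  have hgl : ∃ g0 : Polynomial P, g0.map (algebraMap P K) = g := by
    have : g ∈ Polynomial.lifts (algebraMap P K) := by
      rw [Polynomial.lifts_iff_coeff_lifts]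
      exact fun n => ⟨r n, hr n⟩
    exact (Polynomial.mem_lifts g).1 this
  obtain ⟨g0, rfl⟩ := hgl
  simp only [AlgHom.restrictScalars_apply, hmin, Polynomial.derivative_map, Polynomial.aeval_map_algebraMap] at hg
  rw [show ∀ p : Polynomial P, Polynomial.aeval a p = ψ (Polynomial.aeval a' p) from
    fun p => Polynomial.aeval_algHom_apply ψ a' p,
    show ∀ p : Polynomial P, Polynomial.aeval a p = ψ (Polynomial.aeval a' p) from
    fun p => Polynomial.aeval_algHom_apply ψ a' p] at hg
  obtain ⟨u, hu⟩ := hunit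
  have ht' : t = ψ ((↑u⁻¹ : Localization.Away f) * Polynomial.aeval a' g0) := by
    rw [map_mul, ← hg, ← mul_assoc, ← map_mul, ← hu]; simp
  obtain ⟨n, c, hc⟩ := IsLocalization.Away.surj f ((↑u⁻¹ : Localization.Away f) * Polynomial.aeval a' g0)
  refine ⟨f ^ n, fun h => hf (Ideal.IsPrime.mem_of_pow_mem inferInstance n h), c, ?_⟩
  rw [← hψ c, ← hc, map_mul, ← ht', map_pow, map_pow, hψ, mul_comm]

open IsLocalRing in
lemma unram_of {P A : Type} [CommRing P] [CommRing A] [Algebra ℂ P] [Algebra P A] [Module.Finite P A]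
    [IsNoetherianRing A] (q : Ideal A) [q.IsPrime] (h : q ≤ (q.under P).map (algebraMap P A) ⊔ q ^ 2) :
    Algebra.IsUnramifiedAt P q := by
  let _ : Algebra (Localization.AtPrime (q.under P)) (Localization.AtPrime q) :=
    Localization.AtPrime.algebraOfLiesOver (q.under P) q
  have hL : Localization.AtPrime.IsLiesOverAlgebra (q.under P) q := inferInstance
  rw [Algebra.isUnramifiedAt_iff_map_eq P (q.under P) q]
  have hmax : maximalIdeal (Localization.AtPrime q) = q.map (algebraMap A _) :=
    Localization.AtPrime.map_eq_maximalIdeal.symm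
  constructor
  · have : CharZero (q.under P).ResidueField := by
      let _ : Algebra ℚ (q.under P).ResidueField :=
        (((algebraMap P (q.under P).ResidueField).comp (algebraMap ℂ P)).comp (algebraMap ℚ ℂ)).toAlgebra
      exact algebraRat.charZero _
    have : Algebra.IsAlgebraic (q.under P).ResidueField q.ResidueField := inferInstance
    infer_instance
  · apply le_antisymm
    · rw [hmax, IsScalarTower.algebraMap_eq P A, ← Ideal.map_map]
      exact Ideal.map_mono Ideal.map_comap_le
    · have hN : IsNoetherianRing (Localization.AtPrime q) := IsLocalization.isNoetherianRing q.primeCompl _ inferInstance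
      refine Submodule.le_of_le_smul_of_le_jacobson_bot (I := maximalIdeal (Localization.AtPrime q)) (IsNoetherian.noetherian _)
        (IsLocalRing.maximalIdeal_le_jacobson _) ?_
      have := Ideal.map_mono (f := algebraMap A (Localization.AtPrime q)) h
      rw [Ideal.map_sup, Ideal.map_pow, Ideal.map_map, ← IsScalarTower.algebraMap_eq, ← hmax] at this
      rwa [smul_eq_mul, ← pow_two]
lemma exists_pt {B : Type} [CommRing B] [IsDomain B] [Algebra ℂ B] [Algebra.FiniteType ℂ B] (b : B) (hb : b ≠ 0) :
    ∃ χ : B →ₐ[ℂ] ℂ, χ b ≠ 0 := by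
  have hJ : IsJacobsonRing B := isJacobsonRing_of_finiteType (A := ℂ)
  have h1 : (⊥ : Ideal B).jacobson = ⊥ := hJ.out (Ideal.IsPrime.isRadical Ideal.isPrime_bot)
  have h2 : b ∉ (⊥ : Ideal B).jacobson := by rw [h1]; simpa using hb
  rw [Ideal.jacobson, Ideal.mem_sInf] at h2
  push Not at h2
  obtain ⟨M, ⟨-, hM⟩, hbM⟩ := h2
  let _ : Field (B ⧸ M) := Ideal.Quotient.field M
  have : Module.Finite ℂ (B ⧸ M) := finite_of_finite_type_of_isJacobsonRing ℂ (B ⧸ M)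
  have hbij := IsAlgClosed.algebraMap_bijective_of_isIntegral (k := ℂ) (K := B ⧸ M)
  let e : ℂ ≃ₐ[ℂ] (B ⧸ M) := AlgEquiv.ofBijective (Algebra.ofId ℂ (B ⧸ M)) hbij
  refine ⟨e.symm.toAlgHom.comp (Ideal.Quotient.mkₐ ℂ M), ?_⟩
  intro h
  apply hbM
  have : e.symm (Ideal.Quotient.mk M b) = 0 := h
  rw [map_eq_zero_iff _ e.symm.injective] at this
  exact Ideal.Quotient.eq_zero_iff_mem.1 this

lemma birat {A C : Type} [CommRing A] [CommRing C] [IsDomain A] [IsDomain C] [Algebra ℂ A] [Algebra ℂ C]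
    [Algebra A C] [IsScalarTower ℂ A C] [Module.Finite A C] [Algebra.FiniteType ℂ C]
    (hinj : Function.Injective (algebraMap A C))
    (huniq : ∀ χ χ' : C →ₐ[ℂ] ℂ, (∀ a : A, χ (algebraMap A C a) = χ' (algebraMap A C a)) → χ = χ') (t : C) :
    ∃ s : A, s ≠ 0 ∧ ∃ c, algebraMap A C s * t = algebraMap A C c := by
  let E := FractionRing C
  let K := FractionRing A
  have hCE : Function.Injective (algebraMap C E) := IsFractionRing.injective C E
  have hAE : Function.Injective (algebraMap A E) := by
    rw [IsScalarTower.algebraMap_eq A C E]; exact hCE.comp hinj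
  have : FaithfulSMul A E := (faithfulSMul_iff_algebraMap_injective A E).2 hAE
  let _ : Algebra K E := FractionRing.liftAlgebra A E
  have : IsScalarTower A K E := FractionRing.isScalarTower_liftAlgebra A E
  have halgC : ∀ c : C, IsIntegral K (algebraMap C E c) := fun c =>
    ((Algebra.IsIntegral.isIntegral (R := A) c).map (IsScalarTower.toAlgHom A C E)).tower_top
  have : Algebra.IsAlgebraic K E := by
    constructor
    intro e
    obtain ⟨x, y, hy, rfl⟩ := IsFractionRing.div_surjective (A := C) e
    rw [div_eq_mul_inv]
    exact (halgC x).isAlgebraic.mul (halgC y).isAlgebraic.inv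
  have : CharZero K := by
    let _ : Algebra ℚ K := ((algebraMap ℂ K).comp (algebraMap ℚ ℂ)).toAlgebra
    exact algebraRat.charZero _
  have hmem : algebraMap C E t ∈ (algebraMap K E).range := by
    rw [← minpoly.natDegree_eq_one_iff]
    let Ω := AlgebraicClosure E
    have hsep : (minpoly K (algebraMap C E t)).Separable := (minpoly.irreducible (halgC t)).separable
    have hcard := Polynomial.card_rootSet_eq_natDegree (K := Ω) hsep (IsAlgClosed.splits _)
    rw [← hcard]
    have hsub : (minpoly K (algebraMap C E t)).rootSet Ω = {algebraMap C Ω t} := by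
      ext y
      rw [Polynomial.mem_rootSet, Set.mem_singleton_iff]
      constructor
      · rintro ⟨-, hy⟩
        obtain ⟨σ, hσ⟩ := IntermediateField.exists_algHom_of_splits_of_aeval (F := K) (E := E) (K := Ω)
          (fun x => ⟨Algebra.IsIntegral.isIntegral x, IsAlgClosed.splits _⟩) hy
        by_contra hne
        let i1 : C →ₐ[ℂ] Ω := IsScalarTower.toAlgHom ℂ C Ω
        have hσA : ∀ a : A, σ (algebraMap C E (algebraMap A C a)) = i1 (algebraMap A C a) := by
          intro a
          rw [← IsScalarTower.algebraMap_apply A C E, IsScalarTower.algebraMap_apply A K E, σ.commutes]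
          show _ = algebraMap C Ω _
          rw [IsScalarTower.algebraMap_apply C E Ω, ← IsScalarTower.algebraMap_apply A C E,
            IsScalarTower.algebraMap_apply A K E, ← IsScalarTower.algebraMap_apply K E Ω]
        have hcomm : ∀ r : ℂ, σ.toRingHom.comp (algebraMap C E) (algebraMap ℂ C r) = algebraMap ℂ Ω r := by
          intro r
          rw [IsScalarTower.algebraMap_apply ℂ A C]
          refine (hσA _).trans ?_
          rw [← IsScalarTower.algebraMap_apply ℂ A C]
          exact i1.commutes r
        let i2 : C →ₐ[ℂ] Ω := { σ.toRingHom.comp (algebraMap C E) with commutes' := hcomm }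
        have hi2 : i2 t = y := hσ
        let B : Subalgebra ℂ Ω := i1.range ⊔ i2.range
        have hft : Algebra.FiniteType ℂ B := by
          rw [← Subalgebra.fg_iff_finiteType]
          refine Subalgebra.FG.sup ?_ ?_
          · rw [← Algebra.map_top]; exact Subalgebra.FG.map _ Algebra.FiniteType.out
          · rw [← Algebra.map_top]; exact Subalgebra.FG.map _ Algebra.FiniteType.out
        have h1 : ∀ c, i1 c ∈ B := fun c => (le_sup_left : i1.range ≤ B) ⟨c, rfl⟩
        have h2 : ∀ c, i2 c ∈ B := fun c => (le_sup_right : i2.range ≤ B) ⟨c, rfl⟩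
        let j1 : C →ₐ[ℂ] B := i1.codRestrict B h1
        let j2 : C →ₐ[ℂ] B := i2.codRestrict B h2
        have hj : j1 t - j2 t ≠ 0 := by
          intro h
          have := congrArg (fun z : B => (z : Ω)) (sub_eq_zero.1 h)
          have h3 : i1 t = i2 t := this
          rw [hi2] at h3
          exact hne h3.symm
        obtain ⟨χ, hχ⟩ := exists_pt _ hj
        have := huniq (χ.comp j1) (χ.comp j2) (fun a => by
          show χ (j1 _) = χ (j2 _)
          congr 1
          apply Subtype.ext
          exact (hσA a).symm)
        apply hχ
        rw [map_sub, sub_eq_zero]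
        exact DFunLike.congr_fun this t
      · rintro rfl
        refine ⟨minpoly.ne_zero (halgC t), ?_⟩
        rw [IsScalarTower.algebraMap_apply C E Ω, Polynomial.aeval_algebraMap_apply, minpoly.aeval, map_zero]
    simp only [← Nat.card_eq_fintype_card, hsub]
    simp
  obtain ⟨k, hk⟩ := hmem
  obtain ⟨x, y, hy, rfl⟩ := IsFractionRing.div_surjective (A := A) k
  refine ⟨y, nonZeroDivisors.ne_zero hy, x, ?_⟩
  apply hCE
  rw [map_mul, ← hk, ← IsScalarTower.algebraMap_apply, ← IsScalarTower.algebraMap_apply, map_div₀,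
    ← IsScalarTower.algebraMap_apply, ← IsScalarTower.algebraMap_apply]
  have : algebraMap A E y ≠ 0 := fun h => nonZeroDivisors.ne_zero hy (hAE (by simpa using h))
  rw [mul_comm]; exact div_mul_cancel₀ _ this

lemma combo {P A C : Type} [CommRing P] [IsDomain P] [IsIntegrallyClosed P] [CommRing A] [CommRing C] [IsDomain A] [IsDomain C]
    [Algebra ℂ P] [Algebra ℂ A] [Algebra ℂ C] [IsNoetherianRing A] [Algebra.FiniteType ℂ C]
    (φ : P →ₐ[ℂ] A) (ψ : A →ₐ[ℂ] C) (hφ : φ.toRingHom.Finite) (hψ : ψ.toRingHom.Finite)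
    (hφi : Function.Injective φ) (hψi : Function.Injective ψ)
    (huniq : ∀ χ χ' : C →ₐ[ℂ] ℂ, (∀ a : A, χ (ψ a) = χ' (ψ a)) → χ = χ')
    (q : Ideal A) (hq : q.IsPrime) (h : q ≤ (q.comap φ.toRingHom).map φ.toRingHom ⊔ q ^ 2) (t : C) :
    ∃ s ∉ q, ∃ c, ψ s * t = ψ c := by
  let _ : Algebra P A := φ.toRingHom.toAlgebra
  let _ : Algebra A C := ψ.toRingHom.toAlgebra
  have : IsScalarTower ℂ A C := IsScalarTower.of_algebraMap_eq fun r => (ψ.commutes r).symm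
  have : Module.Finite P A := hφ
  have : Module.Finite A C := hψ
  obtain ⟨s0, hs0, c0, h0⟩ := birat hψi huniq t
  have hu : Algebra.IsUnramifiedAt P q := unram_of q h
  let E0 := FractionRing A
  let E := FractionRing C
  have hCE : Function.Injective (algebraMap C E) := IsFractionRing.injective C E
  have hAE0 : Function.Injective (algebraMap A E0) := IsFractionRing.injective A E0
  have hAE : Function.Injective ((algebraMap C E).comp (algebraMap A C)) := hCE.comp hψi
  let j : E0 →+* E := IsFractionRing.lift hAE
  have hj : ∀ a : A, j (algebraMap A E0 a) = algebraMap C E (ψ a) := fun a => IsFractionRing.lift_algebraMap hAE a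
  have hji : Function.Injective j := j.injective
  have hs0' : algebraMap A E0 s0 ≠ 0 := fun hh => hs0 (hAE0 (by simpa using hh))
  have hjs : j (algebraMap A E0 s0) ≠ 0 := fun hh => hs0' (hji (by simpa using hh))
  set t0 : E0 := algebraMap A E0 c0 / algebraMap A E0 s0 with ht0
  have hjt : j t0 = algebraMap C E t := by
    have h1 : algebraMap C E (ψ s0) * algebraMap C E t = algebraMap C E (ψ c0) := by
      rw [← map_mul]; exact congrArg _ h0
    rw [ht0, map_div₀, hj c0, ← h1, ← hj s0, mul_comm]
    exact mul_div_cancel_right₀ _ hjs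
  have hint : IsIntegral P t0 := by
    obtain ⟨p, hp, hpt⟩ := hφ.to_isIntegral.trans φ.toRingHom ψ.toRingHom hψ.to_isIntegral t
    refine ⟨p, hp, hji ?_⟩
    rw [Polynomial.hom_eval₂, hjt, map_zero]
    have h2 := congrArg (algebraMap C E) hpt
    rw [Polynomial.hom_eval₂, map_zero] at h2
    rw [← h2]
    congr 1
    ext r
    exact hj _
  have : CharZero E0 := by
    let _ : Algebra ℚ E0 := ((algebraMap ℂ E0).comp (algebraMap ℚ ℂ)).toAlgebra
    exact algebraRat.charZero _
  obtain ⟨s, hs, c, hsc⟩ := normal_at (P := P) hφi q t0 hint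
  refine ⟨s, hs, c, hCE ?_⟩
  rw [map_mul, ← hj, ← hjt, ← map_mul, hsc, hj]

structure Stp {n r : ℕ} (X : Set (PrV r)) (Y : Set (PrV n)) (L : (Fin n → ℂ) →ₗ[ℂ] (Fin r → ℂ)) : Prop where
  ker : ∀ v ∈ coneOf Y, L v = 0 → v = 0
  map : ∀ v ∈ coneOf Y, L v ∈ coneOf X
  lift : ∀ w ∈ coneOf X, ∃ v ∈ coneOf Y, L v = w
  inj : ∀ v ∈ coneOf Y, ∀ v' ∈ coneOf Y, L v = L v' → v = v'

lemma rep_PMk {n : ℕ} (v : Fin n → ℂ) (hv : v ≠ 0) : ∃ a : ℂ, a ≠ 0 ∧ (PMk v hv).rep = a • v := by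
  obtain ⟨a, ha⟩ := Projectivization.exists_smul_eq_mk_rep ℂ v hv
  exact ⟨a, a.ne_zero, ha.symm⟩

lemma PMk_rep {n : ℕ} (x : PrV n) : PMk x.rep x.rep_nonzero = x := Projectivization.mk_rep x

lemma rep_mem_coneOf {n : ℕ} {Y : Set (PrV n)} (hY : IsClosed Y) {x : PrV n} (hx : x ∈ Y) : x.rep ∈ coneOf Y := by
  rw [mem_coneOf hY x.rep_nonzero, PMk_rep]; exact hx

lemma mk_Stp {N : ℕ} {X : Set (Pr N)} {Y : Set (Pr (N+1))} (hX : IsClosed X) (hXn : X.Nonempty) (hY : IsClosed Y)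
    (hYn : Y.Nonempty) (L : (Fin (N+2) → ℂ) →ₗ[ℂ] (Fin (N+1) → ℂ)) (h1 : ∀ x ∈ Y, L x.rep ≠ 0)
    (h2 : X = {z | ∃ x ∈ Y, ∃ c : ℂ, c ≠ 0 ∧ z.rep = c • L x.rep})
    (h3 : ∀ x ∈ Y, ∀ y ∈ Y, (∃ c : ℂ, L x.rep = c • L y.rep) → x = y) : Stp X Y L := by
  have hcX := coneOf_isCone hXn
  have hcY := coneOf_isCone hYn
  have ker : ∀ v ∈ coneOf Y, L v = 0 → v = 0 := by
    intro v hv hL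
    by_contra hv0
    obtain ⟨a, ha, har⟩ := rep_PMk v hv0
    apply h1 _ ((mem_coneOf hY hv0).1 hv)
    rw [har, map_smul, hL, smul_zero]
  refine ⟨ker, ?_, ?_, ?_⟩
  · intro v hv
    by_cases hv0 : v = 0
    · rw [hv0, map_zero, ← map_zero L, ← zero_smul ℂ v]
      obtain ⟨x, hx⟩ := hXn
      simpa using hcX _ (rep_mem_coneOf hX hx) 0
    · have hL0 : L v ≠ 0 := fun h => hv0 (ker v hv h)
      rw [mem_coneOf hX hL0, h2]
      obtain ⟨a, ha, har⟩ := rep_PMk v hv0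
      obtain ⟨b, hb, hbr⟩ := rep_PMk (L v) hL0
      refine ⟨PMk v hv0, (mem_coneOf hY hv0).1 hv, b * a⁻¹, mul_ne_zero hb (inv_ne_zero ha), ?_⟩
      rw [har, hbr, map_smul, smul_smul, mul_assoc, inv_mul_cancel₀ ha, mul_one]
  · intro w hw
    by_cases hw0 : w = 0
    · obtain ⟨x, hx⟩ := hYn
      exact ⟨0, by simpa using hcY _ (rep_mem_coneOf hY hx) 0, by rw [hw0, map_zero]⟩
    · have := (mem_coneOf hX hw0).1 hw
      rw [h2] at this
      obtain ⟨x, hx, c, hc, hr⟩ := this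
      obtain ⟨a, ha, har⟩ := rep_PMk w hw0
      refine ⟨(a⁻¹ * c) • x.rep, hcY _ (rep_mem_coneOf hY hx) _, ?_⟩
      rw [map_smul, mul_smul, ← hr, har, smul_smul, inv_mul_cancel₀ ha, one_smul]
  · intro v hv v' hv' hL
    by_cases hv0 : v = 0
    · rw [hv0, map_zero] at hL
      rw [hv0, ker v' hv' hL.symm]
    · have hL0 : L v ≠ 0 := fun h => hv0 (ker v hv h)
      have hv0' : v' ≠ 0 := by
        rintro rfl
        exact hL0 (by rw [hL, map_zero])
      obtain ⟨a, ha, har⟩ := rep_PMk v hv0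
      obtain ⟨b, hb, hbr⟩ := rep_PMk v' hv0'
      have := h3 _ ((mem_coneOf hY hv0).1 hv) _ ((mem_coneOf hY hv0').1 hv') ⟨a * b⁻¹, by
        rw [har, hbr, map_smul, map_smul, smul_smul, mul_assoc, inv_mul_cancel₀ hb, mul_one, hL]⟩
      rw [Projectivization.mk_eq_mk_iff'] at this
      obtain ⟨c, hc⟩ := this
      have h4 : L v = c • L v := by
        conv_lhs => rw [← hc, map_smul, ← hL]
      have h5 : (1 - c) • L v = 0 := by rw [sub_smul, one_smul, ← h4, sub_self]
      rcases smul_eq_zero.1 h5 with h6 | h6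
      · rw [← hc, ← sub_eq_zero.1 h6, one_smul]
      · exact absurd h6 hL0

lemma Stp.comap {n r : ℕ} {X : Set (PrV r)} {Y : Set (PrV n)} {L : (Fin n → ℂ) →ₗ[ℂ] (Fin r → ℂ)}
    (h : Stp X Y L) : (idealOf Y).comap (linSub L).toRingHom = idealOf X := by
  ext f
  rw [Ideal.mem_comap, mem_idealOf_cone, mem_idealOf_cone]
  constructor
  · intro hf w hw
    obtain ⟨v, hv, rfl⟩ := h.lift w hw
    rw [← eval_linSub]; exact hf v hv
  · intro hf v hv
    exact (eval_linSub L f v).trans (hf _ (h.map v hv))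

lemma Stp.DG {n r e : ℕ} {X : Set (PrV r)} {Y : Set (PrV n)} {L : (Fin n → ℂ) →ₗ[ℂ] (Fin r → ℂ)}
    (h : Stp X Y L) (hY : IsIrreducible Y) (hX : DG (idealOf X) e) : DG (idealOf Y) e := by
  have := idealOf_prime hY
  refine DG_up (linSub L).toRingHom (idealOf Y) (INT hY.1 L h.ker).to_isIntegral ?_
  rwa [h.comap]

lemma jacLin_linP {n : ℕ} (φ : (Fin n → ℂ) →ₗ[ℂ] ℂ) (v p : Fin n → ℂ) : jacLin (linP φ) v p = φ p := by
  rw [← eval_linP φ p]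
  simp [jacLin_apply, linP, Pi.single_apply, apply_ite]

lemma jacLin_linSub {n r : ℕ} (u : (Fin n → ℂ) →ₗ[ℂ] (Fin r → ℂ)) (f : Rg (Fin r)) (v p : Fin n → ℂ) :
    jacLin (linSub u f) v p = jacLin f (u v) (u p) := by
  induction f using MvPolynomial.induction_on with
  | C a => simp [linSub, jacLin_C, algebraMap_eq]
  | add f g hf hg => rw [map_add, jacLin_add, jacLin_add, hf, hg]
  | mul_X f i hf =>
    have hX : linSub u (X i) = linP ((LinearMap.proj i).comp u) := by simp [linSub]
    rw [map_mul, jacLin_mul, jacLin_mul, hf, eval_linSub, eval_linSub, jacLin_X, hX, jacLin_linP]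
    rfl

lemma LemN {n r m : ℕ} {X : Set (PrV r)} {Y : Set (PrV n)} {L : (Fin n → ℂ) →ₗ[ℂ] (Fin r → ℂ)}
    (h : Stp X Y L) (hXc : IsClosed X) (hX : IsIrreducible X) (hY : IsIrreducible Y) (hm : pdim X = (m : WithBot ℕ∞))
    {x : Fin n → ℂ} (hx : x ∈ coneOf Y) (hsm : Module.finrank ℂ (affTangent X (L x)) = m + 1)
    {Q : Fin n → ℂ} (hQ : L Q = 0) (hQT : Q ∈ affTangent Y x) : Q = 0 := by
  by_contra hQ0
  have hpX := idealOf_prime hX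
  have hpY := idealOf_prime hY
  have hDX : DG (idealOf X) (m + 1) := coneDG hX (coneOf_isVar hXc hX hm.ge)
  obtain ⟨u, hu1, hu2⟩ := AVOID' (d := m + 1) hXc (by rw [hm]; exact_mod_cast Nat.lt_succ_self m) (affTangent X (L x)) hsm.le
  have hu : ∀ v ∈ coneOf X, u v = 0 → v = 0 := by
    intro v hv huv
    by_contra hv0
    exact hu1 v hv0 ((mem_coneOf hXc hv0).1 hv) huv
  set w := L x with hw
  have hwX : w ∈ coneOf X := h.map x hx
  have hIw : idealOf X ≤ ptI w := fun f hf => (mem_ptI w f).2 (hwX f hf)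
  let φ : Rg (Fin (m+1)) →ₐ[ℂ] (Rg (Fin r) ⧸ idealOf X) := (Ideal.Quotient.mkₐ ℂ (idealOf X)).comp (linSub u)
  let ψ : (Rg (Fin r) ⧸ idealOf X) →ₐ[ℂ] (Rg (Fin n) ⧸ idealOf Y) :=
    Ideal.quotientMapₐ (idealOf Y) (linSub L) (by rw [← h.comap]; exact le_rfl)
  have hψ : ∀ f, ψ (Ideal.Quotient.mk _ f) = Ideal.Quotient.mk _ (linSub L f) := fun f => rfl
  have hφf : φ.toRingHom.Finite := INT hX.1 u hu
  have hψf : ψ.toRingHom.Finite := by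
    have h1 := INT hY.1 L h.ker
    exact RingHom.Finite.of_comp_finite (f := Ideal.Quotient.mk (idealOf X)) h1
  have hφi : Function.Injective φ := by
    have h1 := DG_full (DG_down (linSub u).toRingHom (idealOf X) hφf.to_isIntegral hDX)
    rw [injective_iff_map_eq_zero]
    intro f hf
    have h2 : f ∈ (idealOf X).comap (linSub u).toRingHom := by
      have h3 : Ideal.Quotient.mk (idealOf X) (linSub u f) = 0 := hf
      have h4 : linSub u f ∈ idealOf X := Ideal.Quotient.eq_zero_iff_mem.1 h3
      exact h4
    rw [h1] at h2; exact h2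
  have hψi : Function.Injective ψ := by
    rw [injective_iff_map_eq_zero]
    intro f
    obtain ⟨f, rfl⟩ := Ideal.Quotient.mk_surjective f
    intro hf
    rw [hψ, Ideal.Quotient.eq_zero_iff_mem] at hf
    rw [Ideal.Quotient.eq_zero_iff_mem, ← h.comap]
    exact hf
  -- points
  have hpt : ∀ χ : (Rg (Fin n) ⧸ idealOf Y) →ₐ[ℂ] ℂ, ∃ v ∈ coneOf Y, ∀ f, χ (Ideal.Quotient.mk _ f) = eval v f := by
    intro χ
    have key : ∀ f, χ (Ideal.Quotient.mk _ f) = eval (fun i => χ (Ideal.Quotient.mk _ (MvPolynomial.X i))) f := by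
      intro f
      have : χ.comp (Ideal.Quotient.mkₐ ℂ (idealOf Y)) = aeval (fun i => χ (Ideal.Quotient.mk _ (MvPolynomial.X i))) := by
        ext i; simp
      exact DFunLike.congr_fun this f
    refine ⟨_, ?_, key⟩
    intro f hf
    refine (key f).symm.trans ?_
    rw [Ideal.Quotient.eq_zero_iff_mem.2 hf, map_zero]
  have huniq : ∀ χ χ' : (Rg (Fin n) ⧸ idealOf Y) →ₐ[ℂ] ℂ, (∀ a, χ (ψ a) = χ' (ψ a)) → χ = χ' := by
    intro χ χ' hh
    obtain ⟨v, hv, hv1⟩ := hpt χ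
    obtain ⟨v', hv', hv1'⟩ := hpt χ'
    have hL : L v = L v' := by
      funext i
      have := hh (Ideal.Quotient.mk _ (MvPolynomial.X i))
      rw [hψ, hv1, hv1', eval_linSub, eval_linSub, eval_X, eval_X] at this
      exact this
    have hvv := h.inj v hv v' hv' hL
    apply AlgHom.ext
    intro f
    obtain ⟨f, rfl⟩ := Ideal.Quotient.mk_surjective f
    rw [hv1, hv1', hvv]
  let q : Ideal (Rg (Fin r) ⧸ idealOf X) := (ptI w).map (Ideal.Quotient.mk (idealOf X))
  have hqm : ∀ f, Ideal.Quotient.mk (idealOf X) f ∈ q ↔ eval w f = 0 := by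
    intro f
    rw [Ideal.mem_map_iff_of_surjective _ Ideal.Quotient.mk_surjective]
    constructor
    · rintro ⟨g, hg, hgf⟩
      have := hIw (Ideal.Quotient.eq.1 hgf)
      rw [mem_ptI] at this hg
      rw [map_sub, hg, zero_sub, neg_eq_zero] at this
      exact this
    · intro hf; exact ⟨f, (mem_ptI w f).2 hf, rfl⟩
  have hq : q.IsPrime := by
    constructor
    · rw [Ideal.ne_top_iff_one, ← map_one (Ideal.Quotient.mk (idealOf X)), hqm]; simp
    · intro a b
      obtain ⟨a, rfl⟩ := Ideal.Quotient.mk_surjective a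
      obtain ⟨b, rfl⟩ := Ideal.Quotient.mk_surjective b
      rw [← map_mul, hqm, hqm, hqm, map_mul, mul_eq_zero]
      exact id
  have hq2 : q ≤ (q.comap φ.toRingHom).map φ.toRingHom ⊔ q ^ 2 := by
    have h1 := TAN w (idealOf X) hIw u (fun p hp hup => hu2 p (mem_affTangent.2 hp) hup)
    have h2 := Ideal.map_mono (f := Ideal.Quotient.mk (idealOf X)) h1
    refine h2.trans ?_
    rw [Ideal.map_sup, Ideal.map_sup, Ideal.map_pow, Ideal.map_quotient_self, bot_sup_eq, Ideal.map_span]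
    refine sup_le_sup ?_ le_rfl
    rw [Ideal.span_le]
    rintro _ ⟨_, ⟨i, rfl⟩, rfl⟩
    have h3 : Ideal.Quotient.mk (idealOf X) (affF w ((LinearMap.proj i).comp u)) = φ.toRingHom (MvPolynomial.X i - C (u w i)) := by
      show _ = Ideal.Quotient.mk (idealOf X) (linSub u (MvPolynomial.X i - C (u w i)))
      congr 1
      simp [affF, linSub, algebraMap_eq]
    rw [h3]
    apply Ideal.mem_map_of_mem
    rw [Ideal.mem_comap, ← h3, hqm, ← mem_ptI]
    exact affF_mem _ _
  obtain ⟨τ, hτ⟩ : ∃ τ : (Fin n → ℂ) →ₗ[ℂ] ℂ, τ Q ≠ 0 := by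
    obtain ⟨i, hi⟩ := Function.ne_iff.1 hQ0
    exact ⟨LinearMap.proj i, hi⟩
  obtain ⟨s, hs, c, hsc⟩ := combo φ ψ hφf hψf hφi hψi huniq q hq hq2 (Ideal.Quotient.mk _ (linP τ))
  obtain ⟨s, rfl⟩ := Ideal.Quotient.mk_surjective s
  obtain ⟨c, rfl⟩ := Ideal.Quotient.mk_surjective c
  rw [hψ, hψ, ← map_mul, Ideal.Quotient.eq] at hsc
  have := mem_affTangent.1 hQT _ hsc
  rw [sub_eq_add_neg, ← neg_one_mul, ← C_1, ← C_neg, jacLin_add, jacLin_mul, jacLin_mul, jacLin_linSub, jacLin_linSub, jacLin_linP, eval_linSub, hQ,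
    jacLin_C, map_zero, map_zero, ← hw] at this
  simp only [zero_mul, mul_zero, add_zero, zero_add, mul_eq_zero] at this
  rw [hqm] at hs
  exact this.elim hs hτ

lemma LemN_rank {n r m : ℕ} {X : Set (PrV r)} {Y : Set (PrV n)} {L : (Fin n → ℂ) →ₗ[ℂ] (Fin r → ℂ)}
    (h : Stp X Y L) (hXc : IsClosed X) (hX : IsIrreducible X) (hY : IsIrreducible Y) (hm : pdim X = (m : WithBot ℕ∞))
    {x : Fin n → ℂ} (hx : x ∈ coneOf Y) (hsm : Module.finrank ℂ (affTangent X (L x)) = m + 1) :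
    Module.finrank ℂ (affTangent Y x) ≤ m + 1 := by
  have hmap : ∀ p ∈ affTangent Y x, L p ∈ affTangent X (L x) := by
    intro p hp
    rw [mem_affTangent] at hp ⊢
    intro g hg
    rw [← jacLin_linSub]
    apply hp
    rw [← h.comap] at hg
    exact hg
  rw [← hsm]
  refine LinearMap.finrank_le_finrank_of_injective (f := L.restrict hmap) ?_
  rw [← LinearMap.ker_eq_bot, LinearMap.ker_eq_bot']
  intro p hp
  apply Subtype.ext
  have : L p = 0 := congrArg Subtype.val hp
  exact LemN h hXc hX hY hm hx hsm this p.2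

lemma full_smooth {r : ℕ} {X : Set (PrV r)} (hX : IsIrreducible X) (h : DG (idealOf X) r) (v : Fin r → ℂ) :
    Module.finrank ℂ (affTangent X v) = r := by
  have hb := DG_full h
  have : affTangent X v = ⊤ := by
    rw [eq_top_iff]
    intro p _
    rw [mem_affTangent]
    intro g hg
    rw [hb] at hg
    rw [show g = C 0 by simpa using hg, jacLin_C]
  rw [this, finrank_top]; simp

lemma setupM {N m b : ℕ} {X : Set (Pr N)} (hcl : IsClosed X) (hirr : IsIrreducible X)
    (hdim : pdim X = ((m : ℕ∞) : WithBot ℕ∞)) (hb_smooth : IsSmoothSet X → b = 0)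
    (hb_sing : ¬ IsSmoothSet X → pdim (singLocus X) = ((b : ℕ∞) : WithBot ℕ∞)) (hbig : 2 * N + b < 3 * m + 1) :
    ∃ β, 2 * N + β ≤ 3 * m + 1 ∧ N + β ≤ 2 * m ∧ ∃ M : (Fin (N+1) → ℂ) →ₗ[ℂ] (Fin β → ℂ),
      ∀ w ∈ coneOf X, w ≠ 0 → M w = 0 → Module.finrank ℂ (affTangent X w) = m + 1 := by
  have hdim' : pdim X = (m : WithBot ℕ∞) := hdim
  have hV : IsVar (coneOf X) (m + 1) := coneOf_isVar hcl hirr hdim'.ge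
  have hmN : m + 1 ≤ N + 1 := hV.le_card
  by_cases hs : IsSmoothSet X
  · have hb := hb_smooth hs
    refine ⟨0, by omega, by omega, 0, ?_⟩
    intro w hw hw0 _
    have := (smooth_iff hdim' _).1 (hs _ ((mem_coneOf hcl hw0).1 hw))
    obtain ⟨a, ha, har⟩ := rep_PMk w hw0
    rwa [har, affTangent_smul X ha] at this
  · have hb : pdim (singLocus X) = (b : WithBot ℕ∞) := hb_sing hs
    have hlt : m < N := by
      by_contra hcon
      have hmN' : m = N := by omega
      subst hmN'
      apply hs
      intro x _
      rw [smooth_iff hdim']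
      exact full_smooth hirr (coneDG hirr hV) _
    obtain ⟨M, hM, -⟩ := AVOID' (d := b + 1) (sing_closed hcl hirr hdim') (by rw [hb]; exact_mod_cast Nat.lt_succ_self b)
      ⊥ (by simp)
    refine ⟨b + 1, by omega, by omega, M, ?_⟩
    intro w hw hw0 hMw
    have hwX := (mem_coneOf hcl hw0).1 hw
    have h1 : PMk w hw0 ∉ singLocus X := fun h => hM w hw0 h hMw
    have h2 : IsSmoothPt X (PMk w hw0) := by
      by_contra h3
      exact h1 ⟨hwX, fun h4 => h3 h4.2⟩
    rw [smooth_iff hdim'] at h2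
    obtain ⟨a, ha, har⟩ := rep_PMk w hw0
    rwa [har, affTangent_smul X ha] at h2

/-- The data on the affine cone over `Y` used in the main argument. -/
structure Dat {N : ℕ} (m β : ℕ) (Y : Set (PrV (N+2))) (Q : Fin (N+2) → ℂ) (M : (Fin (N+2) → ℂ) →ₗ[ℂ] (Fin β → ℂ)) : Prop where
  cl : IsClosed Y
  irr : IsIrreducible Y
  nd : ∀ φ : (Fin (N+2) → ℂ) →ₗ[ℂ] ℂ, (∀ v ∈ coneOf Y, φ v = 0) → φ = 0
  var : IsVar (coneOf Y) (m + 1)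
  Q0 : Q ≠ 0
  inj : ∀ v ∈ coneOf Y, ∀ c : ℂ, v - c • Q ∈ coneOf Y → c = 0
  tan : ∀ x ∈ coneOf Y, x ≠ 0 → M x = 0 → Q ∉ affTangent Y x
  rank : ∀ x ∈ coneOf Y, x ≠ 0 → M x = 0 → Module.finrank ℂ (affTangent Y x) ≤ m + 1
  num1 : 2 * N + β ≤ 3 * m + 1
  num2 : N + β ≤ 2 * m

theorem final_of (hcore : ∀ (N m β : ℕ) (Y : Set (PrV (N+2))) (Q : Fin (N+2) → ℂ) (M : (Fin (N+2) → ℂ) →ₗ[ℂ] (Fin β → ℂ)), ¬ Dat m β Y Q M)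
    (N m b : ℕ) (X : Set (Pr N)) (hcl : IsClosed X) (hirr : IsIrreducible X)
    (hdim : pdim X = ((m : ℕ∞) : WithBot ℕ∞)) (hb_smooth : IsSmoothSet X → b = 0)
    (hb_sing : ¬ IsSmoothSet X → pdim (singLocus X) = ((b : ℕ∞) : WithBot ℕ∞)) (hbig : 2 * N + b < 3 * m + 1) :
    LinearlyNormal X := by
  rintro ⟨Y, hYc, hYi, hYn, L, hLs, hL1, hL2, hL3⟩
  obtain ⟨β, n1, n2, M, hM⟩ := setupM hcl hirr hdim hb_smooth hb_sing hbig
  have hdim' : pdim X = (m : WithBot ℕ∞) := hdim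
  have S : Stp X Y L := mk_Stp hcl hirr.1 hYc hYi.1 L hL1 hL2 hL3
  have hDX : DG (idealOf X) (m + 1) := coneDG hirr (coneOf_isVar hcl hirr hdim'.ge)
  have hDY := S.DG hYi hDX
  have hsm : ∀ x ∈ coneOf Y, x ≠ 0 → M (L x) = 0 → Module.finrank ℂ (affTangent X (L x)) = m + 1 :=
    fun x hx hx0 hMx => hM _ (S.map x hx) (fun h => hx0 (S.ker x hx h)) hMx
  obtain ⟨Q, hQ, hQ0⟩ : ∃ Q, L Q = 0 ∧ Q ≠ 0 := by
    have : LinearMap.ker L ≠ ⊥ := by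
      intro h
      rw [LinearMap.ker_eq_bot] at h
      have := LinearMap.finrank_le_finrank_of_injective h
      simp at this
    obtain ⟨Q, hQ, hQ0⟩ := Submodule.exists_mem_ne_zero_of_ne_bot this
    exact ⟨Q, hQ, hQ0⟩
  refine hcore N m β Y Q (M.comp L) ⟨hYc, hYi, ?_, ⟨_, idealOf_prime hYi, rfl, hDY⟩, hQ0, ?_, ?_, ?_, n1, n2⟩
  · intro φ hφ
    by_contra hφ0
    exact hYn _ ⟨φ, hφ0, rfl⟩ fun x hx => hφ _ (rep_mem_coneOf hYc hx)
  · intro v hv c hvc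
    have := S.inj _ hvc v hv (by rw [map_sub, map_smul, hQ, smul_zero, sub_zero])
    rw [sub_eq_self] at this
    exact (smul_eq_zero.1 this).resolve_right hQ0
  · intro x hx hx0 hMx hQT
    exact hQ0 (LemN S hcl hirr hYi hdim' hx (hsm x hx hx0 hMx) hQ hQT)
  · intro x hx hx0 hMx
    exact LemN_rank S hcl hirr hYi hdim' hx (hsm x hx hx0 hMx)

lemma eval_bind1 {σ τ : Type} (s : τ → Rg σ) (F : Rg τ) (v : σ → ℂ) :
    eval v (bind₁ s F) = eval (fun j => eval v (s j)) F := by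
  have : (aeval v : Rg σ →ₐ[ℂ] ℂ).comp (bind₁ s) = aeval (fun j => eval v (s j)) := by
    ext i; simp [aeval_eq_eval]
  exact congrArg (fun φ => φ F) this

lemma img_prime {σ τ : Type} [Finite σ] {W : Set (σ → ℂ)} {e : ℕ} (h : IsVar W e) (s : τ → Rg σ) :
    ∃ P : Ideal (Rg τ), P.IsPrime ∧ ∀ F, F ∈ P ↔ ∀ w ∈ W, eval (fun j => eval w (s j)) F = 0 := by
  obtain ⟨P, hP, rfl, -⟩ := h
  refine ⟨P.comap (bind₁ s), hP.comap _, fun F => ?_⟩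
  rw [Ideal.mem_comap, prime_mem_iff hP]
  simp only [eval_bind1]

lemma isVar_univ {σ : Type} [Fintype σ] : IsVar (univ : Set (σ → ℂ)) (Fintype.card σ) := by
  refine ⟨⊥, Ideal.isPrime_bot, ?_, ?_⟩
  · ext v; simp [mem_zl]
  · rw [DG_iff, ringKrullDim_eq_of_ringEquiv (RingEquiv.quotientBot (Rg σ))]
    rw [MvPolynomial.ringKrullDim_of_isNoetherianRing]
    simp [ringKrullDim_eq_zero_of_field]

def pt4 {n : ℕ} (x y p : Fin n → ℂ) (c : ℂ) : ((Fin n ⊕ Fin n) ⊕ Fin n) ⊕ Unit → ℂ :=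
  Sum.elim (Sum.elim (Sum.elim x y) p) (fun _ => c)

lemma pt4_surj {n : ℕ} (w : ((Fin n ⊕ Fin n) ⊕ Fin n) ⊕ Unit → ℂ) : ∃ x y p c, w = pt4 x y p c := by
  refine ⟨fun i => w (.inl (.inl (.inl i))), fun i => w (.inl (.inl (.inr i))), fun i => w (.inl (.inr i)),
    w (.inr ()), ?_⟩
  funext i
  rcases i with ((i | i) | i) | i <;> rfl

/-- the deformation map -/
def sD (n : ℕ) : ((Fin n ⊕ Fin n) ⊕ Fin n) ⊕ Unit → Rg ((Fin n ⊕ Fin n) ⊕ Unit) :=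
  Sum.elim (Sum.elim (Sum.elim (fun i => X (.inr ()) * X (.inl (.inl i))) (fun i => X (.inr ()) * X (.inl (.inr i))))
    (fun i => X (.inl (.inl i)) - X (.inl (.inr i)))) (fun _ => X (.inr ()))

lemma eval_sD {n : ℕ} (x y : Fin n → ℂ) (c : ℂ) :
    (fun j => eval (Sum.elim (Sum.elim x y) (fun _ => c)) (sD n j)) = pt4 (c • x) (c • y) (x - y) c := by
  funext i
  rcases i with ((i | i) | i) | i <;> simp [sD, pt4]

lemma DEF {n k : ℕ} {A : Set (Fin n → ℂ)} (hA : IsVar A k) (hc : IsCone A) :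
    ∃ P : Ideal (Rg (((Fin n ⊕ Fin n) ⊕ Fin n) ⊕ Unit)), P.IsPrime ∧
      (∀ F, F ∈ P ↔ ∀ x ∈ A, ∀ y ∈ A, ∀ c, eval (pt4 (c • x) (c • y) (x - y) c) F = 0) ∧
      IsVar (zeroLocus ℂ P) (2 * k + 1) := by
  classical
  have hu := isVar_univ (σ := Unit)
  have h0 : (0 : Fin n → ℂ) ∈ A := by
    obtain ⟨w, hw⟩ := hA.nonempty
    simpa using hc w hw 0
  obtain ⟨P, hP, hPm⟩ := img_prime (prodVar (prodVar hA hA) hu) (sD n)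
  have hPm' : ∀ F, F ∈ P ↔ ∀ x ∈ A, ∀ y ∈ A, ∀ c, eval (pt4 (c • x) (c • y) (x - y) c) F = 0 := by
    intro F
    rw [hPm]
    constructor
    · intro h x hx y hy c
      have := h (Sum.elim (Sum.elim x y) (fun _ => c)) (elim_mem_prod.2 ⟨elim_mem_prod.2 ⟨hx, hy⟩, trivial⟩)
      rwa [eval_sD] at this
    · intro h w hw
      obtain ⟨⟨hx, hy⟩, -⟩ := hw
      have := h _ hx _ hy (w (.inr ()))
      rw [← eval_sD] at this
      have e : w = (Sum.elim (Sum.elim (fun i => w (.inl (.inl i))) (fun i => w (.inl (.inr i)))) (fun _ => w (.inr ()))) := by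
        funext i
        rcases i with (i | i) | i <;> rfl
      rw [e]; exact this
  refine ⟨P, hP, hPm', ?_⟩
  have hbig := prodVar (prodVar (prodVar hA hA) (isVar_univ (σ := Fin n))) hu
  have hbig' : IsVar (prodSet (prodSet (prodSet A A) (univ : Set (Fin n → ℂ))) (univ : Set (Unit → ℂ)))
      ((2 * k + 1) + n) := by
    convert hbig using 1; simp; ring
  have hmem : pt4 (0 : Fin n → ℂ) 0 0 1 ∈ (prodSet (prodSet (prodSet A A) (univ : Set (Fin n → ℂ))) (univ : Set (Unit → ℂ))) :=
    elim_mem_prod.2 ⟨elim_mem_prod.2 ⟨elim_mem_prod.2 ⟨h0, h0⟩, trivial⟩, trivial⟩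
  obtain ⟨W, hWs, hW, hwW, hWe⟩ := hbig'.cut hmem (ι := Fin n) (by simp)
    (fun i => X (.inl (.inl (.inl i))) - X (.inl (.inl (.inr i))) - X (.inr ()) * X (.inl (.inr i)))
    (by intro i; simp [pt4])
  refine IsVar.mono (isVar_zero_of_prime hP) hW ?_
  intro w hw F hF
  have key := hW.irr (f := X (.inr ())) (g := F) ?_
  · rcases key with h | h
    · have := h _ hwW
      simp [pt4] at this
    · exact h w hw
  · intro v hv
    have hvA := hWs hv
    have hve := hWe v hv
    obtain ⟨x, y, p, c, rfl⟩ := pt4_surj v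
    obtain ⟨⟨⟨hx, hy⟩, -⟩, -⟩ := hvA
    by_cases hcz : c = 0
    · simp [pt4, hcz]
    · have := (hPm' F).1 hF (c⁻¹ • x) (hc x hx _) (c⁻¹ • y) (hc y hy _) c
      have e : c⁻¹ • x - c⁻¹ • y = p := by
        funext i
        have := hve i
        simp [pt4] at this
        simp
        field_simp
        linear_combination this
      rw [smul_inv_smul₀ hcz, smul_inv_smul₀ hcz, e] at this
      rw [this, mul_zero]

lemma caseA {N m β : ℕ} {Y : Set (PrV (N + 2))} {Q : Fin (N + 2) → ℂ}
    {M : (Fin (N + 2) → ℂ) →ₗ[ℂ] (Fin β → ℂ)} (h : Dat m β Y Q M)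
    (hS : ∀ f : Rg (Fin (N + 2)), (∀ x ∈ coneOf Y, ∀ y ∈ coneOf Y, eval (x + y) f = 0) → f = 0) : False := by
  classical
  have hcone := coneOf_isCone h.irr.1
  have hneg : ∀ y ∈ coneOf Y, -y ∈ coneOf Y := by
    intro y hy
    simpa using hcone y hy (-1)
  obtain ⟨P, hP, hPm, hZ⟩ := DEF h.var hcone
  have hz0 : pt4 0 0 Q 0 ∈ zeroLocus ℂ P := by
    intro F hF
    let F' : Rg (Fin (N + 2)) := bind₁ (Sum.elim (Sum.elim (Sum.elim (fun _ => 0) (fun _ => 0)) X) (fun _ => 0)) F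
    have hF' : ∀ p, eval p F' = eval (pt4 0 0 p 0) F := by
      intro p
      rw [eval_bind1]
      congr 1
      congr 1
      funext i
      rcases i with ((i | i) | i) | i <;> simp [pt4]
    have : F' = 0 := by
      apply hS
      intro x hx y hy
      have := (hPm F).1 hF x hx (-y) (hneg y hy) 0
      rw [hF']
      simpa using this
    show eval _ F = 0
    rw [← hF', this, map_zero]
  have hZ1 : IsVar (zeroLocus ℂ P) (1 + (N + 2 + β)) := hZ.le (by have := h.num2; omega)
  obtain ⟨Z', hZ's, hZ', hwZ', hZe⟩ := hZ1.cut hz0 (ι := Fin (N + 2) ⊕ Fin β) (by simp)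
    (Sum.elim (fun i => X (.inl (.inr i)) - C (Q i))
      (fun j => rename (fun i => .inl (.inl (.inl i))) (linP ((LinearMap.proj j).comp M))))
    (by
      rintro (i | j)
      · simp [pt4]
      · simp only [Sum.elim_inr, eval_rename, eval_linP]
        have : (pt4 0 0 Q 0 ∘ fun i : Fin (N+2) => Sum.inl (Sum.inl (Sum.inl i))) = 0 := rfl
        rw [this]; simp)
  obtain ⟨w, hw, hne⟩ := IsVar.exists_ne (e := 0) hZ' (pt4 0 0 Q 0)
  have hwZ := hZ's hw
  have hwe := hZe w hw
  obtain ⟨x, y, p, c, rfl⟩ := pt4_surj w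
  have hp : p = Q := by
    funext i
    have := hwe (.inl i)
    simp [pt4] at this
    linear_combination this
  subst hp
  have hMx : M x = 0 := by
    funext j
    have := hwe (.inr j)
    simp only [Sum.elim_inr, eval_rename, eval_linP] at this
    exact this
  have hx : x ∈ coneOf Y := by
    intro g hg
    have : rename (fun i => .inl (.inl (.inl i))) g ∈ P := by
      rw [hPm]
      intro x hx y hy c
      rw [eval_rename]
      exact hcone x hx c g hg
    have := hwZ _ this
    change eval _ _ = 0 at this
    rw [eval_rename] at this
    exact this
  have hy : y ∈ coneOf Y := by
    intro g hg
    have : rename (fun i => .inl (.inl (.inr i))) g ∈ P := by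
      rw [hPm]
      intro x hx y hy c
      rw [eval_rename]
      exact hcone y hy c g hg
    have := hwZ _ this
    change eval _ _ = 0 at this
    rw [eval_rename] at this
    exact this
  have hxy : x - c • p = y := by
    funext i
    have : (X (.inl (.inl (.inl i))) - X (.inl (.inl (.inr i))) - X (.inr ()) * X (.inl (.inr i))
      : Rg (((Fin (N+2) ⊕ Fin (N+2)) ⊕ Fin (N+2)) ⊕ Unit)) ∈ P := by
      rw [hPm]
      intro x hx y hy c
      simp [pt4]; ring
    have := hwZ _ this
    change eval _ _ = 0 at this
    simp [pt4] at this
    simp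
    linear_combination this
  have hc0 : c = 0 := h.inj x hx c (hxy ▸ hy)
  subst hc0
  have hyx : y = x := by rw [← hxy]; simp
  subst hyx
  have hx0 : y ≠ 0 := by
    rintro rfl
    exact hne rfl
  apply h.tan y hx hx0 hMx
  rw [mem_affTangent]
  intro g hg
  obtain ⟨G, hG1, hG2⟩ := taylor g
  let G' : Rg (((Fin (N+2) ⊕ Fin (N+2)) ⊕ Fin (N+2)) ⊕ Unit) :=
    bind₁ (Sum.elim (Sum.elim (fun i => X (.inl (.inl (.inl i)))) (fun i => - X (.inl (.inr i)))) (fun _ => X (.inr ()))) G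
  have hG' : ∀ x y p c, eval (pt4 x y p c) G' = eval (Sum.elim (Sum.elim x (-p)) (fun _ => c)) G := by
    intro x y p c
    rw [eval_bind1]
    congr 1
    congr 1
    funext i
    rcases i with (i | i) | i <;> simp [pt4]
  have hprod : X (.inr ()) * G' ∈ P := by
    rw [hPm]
    intro x hx y hy c
    rw [map_mul, hG']
    have := hG1 (c • x) (-(x - y)) c
    have e : c • x + c • (-(x - y)) = c • y := by
      funext i; simp; ring
    rw [e] at this
    have h1 : eval (c • x) g = 0 := hcone x hx c g hg
    have h2 : eval (c • y) g = 0 := hcone y hy c g hg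
    rw [h1, h2] at this
    simp [pt4]
    simpa using this.symm
  have hG'P : G' ∈ P := by
    refine (hP.mem_or_mem hprod).resolve_left fun hX => ?_
    rw [hPm] at hX
    have := hX y hx y hx 1
    simp [pt4] at this
  have := hwZ _ hG'P
  change eval _ _ = 0 at this
  rw [hG', hG2] at this
  simpa using this

lemma hmg_smul {n : ℕ} {f : Rg (Fin n)} {d : ℕ} (h : f.IsHomogeneous d) (c : ℂ) (v : Fin n → ℂ) :
    eval (c • v) f = c ^ d * eval v f := by
  have := eval_smul_hc f d c v
  rwa [homogeneousComponent_of_mem ((mem_homogeneousSubmodule d f).2 h), if_pos rfl] at this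

lemma jac_curve {n r : ℕ} {g : Rg (Fin n)} {f : Rg (Fin r)} {v p : Fin n → ℂ} {v' p' : Fin r → ℂ}
    (h : ∀ s : ℂ, eval (v + s • p) g = eval (v' + s • p') f) : jacLin g v p = jacLin f v' p' := by
  obtain ⟨G, hG1, hG2⟩ := taylor g
  obtain ⟨F, hF1, hF2⟩ := taylor f
  let G' : Rg Unit := fixL (Sum.elim v p) G
  let F' : Rg Unit := fixL (Sum.elim v' p') F
  have h0 : eval v g = eval v' f := by simpa using h 0
  have key := (isVar_univ (σ := Unit)).irr (f := X ()) (g := G' - F') (by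
    intro w _
    have e : w = fun _ => w () := by funext i; rfl
    have h1 := h (w ())
    rw [hG1, hF1, h0] at h1
    rw [map_sub, eval_X, e, eval_fixL, eval_fixL]
    linear_combination h1)
  rcases key with k | k
  · have := k (fun _ => 1) trivial
    simp at this
  · have := k (fun _ => 0) trivial
    rw [map_sub, eval_fixL, eval_fixL, hG2, hF2] at this
    exact sub_eq_zero.1 this

lemma jac_zero {n : ℕ} {g : Rg (Fin n)} {v p : Fin n → ℂ}
    (h : ∀ s : ℂ, eval (v + s • p) g = 0) : jacLin g v p = 0 := by
  have := jac_curve (g := g) (f := (0 : Rg (Fin n))) (v := v) (p := p) (v' := v) (p' := p) (by simpa using h)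
  rw [this]; simp [jacLin]

lemma splitting {N : ℕ} (h : (Fin (N + 2) → ℂ) →ₗ[ℂ] ℂ) {z q : Fin (N + 2) → ℂ} (hz : h z = 0) (hq : h q ≠ 0)
    (hz0 : z ≠ 0) : ∃ (U : (Fin (N + 2) → ℂ) →ₗ[ℂ] (Fin N → ℂ)) (α γ : (Fin (N + 2) → ℂ) →ₗ[ℂ] ℂ),
      U z = 0 ∧ α z = 1 ∧ γ z = 0 ∧ ∀ v, U v = 0 → v = α v • z + γ v • q := by
  obtain ⟨α0, hα0⟩ : ∃ α0 : (Fin (N + 2) → ℂ) →ₗ[ℂ] ℂ, α0 z = 1 := by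
    obtain ⟨i, hi⟩ := Function.ne_iff.1 hz0
    exact ⟨(z i)⁻¹ • LinearMap.proj i, by simp; exact inv_mul_cancel₀ hi⟩
  let γ : (Fin (N + 2) → ℂ) →ₗ[ℂ] ℂ := (h q)⁻¹ • h
  let α : (Fin (N + 2) → ℂ) →ₗ[ℂ] ℂ := α0 - α0 q • γ
  have hγz : γ z = 0 := by simp [γ, hz]
  have hγq : γ q = 1 := by simp [γ, hq]
  have hαz : α z = 1 := by simp [α, hα0, hγz]
  have hαq : α q = 0 := by simp [α, hγq]
  let Φ : (Fin (N + 2) → ℂ) →ₗ[ℂ] ℂ × ℂ := α.prod γ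
  have hsurj : Function.Surjective Φ := by
    rintro ⟨a, b⟩
    exact ⟨a • z + b • q, by simp [Φ, hγz, hγq, hαz, hαq]⟩
  have hfr : Module.finrank ℂ (LinearMap.ker Φ) = N := by
    have := Φ.finrank_range_add_finrank_ker
    rw [LinearMap.range_eq_top.2 hsurj] at this
    simp at this
    omega
  let E : LinearMap.ker Φ ≃ₗ[ℂ] (Fin N → ℂ) := LinearEquiv.ofFinrankEq _ _ (by simp [hfr])
  let R : (Fin (N + 2) → ℂ) →ₗ[ℂ] (Fin (N + 2) → ℂ) :=
    LinearMap.id - α.smulRight z - γ.smulRight q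
  have hR : ∀ v, R v = v - α v • z - γ v • q := fun v => by simp [R]
  let R' : (Fin (N + 2) → ℂ) →ₗ[ℂ] LinearMap.ker Φ := R.codRestrict _ (by
    intro v
    rw [hR]
    simp [Φ, hγz, hγq, hαz, hαq])
  have hR' : ∀ v, E (R' v) = 0 ↔ R v = 0 := by
    intro v
    rw [LinearEquiv.map_eq_zero_iff]
    constructor
    · intro h; simpa [R'] using congrArg Subtype.val h
    · intro h; ext1; simpa [R'] using h
  refine ⟨E.toLinearMap.comp R', α, γ, ?_, hαz, hγz, ?_⟩
  · apply (hR' z).2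
    rw [hR]; simp [hαz, hγz]
  · intro v hv
    have := (hR' v).1 hv
    rw [hR] at this
    rw [sub_sub, sub_eq_zero] at this
    exact this

lemma straight {n : ℕ} {σ : Type} [Fintype σ] {W : Set (σ → ℂ)} {e : ℕ} (hW : IsVar W e)
    (l : (σ → ℂ) →ₗ[ℂ] (Fin n → ℂ)) {f : Rg (Fin n)} {z q : Fin n → ℂ} (α γ : (Fin n → ℂ) →ₗ[ℂ] ℂ)
    (hf : ∀ a : ℂ, eval (a • z) f = 0) (hq : jacLin f z q ≠ 0) (hα : α z = 1) (hγ : γ z = 0)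
    (hv : ∀ w ∈ W, l w = α (l w) • z + γ (l w) • q) (hfW : ∀ w ∈ W, eval (l w) f = 0)
    {w0 : σ → ℂ} (hw0 : w0 ∈ W) (hl0 : l w0 = z) : ∀ w ∈ W, l w = α (l w) • z := by
  classical
  obtain ⟨G, hG1, hG2⟩ := taylor f
  let G' : Rg σ := bind₁ (Sum.elim (Sum.elim (fun i => linP (α.comp l) * C (z i)) (fun i => C (q i)))
    (fun _ => linP (γ.comp l))) G
  have hG' : ∀ w, eval w G' = eval (Sum.elim (Sum.elim (α (l w) • z) q) (fun _ => γ (l w))) G := by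
    intro w
    rw [eval_bind1]
    congr 1
    congr 1
    funext i
    rcases i with (i | i) | i <;> simp [eval_linP]
  rcases hW.irr (f := linP (γ.comp l)) (g := G') (by
    intro w hw
    have h1 := hG1 (α (l w) • z) q (γ (l w))
    rw [← hv w hw, hfW w hw, hf, zero_add] at h1
    rw [hG', eval_linP]
    exact h1.symm) with h | h
  · intro w hw
    have h1 := h w hw
    rw [eval_linP] at h1
    have h2 := hv w hw
    have h3 : γ (l w) = 0 := h1
    rw [h3, zero_smul, add_zero] at h2
    exact h2
  · exfalso
    have := h w0 hw0
    rw [hG', hl0, hα, hγ, one_smul, hG2] at this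
    exact hq this

lemma tangency {n : ℕ} {σ : Type} [Fintype σ] {W : Set (σ → ℂ)} {e : ℕ} (hW : IsVar W e)
    {Y : Set (PrV n)} (lx ly : (σ → ℂ) →ₗ[ℂ] (Fin n → ℂ)) (α : (σ → ℂ) →ₗ[ℂ] ℂ) {p : Fin n → ℂ}
    (hx : ∀ w ∈ W, lx w ∈ coneOf Y) (hy : ∀ w ∈ W, ly w ∈ coneOf Y)
    (he : ∀ w ∈ W, lx w - ly w = α w • p) {w0 : σ → ℂ} (hw0 : w0 ∈ W) (h0 : α w0 ≠ 0)
    {w : σ → ℂ} (hw : w ∈ W) (hαw : α w = 0) : p ∈ affTangent Y (ly w) := by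
  classical
  rw [mem_affTangent]
  intro g hg
  obtain ⟨G, hG1, hG2⟩ := taylor g
  let G' : Rg σ := bind₁ (Sum.elim (Sum.elim (fun i => linP ((LinearMap.proj i).comp ly)) (fun i => C (p i)))
    (fun _ => linP α)) G
  have hG' : ∀ w, eval w G' = eval (Sum.elim (Sum.elim (ly w) p) (fun _ => α w)) G := by
    intro w
    rw [eval_bind1]
    congr 1
    congr 1
    funext i
    rcases i with (i | i) | i <;> simp [eval_linP]
  rcases hW.irr (f := linP α) (g := G') (by
    intro w hw
    have h1 := hG1 (ly w) p (α w)
    have h2 : ly w + α w • p = lx w := by rw [← he w hw]; abel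
    have h3 : eval (lx w) g = 0 := hx w hw g hg
    have h4 : eval (ly w) g = 0 := hy w hw g hg
    rw [h2, h3, h4, zero_add] at h1
    rw [hG', eval_linP]
    exact h1.symm) with h | h
  · exfalso
    have := h w0 hw0
    rw [eval_linP] at this
    exact h0 this
  · have := h w hw
    rwa [hG', hαw, hG2] at this

lemma tangent_sum {n : ℕ} {Y : Set (PrV n)} {f : Rg (Fin n)}
    (hf : ∀ x ∈ coneOf Y, ∀ y ∈ coneOf Y, eval (x + y) f = 0) {x y : Fin n → ℂ}
    (hy : y ∈ coneOf Y) {p : Fin n → ℂ} (hp : p ∈ affTangent Y x) : jacLin f (x + y) p = 0 := by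
  rw [mem_affTangent] at hp
  let g : Rg (Fin n) := bind₁ (fun i => X i + C (y i)) f
  have hg : ∀ v, eval v g = eval (v + y) f := by
    intro v
    rw [eval_bind1]
    congr 1
    congr 1
    funext i
    simp
  have hgI : g ∈ idealOf Y := by
    rw [mem_idealOf_cone]
    intro v hv
    rw [hg]; exact hf v hv y hy
  rw [← hp g hgI]
  refine (jac_curve fun s => ?_).symm
  rw [hg]
  congr 2
  abel

lemma minimal_f {n : ℕ} {A : Set (Fin n → ℂ)} (hA : IsCone A) (hne : A.Nonempty) {f0 : Rg (Fin n)} (hf0 : f0 ≠ 0)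
    (hv : ∀ x ∈ A, ∀ y ∈ A, eval (x + y) f0 = 0) :
    ∃ (f : Rg (Fin n)) (d : ℕ) (i : Fin n), f.IsHomogeneous d ∧ (∀ x ∈ A, ∀ y ∈ A, eval (x + y) f = 0) ∧
      ∃ x ∈ A, ∃ y ∈ A, eval (x + y) (pderiv i f) ≠ 0 := by
  classical
  have hex : ∃ d : ℕ, ∃ f : Rg (Fin n), f ≠ 0 ∧ f.IsHomogeneous d ∧ ∀ x ∈ A, ∀ y ∈ A, eval (x + y) f = 0 := by
    have : ∃ d, homogeneousComponent d f0 ≠ 0 := by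
      by_contra! hall
      apply hf0
      rw [← sum_homogeneousComponent f0]
      exact Finset.sum_eq_zero fun i _ => hall i
    obtain ⟨d, hd⟩ := this
    refine ⟨d, _, hd, homogeneousComponent_isHomogeneous d f0, fun x hx y hy => ?_⟩
    apply hc_zero_of
    intro c _
    rw [smul_add]
    exact hv _ (hA x hx c) _ (hA y hy c)
  obtain ⟨f, hf0, hfd, hfv⟩ := Nat.find_spec hex
  have hmin := fun m => Nat.find_min hex (m := m)
  set d := Nat.find hex
  have hd0 : d ≠ 0 := by
    intro hd
    rw [hd] at hfd
    obtain ⟨w, hw⟩ := hne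
    have h0 : (0 : Fin n → ℂ) ∈ A := by simpa using hA w hw 0
    have hC := totalDegree_eq_zero_iff_eq_C.1 (by simpa using hfd.totalDegree hf0)
    have := hfv 0 h0 0 h0
    rw [hC] at this
    simp at this
    rw [this] at hC
    simp at hC
    exact hf0 hC
  have : ∃ i, pderiv i f ≠ 0 := by
    by_contra! hall
    have := hfd.sum_X_mul_pderiv
    simp only [hall, mul_zero, Finset.sum_const_zero] at this
    rw [eq_comm, nsmul_eq_mul, mul_eq_zero] at this
    rcases this with h | h
    · exact hd0 (by exact_mod_cast h)
    · exact hf0 h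
  obtain ⟨i, hi⟩ := this
  refine ⟨f, d, i, hfd, hfv, ?_⟩
  by_contra! hall
  exact hmin (d - 1) (by omega) ⟨_, hi, hfd.pderiv, hall⟩

lemma jac_single {n : ℕ} (f : Rg (Fin n)) (v : Fin n → ℂ) (i : Fin n) :
    jacLin f v (Pi.single i 1) = eval v (pderiv i f) := by
  classical
  rw [jacLin_apply]
  simp [Pi.single_apply]

lemma pick_z {N m β : ℕ} {Y : Set (PrV (N + 2))} {Q : Fin (N + 2) → ℂ}
    {M : (Fin (N + 2) → ℂ) →ₗ[ℂ] (Fin β → ℂ)} (h : Dat m β Y Q M) {D : Rg (Fin (N + 2))}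
    (hD : ∃ x ∈ coneOf Y, ∃ y ∈ coneOf Y, eval (x + y) D ≠ 0) :
    ∃ x ∈ coneOf Y, ∃ y ∈ coneOf Y, eval (x + y) D ≠ 0 ∧ x + y ∉ coneOf Y := by
  classical
  have hcone := coneOf_isCone h.irr.1
  have hz : (0 : Fin (N + 2) → ℂ) ∈ coneOf Y := by
    obtain ⟨w, hw⟩ := h.var.nonempty
    simpa using hcone w hw 0
  have h1 : ∃ x ∈ coneOf Y, ∃ y ∈ coneOf Y, x + y ∉ coneOf Y := by
    by_contra! hall
    let S : Submodule ℂ (Fin (N + 2) → ℂ) :=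
      { carrier := coneOf Y
        add_mem' := fun {a b} ha hb => hall a ha b hb
        zero_mem' := hz
        smul_mem' := fun c x hx => hcone x hx c }
    have hS : S = ⊤ := by
      by_contra hne
      obtain ⟨φ, hφ, hle⟩ := S.exists_le_ker_of_lt_top (lt_top_iff_ne_top.2 hne)
      exact hφ (h.nd φ fun v hv => hle (show v ∈ S from hv))
    have : (0 : Fin (N + 2) → ℂ) - (1 : ℂ) • Q ∈ S := by rw [hS]; trivial
    exact one_ne_zero (h.inj 0 hz 1 this)
  obtain ⟨x1, hx1, y1, hy1, hn⟩ := h1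
  obtain ⟨g, hg, hgn⟩ : ∃ g ∈ idealOf Y, eval (x1 + y1) g ≠ 0 := by
    by_contra! hall
    exact hn fun g hg => hall g hg
  obtain ⟨P, hP, hPm⟩ := img_prime (prodVar h.var h.var)
    (fun i : Fin (N + 2) => (X (.inl i) + X (.inr i) : Rg (Fin (N + 2) ⊕ Fin (N + 2))))
  have hPm' : ∀ F, F ∈ P ↔ ∀ x ∈ coneOf Y, ∀ y ∈ coneOf Y, eval (x + y) F = 0 := by
    intro F
    rw [hPm]
    constructor
    · intro hh x hx y hy
      have := hh (Sum.elim x y) (elim_mem_prod.2 ⟨hx, hy⟩)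
      convert this using 3
      funext i; simp
    · intro hh w hw
      have := hh _ hw.1 _ hw.2
      convert this using 3
      funext i; simp
  by_contra! hall
  have : D * g ∈ P := by
    rw [hPm']
    intro x hx y hy
    rw [map_mul]
    by_cases hDz : eval (x + y) D = 0
    · rw [hDz, zero_mul]
    · have h2 : eval (x + y) g = 0 := hall x hx y hy hDz g hg
      rw [h2, mul_zero]
  rcases hP.mem_or_mem this with hh | hh
  · obtain ⟨x, hx, y, hy, hne⟩ := hD
    exact hne ((hPm' _).1 hh x hx y hy)
  · exact hgn ((hPm' _).1 hh x1 hx1 y1 hy1)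

lemma caseB {N m β : ℕ} {Y : Set (PrV (N + 2))} {Q : Fin (N + 2) → ℂ}
    {M : (Fin (N + 2) → ℂ) →ₗ[ℂ] (Fin β → ℂ)} (h : Dat m β Y Q M)
    {f0 : Rg (Fin (N + 2))} (hf0 : f0 ≠ 0)
    (hv0 : ∀ x ∈ coneOf Y, ∀ y ∈ coneOf Y, eval (x + y) f0 = 0) : False := by
  classical
  have hcone := coneOf_isCone h.irr.1
  have hneg : ∀ y ∈ coneOf Y, -y ∈ coneOf Y := by
    intro y hy
    simpa using hcone y hy (-1)
  obtain ⟨f, d, i, hfd, hf, hex⟩ := minimal_f hcone h.var.nonempty hf0 hv0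
  obtain ⟨x0, hx0, y0, hy0, hDz, hzY⟩ := pick_z h hex
  set z := x0 + y0 with hzdef
  have hz0 : z ≠ 0 := by
    intro hz
    apply hzY
    rw [hz]
    simpa using hcone x0 hx0 0
  let q : Fin (N + 2) → ℂ := Pi.single i 1
  set η := jacLin f z with hη
  have hηq : η q ≠ 0 := by rw [hη, jac_single]; exact hDz
  have hηx0 : η x0 = 0 := by
    apply jac_zero
    intro s
    have e : z + s • x0 = (1 + s) • x0 + y0 := by rw [hzdef, add_smul, one_smul]; abel
    rw [e]
    exact hf _ (hcone x0 hx0 _) _ hy0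
  have hfz : ∀ a : ℂ, eval (a • z) f = 0 := by
    intro a
    rw [hzdef, smul_add]
    exact hf _ (hcone x0 hx0 _) _ (hcone y0 hy0 _)
  have hηz : η z = 0 := by
    apply jac_zero
    intro s
    have e : z + s • z = (1 + s) • z := by rw [add_smul, one_smul]
    rw [e, hfz]
  -- choice of the third point
  obtain ⟨y1, hy1, hηy1, hDp⟩ : ∃ y1 ∈ coneOf Y, η y1 ≠ 0 ∧ eval (x0 - y1) (pderiv i f) ≠ 0 := by
    by_contra! hall
    have hev : ∀ v, eval v (bind₁ (fun j => C (x0 j) - X j) (pderiv i f) : Rg (Fin (N + 2)))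
        = eval (x0 - v) (pderiv i f) := by
      intro v
      rw [eval_bind1]
      congr 1
      congr 1
      funext j; simp
    rcases h.var.irr (f := linP η) (g := bind₁ (fun j => C (x0 j) - X j) (pderiv i f)) (by
      intro w hw
      rw [hev, eval_linP]
      by_cases hw0 : η w = 0
      · rw [hw0, zero_mul]
      · rw [hall w hw hw0, mul_zero]) with hh | hh
    · have : η = 0 := h.nd η fun v hv => by
        have := hh v hv
        rwa [eval_linP] at this
      apply hηq
      rw [this]; rfl
    · have := hh (-y0) (hneg y0 hy0)
      rw [hev, sub_neg_eq_add] at this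
      exact hDz this
  set p := x0 - y1 with hpdef
  have hηp : η p ≠ 0 := by
    rw [hpdef, map_sub, hηx0, zero_sub]
    exact neg_ne_zero.2 hηy1
  have hp0 : p ≠ 0 := by
    intro hp
    rw [hp] at hηp
    exact hηp (map_zero _)
  have hfp : ∀ a : ℂ, eval (a • p) f = 0 := by
    intro a
    rw [hpdef, sub_eq_add_neg, smul_add]
    exact hf _ (hcone x0 hx0 _) _ (hcone _ (hneg y1 hy1) _)
  have hpq : jacLin f p q ≠ 0 := by rw [jac_single]; exact hDp
  have hpp : jacLin f p p = 0 := by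
    apply jac_zero
    intro s
    have e : p + s • p = (1 + s) • p := by rw [add_smul, one_smul]
    rw [e, hfp]
  obtain ⟨U1, α1, γ1, hU1, hα1, hγ1, hs1⟩ := splitting η hηz hηq hz0
  obtain ⟨U2, α2, γ2, hU2, hα2, hγ2, hs2⟩ := splitting (jacLin f p) hpp hpq hp0
  let σ : Type := (Fin (N + 2) ⊕ Fin (N + 2)) ⊕ Fin (N + 2)
  let lx : (σ → ℂ) →ₗ[ℂ] (Fin (N + 2) → ℂ) := LinearMap.funLeft ℂ ℂ (fun i => .inl (.inl i))
  let ly : (σ → ℂ) →ₗ[ℂ] (Fin (N + 2) → ℂ) := LinearMap.funLeft ℂ ℂ (fun i => .inl (.inr i))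
  let lt : (σ → ℂ) →ₗ[ℂ] (Fin (N + 2) → ℂ) := LinearMap.funLeft ℂ ℂ (fun i => .inr i)
  let w0 : σ → ℂ := Sum.elim (Sum.elim x0 y0) y1
  have hbig : IsVar (prodSet (prodSet (coneOf Y) (coneOf Y)) (coneOf Y)) ((β + 2) + (N + N)) :=
    (prodVar (prodVar h.var h.var) h.var).le (by have := h.num1; omega)
  let UU : (σ → ℂ) →ₗ[ℂ] (Fin N ⊕ Fin N → ℂ) := LinearMap.pi (Sum.elim
    (fun i => (LinearMap.proj i).comp (U1.comp (lx + ly))) (fun i => (LinearMap.proj i).comp (U2.comp (lx - lt))))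
  obtain ⟨W, hWs, hW, hWc, hw0, hWU⟩ := hbig.cutCone (prodCone (prodCone hcone hcone) hcone)
    (w := w0) (elim_mem_prod.2 ⟨elim_mem_prod.2 ⟨hx0, hy0⟩, hy1⟩) (ι := Fin N ⊕ Fin N) (by simp) UU (by
      funext j
      rcases j with j | j
      · exact congrFun hU1 j
      · exact congrFun hU2 j)
  have hxW : ∀ w ∈ W, lx w ∈ coneOf Y := fun w hw => (hWs hw).1.1
  have hyW : ∀ w ∈ W, ly w ∈ coneOf Y := fun w hw => (hWs hw).1.2
  have htW : ∀ w ∈ W, lt w ∈ coneOf Y := fun w hw => (hWs hw).2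
  have hL1 : ∀ w ∈ W, (lx + ly) w = α1 ((lx + ly) w) • z := by
    refine straight hW (lx + ly) (f := f) (q := q) α1 γ1 hfz hηq hα1 hγ1 (fun w hw => hs1 _ ?_)
      (fun w hw => hf _ (hxW w hw) _ (hyW w hw)) hw0 rfl
    funext j
    exact congrFun (hWU w hw) (.inl j)
  have hL2 : ∀ w ∈ W, (lx - lt) w = α2 ((lx - lt) w) • p := by
    refine straight hW (lx - lt) (f := f) (q := q) α2 γ2 hfp hpq hα2 hγ2 (fun w hw => hs2 _ ?_)
      (fun w hw => ?_) hw0 rfl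
    · funext j
      exact congrFun (hWU w hw) (.inr j)
    · rw [LinearMap.sub_apply, sub_eq_add_neg]
      exact hf _ (hxW w hw) _ (hneg _ (htW w hw))
  -- special point
  let VV : (σ → ℂ) →ₗ[ℂ] (Fin β ⊕ Unit → ℂ) := LinearMap.pi (Sum.elim
    (fun i => (LinearMap.proj i).comp (M.comp lx)) (fun _ => α2.comp (lx - lt)))
  obtain ⟨w, hw, hwne, hwV⟩ := hW.cone_meet hWc (ι := Fin β ⊕ Unit) (by simp) VV
  have hMx : M (lx w) = 0 := by
    funext j
    exact congrFun hwV (.inl j)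
  have hαw : α2 ((lx - lt) w) = 0 := congrFun hwV (.inr ())
  have hxt : lx w = lt w := by
    have := hL2 w hw
    rw [hαw, zero_smul] at this
    exact sub_eq_zero.1 this
  have hxne : lx w ≠ 0 := by
    intro hx
    have hy := hL1 w hw
    rw [LinearMap.add_apply, hx, zero_add] at hy
    have ha : α1 (ly w) ≠ 0 := by
      intro ha
      rw [ha, zero_smul] at hy
      apply hwne
      funext j
      rcases j with (j | j) | j
      · exact congrFun hx j
      · exact congrFun hy j
      · exact congrFun (hxt.symm.trans hx) j
    apply hzY
    have := hcone _ (hyW w hw) (α1 (ly w))⁻¹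
    have e : (α1 (ly w))⁻¹ • ly w = z := by
      conv_lhs => rw [hy]
      have : α1 (α1 (ly w) • z) = α1 (ly w) := by rw [← hy]
      rw [this, inv_smul_smul₀ ha]
    rwa [e] at this
  have hrk := h.rank _ (hxW w hw) hxne hMx
  have hpT : p ∈ affTangent Y (lx w) := by
    rw [hxt]
    refine tangency hW lx lt (α2.comp (lx - lt)) hxW htW hL2 hw0 ?_ hw hαw
    show α2 p ≠ 0
    rw [hα2]; exact one_ne_zero
  have hlt : Module.finrank ℂ (affTangent Y (lx w) ⊓ LinearMap.ker η : Submodule ℂ (Fin (N + 2) → ℂ)) ≤ m := by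
    have : affTangent Y (lx w) ⊓ LinearMap.ker η < affTangent Y (lx w) := by
      refine lt_of_le_of_ne inf_le_left fun he => hηp ?_
      have : p ∈ affTangent Y (lx w) ⊓ LinearMap.ker η := by rw [he]; exact hpT
      exact this.2
    have := Submodule.finrank_lt_finrank_of_lt this
    omega
  obtain ⟨D, hD1, hD2⟩ := SEMI
    ({F | ∃ g ∈ idealOf Y, F = fun i => pderiv i g} ∪ {fun i => C (η (Pi.single i 1))}) (lx w) m
    (fun v => affTangent Y v ⊓ LinearMap.ker η) (by
      intro v p
      have hc : cov (fun i => C (η (Pi.single i 1))) v p = η p := by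
        rw [cov_apply]
        conv_rhs => rw [← eval_linP]
        simp [linP]
      constructor
      · rintro ⟨h1, h2⟩ F (⟨g, hg, rfl⟩ | rfl)
        · exact mem_affTangent.1 h1 g hg
        · rw [hc]; exact h2
      · intro hh
        refine ⟨mem_affTangent.2 fun g hg => hh _ (Or.inl ⟨g, hg, rfl⟩), ?_⟩
        have := hh _ (Or.inr rfl)
        rw [hc] at this
        exact this) hlt
  obtain ⟨w', hw', hα', hD'⟩ : ∃ w' ∈ W, α1 ((lx + ly) w') ≠ 0 ∧ eval (lx w') D ≠ 0 := by
    by_contra! hall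
    have hev : ∀ v : σ → ℂ, eval v (rename (fun i => .inl (.inl i)) D : Rg σ) = eval (lx v) D := by
      intro v
      rw [eval_rename]; rfl
    rcases hW.irr (f := linP (α1.comp (lx + ly))) (g := rename (fun i => .inl (.inl i)) D) (by
      intro v hv
      rw [hev, eval_linP]
      by_cases hv0 : α1 ((lx + ly) v) = 0
      · rw [LinearMap.comp_apply, hv0, zero_mul]
      · rw [hall v hv hv0, mul_zero]) with hh | hh
    · have := hh w0 hw0
      rw [eval_linP] at this
      have h2 : α1 z = 0 := this
      rw [hα1] at h2
      exact one_ne_zero h2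
    · have := hh w hw
      rw [hev] at this
      exact hD1 this
  have hfin := hD2 _ hD'
  have hsub : affTangent Y (lx w') ≤ LinearMap.ker η := by
    intro t ht
    have h1 := tangent_sum hf (hyW w' hw') ht
    have h2 : lx w' + ly w' = α1 ((lx + ly) w') • z := hL1 w' hw'
    set a := α1 ((lx + ly) w')
    rw [h2] at h1
    have h3 : jacLin f (a • z) (a • t) = jacLin (C (a ^ d) * f) z t := by
      apply jac_curve
      intro s
      rw [smul_comm s a t, ← smul_add, hmg_smul hfd]
      simp
    rw [map_smul, h1, smul_zero, jacLin_mul, jacLin_C] at h3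
    simp at h3
    rcases h3 with h3 | h3
    · exact absurd h3.1 hα'
    · exact h3
  have h4 := L4 h.irr (coneDG h.irr h.var) (hxW w' hw')
  have h5 : affTangent Y (lx w') ⊓ LinearMap.ker η = affTangent Y (lx w') := inf_eq_left.2 hsub
  rw [h5] at hfin
  omega

lemma hcore_all : ∀ N m β Y Q M, ¬ Dat (N := N) m β Y Q M := by
  intro N m β Y Q M h
  by_cases hS : ∀ f : Rg (Fin (N + 2)), (∀ x ∈ coneOf Y, ∀ y ∈ coneOf Y, eval (x + y) f = 0) → f = 0
  · exact caseA h hS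
  · push Not at hS
    obtain ⟨f, hf, hf0⟩ := hS
    exact caseB h hf0 hf

/-- **Corollary 4 (Zak's linear normality theorem).**  Let `X ⊆ ℙ^N` be irreducible and
nondegenerate, and set `b = 0` if `X` is smooth, `b = dim Sing(X)` otherwise.  If
`dim X > (1/3)(2N + b - 1)` (equivalently `3 dim X + 1 > 2N + b`), then `X` is linearly
normal: it is not the image of a bijective projection of a nondegenerate subvariety of
`ℙ^{N+1}`. -/
theorem zak_linear_normality
    (N m b : ℕ) (X : Set (Pr N))
    (hcl : IsClosed X) (hirr : IsIrreducible X) (hnd : NondegenerateSet X)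
    (hdim : pdim X = ((m : ℕ∞) : WithBot ℕ∞))
    (hb_smooth : IsSmoothSet X → b = 0)
    (hb_sing : ¬ IsSmoothSet X → pdim (singLocus X) = ((b : ℕ∞) : WithBot ℕ∞))
    (hbig : 2 * N + b < 3 * m + 1) :
    LinearlyNormal X := by
  exact final_of hcore_all N m b X hcl hirr hdim hb_smooth hb_sing hbig

end
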